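/- arXiv:1904.01232 — 2 statements merged into one kernel-verified Lean document; each statement's English description precedes it below -/
import Mathlib

section
/- Let k be any field and n ≥ 2. The Brauer algebra Br(A_{n−1}, k(δ), δ) over the rational function field k(δ) is Morita equivalent to the direct sum of group algebras ⊕_{i=0}^{⌊n/2⌋} k(δ)[S_{n−2i}], where S_m denotes the symmetric group on m letters (with S_0 the trivial group). -/
open FreeAlgebra

/-- Two rings are Morita equivalent if their categories of left modules are equivalent. -/
def MoritaEquivalent (A : Type u) (B : Type u) [Ring A] [Ring B] : Prop :=
  Nonempty (ModuleCat.{u} A ≌ ModuleCat.{u} B)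
/-- The path graph (Coxeter diagram of type `A_n`) on nodes `1, …, n`
(realized as `Fin n`, node `i` corresponding to index `i-1`): node `i` is
adjacent to node `i+1` for `1 ≤ i ≤ n-1`. -/
def typeA (n : ℕ) : SimpleGraph (Fin n) :=
  SimpleGraph.fromRel (fun i j => (i : ℕ) + 1 = (j : ℕ))

/-- The Coxeter diagram of type `D_n` (`n ≥ 4`) on nodes `1, …, n` (realized as
`Fin n`, node `i` corresponding to index `i-1`): nodes `1` and `2` are both
adjacent to node `3`, and nodes `i`, `i+1` are adjacent for `3 ≤ i ≤ n-1`. -/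
def typeD (n : ℕ) : SimpleGraph (Fin n) :=
  SimpleGraph.fromRel (fun i j =>
    ((i : ℕ) = 0 ∧ (j : ℕ) = 2) ∨ ((i : ℕ) = 1 ∧ (j : ℕ) = 2) ∨
      (2 ≤ (i : ℕ) ∧ (i : ℕ) + 1 = (j : ℕ)))

/-- The Coxeter diagram of type `E_n` (`n = 6, 7, 8`) on nodes `1, …, n`
(realized as `Fin n`, node `i` corresponding to index `i-1`): a path on nodes
`1, 3, 4, …, n` together with node `2` attached to node `4`. -/
def typeE (n : ℕ) : SimpleGraph (Fin n) :=
  SimpleGraph.fromRel (fun i j =>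
    ((i : ℕ) = 0 ∧ (j : ℕ) = 2) ∨ ((i : ℕ) = 1 ∧ (j : ℕ) = 3) ∨
      (2 ≤ (i : ℕ) ∧ (i : ℕ) + 1 = (j : ℕ)))
/-- The defining relations of the Brauer algebra `Br(Q, R, δ)` of simply-laced
type given by the graph `Q`, imposed on the free `R`-algebra on the generators
`R_1, …, R_n` (encoded as `Sum.inl i`) and `E_1, …, E_n` (encoded as `Sum.inr i`). -/
inductive BrauerRel (n : ℕ) (Q : SimpleGraph (Fin n)) (R : Type*) [CommRing R] (δ : R) :
    FreeAlgebra R (Fin n ⊕ Fin n) → FreeAlgebra R (Fin n ⊕ Fin n) → Prop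
  /-- `R_i² = 1` -/
  | rsq (i : Fin n) : BrauerRel n Q R δ (ι R (.inl i) * ι R (.inl i)) 1
  /-- `R_i E_i = E_i` -/
  | re (i : Fin n) : BrauerRel n Q R δ (ι R (.inl i) * ι R (.inr i)) (ι R (.inr i))
  /-- `E_i R_i = E_i` -/
  | er (i : Fin n) : BrauerRel n Q R δ (ι R (.inr i) * ι R (.inl i)) (ι R (.inr i))
  /-- `E_i² = δ·E_i` -/
  | esq (i : Fin n) : BrauerRel n Q R δ (ι R (.inr i) * ι R (.inr i)) (δ • ι R (.inr i))
  /-- `R_i R_j = R_j R_i` whenever `i ≁ j` -/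
  | rr (i j : Fin n) (hne : i ≠ j) (hadj : ¬ Q.Adj i j) :
      BrauerRel n Q R δ (ι R (.inl i) * ι R (.inl j)) (ι R (.inl j) * ι R (.inl i))
  /-- `E_i R_j = R_j E_i` whenever `i ≁ j` -/
  | erc (i j : Fin n) (hne : i ≠ j) (hadj : ¬ Q.Adj i j) :
      BrauerRel n Q R δ (ι R (.inr i) * ι R (.inl j)) (ι R (.inl j) * ι R (.inr i))
  /-- `E_i E_j = E_j E_i` whenever `i ≁ j` -/
  | ee (i j : Fin n) (hne : i ≠ j) (hadj : ¬ Q.Adj i j) :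
      BrauerRel n Q R δ (ι R (.inr i) * ι R (.inr j)) (ι R (.inr j) * ι R (.inr i))
  /-- `R_i R_j R_i = R_j R_i R_j` whenever `i ∼ j` -/
  | braid (i j : Fin n) (hadj : Q.Adj i j) :
      BrauerRel n Q R δ (ι R (.inl i) * ι R (.inl j) * ι R (.inl i))
        (ι R (.inl j) * ι R (.inl i) * ι R (.inl j))
  /-- `R_j R_i E_j = E_i E_j` whenever `i ∼ j` -/
  | rre (i j : Fin n) (hadj : Q.Adj i j) :
      BrauerRel n Q R δ (ι R (.inl j) * ι R (.inl i) * ι R (.inr j))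
        (ι R (.inr i) * ι R (.inr j))
  /-- `R_i E_j R_i = R_j E_i R_j` whenever `i ∼ j` -/
  | rer (i j : Fin n) (hadj : Q.Adj i j) :
      BrauerRel n Q R δ (ι R (.inl i) * ι R (.inr j) * ι R (.inl i))
        (ι R (.inl j) * ι R (.inr i) * ι R (.inl j))

/-- The Brauer algebra `Br(Q, R, δ)` of simply-laced type `Q` over the
commutative ring `R` with parameter `δ ∈ R`. -/
abbrev BrauerAlgebra (n : ℕ) (Q : SimpleGraph (Fin n)) (R : Type*) [CommRing R] (δ : R) :=
  RingQuot (BrauerRel n Q R δ)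

/-! ### Part 1: Morita equivalence from a full corner -/

section Corner

open CategoryTheory

universe u

/-- `C` is (via `j`) the corner `e A e` of `A` at the full idempotent `e = j 1`. -/
structure FullCorner (A C : Type u) [Ring A] [Ring C] where
  j : C →+ A
  j_mul : ∀ x y, j (x * y) = j x * j y
  j_inj : Function.Injective j
  j_surj : ∀ a, j 1 * a * j 1 = a → ∃ c, j c = a
  κ : Type
  fin : Fintype κ
  a : κ → A
  b : κ → A
  sum_eq : (Finset.univ.sum fun k => a k * j 1 * b k) = 1

namespace FullCorner

variable {A C : Type u} [Ring A] [Ring C] (D : FullCorner A C)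

instance : Fintype D.κ := D.fin

/-- the idempotent -/
def e : A := D.j 1

lemma e_mul_j (c : C) : D.e * D.j c = D.j c := by rw [e, ← D.j_mul, one_mul]
lemma j_mul_e (c : C) : D.j c * D.e = D.j c := by rw [e, ← D.j_mul, mul_one]
lemma e_mul_e : D.e * D.e = D.e := D.e_mul_j 1
lemma sum_eq' : (Finset.univ.sum fun k => D.a k * D.e * D.b k) = 1 := D.sum_eq

lemma exists_jinv (x : A) : ∃ c, D.j c = D.e * x * D.e := D.j_surj (D.e * x * D.e) (by
  have h := D.e_mul_e
  change D.e * (D.e * x * D.e) * D.e = _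
  simp only [mul_assoc, h]
  simp only [← mul_assoc, h])

/-- inverse of `j` -/
noncomputable def jinv (x : A) : C := (D.exists_jinv x).choose

lemma j_jinv (x : A) : D.j (D.jinv x) = D.e * x * D.e := (D.exists_jinv x).choose_spec

/-- the fixed part `e M` -/
def fixed (M : Type u) [AddCommGroup M] [Module A M] : AddSubgroup M where
  carrier := {m | D.e • m = m}
  zero_mem' := by simp
  add_mem' := by intro a b ha hb; simp only [Set.mem_ofPred_eq] at *; rw [smul_add, ha, hb]
  neg_mem' := by intro a ha; simp only [Set.mem_ofPred_eq] at *; rw [smul_neg, ha]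

variable {M : Type u} [AddCommGroup M] [Module A M]

lemma mem_fixed {m : M} : m ∈ D.fixed M ↔ D.e • m = m := Iff.rfl

lemma smul_mem_fixed (x : A) (m : M) : (D.e * x) • m ∈ D.fixed M := by
  rw [mem_fixed, smul_smul, ← mul_assoc, D.e_mul_e]

instance : Module C (D.fixed M) where
  smul c m := ⟨D.j c • (m : M), by rw [mem_fixed, smul_smul, D.e_mul_j]⟩
  one_smul m := Subtype.ext m.2
  mul_smul c d m := Subtype.ext (by
    change D.j (c * d) • (m : M) = D.j c • D.j d • (m : M)
    rw [D.j_mul, mul_smul])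
  smul_zero c := Subtype.ext (smul_zero (D.j c))
  smul_add c m n := Subtype.ext (smul_add (D.j c) (m : M) (n : M))
  add_smul c d m := Subtype.ext (by
    change D.j (c + d) • (m : M) = D.j c • (m : M) + D.j d • (m : M)
    rw [map_add, add_smul])
  zero_smul m := Subtype.ext (by
    change D.j 0 • (m : M) = 0
    rw [map_zero, zero_smul])

lemma coe_smul (c : C) (m : D.fixed M) : ((c • m : D.fixed M) : M) = D.j c • (m : M) := rfl

/-- functoriality of `fixed` -/
def fixedMap {M N : Type u} [AddCommGroup M] [Module A M] [AddCommGroup N] [Module A N]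
    (f : M →ₗ[A] N) : D.fixed M →ₗ[C] D.fixed N where
  toFun m := ⟨f m, by rw [mem_fixed, ← map_smul, m.2]⟩
  map_add' m n := Subtype.ext (by simp)
  map_smul' c m := Subtype.ext (by simp [coe_smul])

/-- the functor `M ↦ e M` -/
def functor : ModuleCat.{u} A ⥤ ModuleCat.{u} C where
  obj M := ModuleCat.of C (D.fixed M)
  map f := ModuleCat.ofHom (D.fixedMap f.hom)
  map_id _ := rfl
  map_comp _ _ := rfl

lemma expand (m : M) : (Finset.univ.sum fun k => D.a k • D.e • D.b k • m) = m := by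
  conv_rhs => rw [← one_smul A m, ← D.sum_eq', Finset.sum_smul]
  simp [mul_smul]

/-- extension of a map on fixed parts -/
def extend {M N : Type u} [AddCommGroup M] [Module A M] [AddCommGroup N] [Module A N]
    (f : D.fixed M →ₗ[C] D.fixed N) : M →ₗ[A] N where
  toFun m := Finset.univ.sum fun k => D.a k • (f ⟨(D.e * D.b k) • m, D.smul_mem_fixed _ _⟩ : N)
  map_add' m n := by
    rw [← Finset.sum_add_distrib]
    refine Finset.sum_congr rfl fun k _ => ?_
    rw [← smul_add, ← AddSubgroup.coe_add, ← map_add]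
    congr 3
    exact Subtype.ext (smul_add _ _ _)
  map_smul' x m := by
    simp only [RingHom.id_apply]
    have key : ∀ k, (f ⟨(D.e * D.b k) • x • m, D.smul_mem_fixed _ _⟩ : N) =
        Finset.univ.sum fun l => (D.e * D.b k * x * D.a l * D.e) •
          (f ⟨(D.e * D.b l) • m, D.smul_mem_fixed _ _⟩ : N) := by
      intro k
      have : (⟨(D.e * D.b k) • x • m, D.smul_mem_fixed _ _⟩ : D.fixed M) =
          Finset.univ.sum fun l => D.jinv (D.b k * x * D.a l) •
            (⟨(D.e * D.b l) • m, D.smul_mem_fixed _ _⟩ : D.fixed M) := by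
        apply Subtype.ext
        rw [AddSubgroup.val_finsetSum]
        simp only [coe_smul, j_jinv]
        conv_lhs => rw [← D.expand m]
        simp only [Finset.smul_sum, smul_smul]
        refine Finset.sum_congr rfl fun l _ => ?_
        congr 1
        simp only [mul_assoc]
        rw [← mul_assoc D.e D.e, D.e_mul_e]
      rw [this, map_sum, AddSubgroup.val_finsetSum]
      refine Finset.sum_congr rfl fun l _ => ?_
      rw [map_smul, coe_smul, j_jinv]
      simp only [mul_assoc]
    simp only [key]
    simp only [Finset.smul_sum, smul_smul]
    rw [Finset.sum_comm]
    refine Finset.sum_congr rfl fun l _ => ?_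
    rw [← Finset.sum_smul]
    have : (Finset.univ.sum fun k => D.a k * (D.e * D.b k * x * D.a l * D.e)) = x * D.a l * D.e := by
      have h2 := congrArg (fun t => t * (x * D.a l * D.e)) D.sum_eq'
      simp only [Finset.sum_mul, one_mul] at h2
      rw [← h2]
      exact Finset.sum_congr rfl fun k _ => by simp only [mul_assoc]
    rw [this, mul_smul]
    congr 1
    exact (f _).2

instance : D.functor.Faithful where
  map_injective {M N f g} h := by
    ext m
    have h' : ∀ m : D.fixed M, f.hom (m : M) = g.hom (m : M) := by
      intro m
      have := congrArg (fun t => ((t.hom m : D.fixed N) : N)) h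
      exact this
    rw [← D.expand m]
    simp only [map_sum, map_smul]
    refine Finset.sum_congr rfl fun k _ => ?_
    congr 1
    have := h' ⟨(D.e * D.b k) • m, D.smul_mem_fixed _ _⟩
    simpa [mul_smul] using this

lemma fixedMap_extend {M N : Type u} [AddCommGroup M] [Module A M] [AddCommGroup N] [Module A N]
    (f : D.fixed M →ₗ[C] D.fixed N) : D.fixedMap (D.extend f) = f := by
  ext m
  change (Finset.univ.sum fun k => D.a k •
    (f ⟨(D.e * D.b k) • (m : M), D.smul_mem_fixed _ _⟩ : N)) = _
  have key : ∀ k, (⟨(D.e * D.b k) • (m : M), D.smul_mem_fixed _ _⟩ : D.fixed M) =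
      D.jinv (D.b k) • m := by
    intro k
    apply Subtype.ext
    rw [coe_smul, j_jinv, mul_smul _ D.e]
    rw [show D.e • (m : M) = m from m.2]
  have h2 : ∀ k, (f ⟨(D.e * D.b k) • (m : M), D.smul_mem_fixed _ _⟩ : N) =
      (D.e * D.b k) • (f m : N) := by
    intro k
    rw [key k, map_smul, coe_smul, j_jinv, mul_smul _ D.e]
    congr 1
    exact (f m).2
  simp only [h2]
  have := D.expand (f m : N)
  simp only [smul_smul] at this ⊢
  simpa [mul_assoc] using this

instance : D.functor.Full where
  map_surjective f := ⟨ModuleCat.ofHom (D.extend f.hom), ModuleCat.hom_ext (D.fixedMap_extend f.hom)⟩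

/-- the coinduced module -/
def coind (N : Type u) [AddCommGroup N] [Module C N] : AddSubgroup (A →+ N) where
  carrier := {f | ∀ c x, f (D.j c * x) = c • f x}
  zero_mem' := by intro c x; simp
  add_mem' := by intro f g hf hg c x; simp [hf c x, hg c x]
  neg_mem' := by intro f hf c x; simp [hf c x]

variable (N : Type u) [AddCommGroup N] [Module C N]

instance : Module A (D.coind N) where
  smul a f := ⟨(f : A →+ N).comp (AddMonoidHom.mulRight a), by
    intro c x
    change (f : A →+ N) (D.j c * x * a) = c • (f : A →+ N) (x * a)
    rw [mul_assoc, f.2]⟩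
  one_smul f := Subtype.ext (AddMonoidHom.ext fun x => by
    change (f : A →+ N) (x * 1) = _
    rw [mul_one])
  mul_smul a b f := Subtype.ext (AddMonoidHom.ext fun x => by
    change (f : A →+ N) (x * (a * b)) = (f : A →+ N) (x * a * b)
    rw [mul_assoc])
  smul_zero a := rfl
  smul_add a f g := rfl
  add_smul a b f := Subtype.ext (AddMonoidHom.ext fun x => by
    change (f : A →+ N) (x * (a + b)) = (f : A →+ N) (x * a) + (f : A →+ N) (x * b)
    rw [mul_add, map_add])
  zero_smul f := Subtype.ext (AddMonoidHom.ext fun x => by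
    change (f : A →+ N) (x * 0) = 0
    rw [mul_zero, map_zero])

lemma coind_smul_apply (a : A) (f : D.coind N) (x : A) :
    ((a • f : D.coind N) : A →+ N) x = (f : A →+ N) (x * a) := rfl

lemma jinv_add (x y : A) : D.jinv (x + y) = D.jinv x + D.jinv y := by
  apply D.j_inj
  rw [map_add, j_jinv, j_jinv, j_jinv, mul_add, add_mul]

lemma jinv_j_mul (c : C) (x : A) : D.jinv (D.j c * x) = c * D.jinv x := by
  apply D.j_inj
  rw [D.j_mul, j_jinv, j_jinv, ← mul_assoc, D.e_mul_j, ← mul_assoc, ← mul_assoc, D.j_mul_e]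

lemma jinv_mul_e (x : A) : D.jinv (x * D.e) = D.jinv x := by
  apply D.j_inj
  rw [j_jinv, j_jinv, mul_assoc, mul_assoc, D.e_mul_e, mul_assoc]

lemma jinv_e : D.jinv D.e = 1 := by
  apply D.j_inj
  rw [j_jinv, D.e_mul_e, D.e_mul_e, e]

/-- `e • coind N ≃ N` -/
noncomputable def coindEquiv : D.fixed (D.coind N) ≃ₗ[C] N where
  toFun f := ((f : D.coind N) : A →+ N) D.e
  map_add' f g := rfl
  map_smul' c f := by
    rw [coe_smul, coind_smul_apply, D.e_mul_j, ← D.j_mul_e, (f : D.coind N).2]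
    rfl
  invFun n := ⟨⟨{ toFun := fun x => D.jinv x • n
                  map_zero' := by
                    have : D.jinv 0 = 0 := D.j_inj (by rw [j_jinv]; simp)
                    rw [this, zero_smul]
                  map_add' := fun x y => by rw [jinv_add, add_smul] }, fun c x => by
        change D.jinv (D.j c * x) • n = c • D.jinv x • n
        rw [jinv_j_mul, mul_smul]⟩, Subtype.ext (AddMonoidHom.ext fun x => by
        change D.jinv (x * D.e) • n = D.jinv x • n
        rw [jinv_mul_e])⟩
  left_inv f := by
    apply Subtype.ext
    apply Subtype.ext
    apply AddMonoidHom.ext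
    intro x
    change D.jinv x • ((f : D.coind N) : A →+ N) D.e = ((f : D.coind N) : A →+ N) x
    have h1 : ∀ x, ((f : D.coind N) : A →+ N) (x * D.e) = ((f : D.coind N) : A →+ N) x := by
      intro x
      rw [← coind_smul_apply]
      exact congrArg (fun t : D.coind N => (t : A →+ N) x) f.2
    have h2 : ∀ x, ((f : D.coind N) : A →+ N) (D.e * x) = ((f : D.coind N) : A →+ N) x := by
      intro x
      rw [e, (f : D.coind N).2, one_smul]
    rw [← (f : D.coind N).2, j_jinv, h1, h1, h2]
  right_inv n := by
    change D.jinv D.e • n = n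
    rw [jinv_e, one_smul]

instance : D.functor.EssSurj where
  mem_essImage N := ⟨ModuleCat.of A (D.coind N), ⟨(D.coindEquiv N).toModuleIso⟩⟩

/-- Morita equivalence of a full corner. -/
noncomputable def equivalence : ModuleCat.{u} A ≌ ModuleCat.{u} C :=
  haveI : D.functor.IsEquivalence := { }
  D.functor.asEquivalence

/-- Products of full corners. -/
noncomputable def pi {s : Type} [Fintype s] [DecidableEq s] {A C : s → Type u} [∀ i, Ring (A i)]
    [∀ i, Ring (C i)] (D : ∀ i, FullCorner (A i) (C i)) : FullCorner (∀ i, A i) (∀ i, C i) where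
  j := { toFun := fun c i => (D i).j (c i)
         map_zero' := by ext; simp
         map_add' := by intros; ext; simp }
  j_mul x y := by ext i; exact (D i).j_mul _ _
  j_inj x y h := by ext i; exact (D i).j_inj (congrFun h i)
  j_surj a h := by
    choose c hc using fun i => (D i).j_surj (a i) (congrFun h i)
    exact ⟨c, funext hc⟩
  κ := Σ i, (D i).κ
  fin := inferInstance
  a k := Pi.single k.1 ((D k.1).a k.2)
  b k := Pi.single k.1 ((D k.1).b k.2)
  sum_eq := by
    ext i
    rw [Finset.sum_apply, Fintype.sum_sigma, Finset.sum_eq_single i]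
    · simp only [Pi.mul_apply, Pi.single_eq_same]
      exact (D i).sum_eq
    · intro b _ hb
      refine Finset.sum_eq_zero fun k _ => ?_
      simp [Pi.single_eq_of_ne hb.symm]
    · simp

end FullCorner

end Corner

/-! ### Part 2: the Coxeter presentation of the symmetric group -/

section Coxeter

open Equiv

variable {U : Type*} [Group U]

/-- generators in the graph group -/
def coxT (r : ℕ → U) (i : ℕ) : Perm ℕ × U := (swap i (i + 1), r i)

/-- tail words -/
def coxC (r : ℕ → U) (k : ℕ) : ℕ → Perm ℕ × U
  | 0 => 1
  | d + 1 => coxC r k d * coxT r (k - d)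

/-- the parabolic subgroups of the graph group -/
def coxG (r : ℕ → U) (k : ℕ) : Subgroup (Perm ℕ × U) :=
  Subgroup.closure {w | ∃ i < k, w = coxT r i}

/-- the Coxeter relations -/
structure IsCox (r : ℕ → U) (k : ℕ) : Prop where
  sq : ∀ i < k, r i * r i = 1
  comm : ∀ i j, i + 2 ≤ j → j < k → r i * r j = r j * r i
  braid : ∀ i, i + 1 < k → r i * r (i + 1) * r i = r (i + 1) * r i * r (i + 1)

namespace IsCox

variable {r : ℕ → U} {k : ℕ}

lemma mono (h : IsCox r (k + 1)) : IsCox r k :=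
  ⟨fun i hi => h.sq i (by omega), fun i j hij hj => h.comm i j hij (by omega),
    fun i hi => h.braid i (by omega)⟩

lemma t_sq (h : IsCox r k) (i : ℕ) (hi : i < k) : coxT r i * coxT r i = 1 := by
  simp [coxT, h.sq i hi]

lemma t_comm (h : IsCox r k) (i j : ℕ) (hij : i + 2 ≤ j) (hj : j < k) :
    coxT r i * coxT r j = coxT r j * coxT r i := by
  simp only [coxT, Prod.mk_mul_mk, h.comm i j hij hj, Prod.mk.injEq, and_true]
  ext x
  simp only [Perm.mul_apply, swap_apply_def]
  grind

lemma t_braid (h : IsCox r k) (i : ℕ) (hi : i + 1 < k) :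
    coxT r i * coxT r (i + 1) * coxT r i = coxT r (i + 1) * coxT r i * coxT r (i + 1) := by
  simp only [coxT, Prod.mk_mul_mk, h.braid i hi, Prod.mk.injEq, and_true]
  ext x
  simp only [Perm.mul_apply, swap_apply_def]
  grind

lemma t_mem (i : ℕ) (hi : i < k) : coxT r i ∈ coxG r k :=
  Subgroup.subset_closure ⟨i, hi, rfl⟩

lemma c_comm (h : IsCox r (k + 1)) (i d : ℕ) (hd : d ≤ k + 1) (hi : i + d + 1 ≤ k) :
    coxC r k d * coxT r i = coxT r i * coxC r k d := by
  induction d with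
  | zero => simp [coxC]
  | succ d ih =>
    rw [coxC, mul_assoc, ← h.t_comm i (k - d) (by omega) (by omega), ← mul_assoc,
      ih (by omega) (by omega), mul_assoc]

lemma c_braid (h : IsCox r (k + 1)) (i d : ℕ) (hd : d ≤ k + 1) (hi : i + 1 ≤ k) (hid : k < i + d) :
    coxC r k d * coxT r (i + 1) = coxT r i * coxC r k d := by
  induction d with
  | zero => omega
  | succ d ih =>
    rcases Nat.lt_or_ge k (i + d) with h1 | h1
    · rw [coxC, mul_assoc, h.t_comm (k - d) (i + 1) (by omega) (by omega), ← mul_assoc,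
        ih (by omega) (by omega), mul_assoc]
    · obtain ⟨d, rfl⟩ : ∃ d', d = d' + 1 := ⟨d - 1, by omega⟩
      have e1 : k - (d + 1) = i := by omega
      have e2 : k - d = i + 1 := by omega
      rw [coxC, coxC, e1, e2]
      rw [mul_assoc, mul_assoc, ← mul_assoc (coxT r (i + 1)), ← h.t_braid i (by omega),
        ← mul_assoc, ← mul_assoc, h.c_comm i d (by omega) (by omega)]
      simp only [mul_assoc]

lemma exists_form (h : IsCox r (k + 1)) {w : Perm ℕ × U} (hw : w ∈ coxG r (k + 1)) :
    ∃ g ∈ coxG r k, ∃ d ≤ k + 1, w = g * coxC r k d := by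
  have step : ∀ x : Perm ℕ × U, ∀ i < k + 1,
      (∃ g ∈ coxG r k, ∃ d ≤ k + 1, x = g * coxC r k d) →
      ∃ g ∈ coxG r k, ∃ d ≤ k + 1, x * coxT r i = g * coxC r k d := by
    rintro x i hi ⟨g, hg, d, hd, rfl⟩
    rcases Nat.lt_trichotomy (i + d) k with h1 | h1 | h1
    · exact ⟨g * coxT r i, mul_mem hg (t_mem i (by omega)), d, hd, by
        rw [mul_assoc, h.c_comm i d hd (by omega), mul_assoc]⟩
    · exact ⟨g, hg, d + 1, by omega, by
        rw [coxC, mul_assoc, show k - d = i by omega]⟩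
    · rcases Nat.eq_or_lt_of_le h1 with h2 | h2
      · obtain ⟨d, rfl⟩ : ∃ d', d = d' + 1 := ⟨d - 1, by omega⟩
        refine ⟨g, hg, d, by omega, ?_⟩
        rw [coxC, show k - d = i by omega, mul_assoc, mul_assoc, h.t_sq i hi, mul_one]
      · obtain ⟨i, rfl⟩ : ∃ i', i = i' + 1 := ⟨i - 1, by omega⟩
        exact ⟨g * coxT r i, mul_mem hg (t_mem i (by omega)), d, hd, by
          rw [mul_assoc, h.c_braid i d hd (by omega) (by omega), mul_assoc]⟩
  induction hw using Subgroup.closure_induction_right with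
  | one => exact ⟨1, one_mem _, 0, by omega, by simp [coxC]⟩
  | mul_right x hx y hy ih =>
    obtain ⟨i, hi, rfl⟩ := hy
    exact step x i hi ih
  | mul_inv_cancel x hx y hy ih =>
    obtain ⟨i, hi, rfl⟩ := hy
    have : (coxT r i)⁻¹ = coxT r i := inv_eq_of_mul_eq_one_left (h.t_sq i hi)
    rw [this]
    exact step x i hi ih

lemma fix (w : Perm ℕ × U) (hw : w ∈ coxG r k) (x : ℕ) (hx : k < x) : w.1 x = x := by
  induction hw using Subgroup.closure_induction with
  | mem y hy =>
    obtain ⟨i, hi, rfl⟩ := hy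
    exact swap_apply_of_ne_of_ne (by omega) (by omega)
  | one => rfl
  | mul a b _ _ ha hb => rw [Prod.fst_mul, Perm.mul_apply, hb, ha]
  | inv a _ ha => rw [Prod.fst_inv, Perm.inv_eq_iff_eq, ha]

lemma c_apply (d : ℕ) (hd : d ≤ k + 1) : (coxC r k d).1 (k + 1 - d) = k + 1 := by
  induction d with
  | zero => rfl
  | succ d ih =>
    rw [coxC, Prod.fst_mul, Perm.mul_apply]
    have : (coxT r (k - d)).1 (k + 1 - (d + 1)) = k + 1 - d := by
      rw [show k + 1 - (d + 1) = k - d by omega, show k + 1 - d = k - d + 1 by omega]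
      exact swap_apply_left _ _
    rw [this, ih (by omega)]

lemma eq_one (h : IsCox r k) (w : Perm ℕ × U) (hw : w ∈ coxG r k) (h1 : w.1 = 1) : w = 1 := by
  induction k with
  | zero =>
    have : ({w | ∃ i < 0, w = coxT r i} : Set (Perm ℕ × U)) = ∅ := by
      ext; simp
    rw [coxG, this, Subgroup.closure_empty] at hw
    simpa using hw
  | succ k ih =>
    obtain ⟨g, hg, d, hd, rfl⟩ := h.exists_form hw
    rcases Nat.eq_zero_or_pos d with rfl | hd0
    · simp only [coxC, mul_one] at *
      exact ih h.mono hg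
    · exfalso
      have h2 := congrArg (fun s : Perm ℕ => s (k + 1 - d)) h1
      simp only [Prod.fst_mul, Perm.mul_apply, c_apply d hd, Perm.one_apply, fix g hg (k+1) (by omega)] at h2
      omega

end IsCox

/-- The universal property of the symmetric group with Coxeter generators. -/
theorem exists_perm_hom {n : ℕ} {M : Type*} [Monoid M] (r : Fin (n + 1) → M)
    (hsq : ∀ i, r i * r i = 1)
    (hcomm : ∀ i j : Fin (n + 1), (i : ℕ) + 2 ≤ j → r i * r j = r j * r i)
    (hbraid : ∀ i j : Fin (n + 1), (i : ℕ) + 1 = j → r i * r j * r i = r j * r i * r j) :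
    ∃ f : Perm (Fin (n + 2)) →* M, ∀ i : Fin (n + 1), f (swap i.castSucc i.succ) = r i := by
  classical
  let u : ℕ → Mˣ := fun i => if h : i < n + 1 then ⟨r ⟨i, h⟩, r ⟨i, h⟩, hsq _, hsq _⟩ else 1
  have hu : ∀ i (h : i < n + 1), (u i : M) = r ⟨i, h⟩ := by
    intro i h
    simp only [u, dif_pos h]
  have hc : IsCox u (n + 1) := by
    constructor
    · intro i hi
      apply Units.ext
      simp [hu i hi, hsq]
    · intro i j hij hj
      apply Units.ext
      simp only [Units.val_mul, hu i (by omega), hu j hj]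
      exact hcomm _ _ hij
    · intro i hi
      apply Units.ext
      simp only [Units.val_mul, hu i (by omega), hu (i + 1) hi]
      exact hbraid _ _ rfl
  let ext : Perm (Fin (n + 2)) →* Perm ℕ := Perm.extendDomainHom Fin.equivSubtype
  have hext : ∀ i : Fin (n + 1), ext (swap i.castSucc i.succ) = swap (i : ℕ) (i + 1) := by
    intro i
    apply Equiv.ext
    intro x
    change Perm.extendDomain _ _ _ = _
    by_cases hx : x < n + 2
    · rw [show x = (Fin.equivSubtype ⟨x, hx⟩ : {i // i < n + 2}) from rfl,
        Perm.extendDomain_apply_image]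
      simp only [swap_apply_def, Fin.ext_iff, Fin.equivSubtype_apply, Fin.val_castSucc,
        Fin.val_succ]
      split_ifs <;> simp
    · rw [Perm.extendDomain_apply_not_subtype (p := fun i => i < n + 2) _ _ hx, swap_apply_of_ne_of_ne] <;> omega
  have hinj : Function.Injective ext := Perm.extendDomainHom_injective _
  let Γ : Subgroup (Perm (Fin (n + 2)) × Mˣ) :=
    Subgroup.closure (Set.range fun i : Fin (n + 1) => (swap i.castSucc i.succ, u i))
  let pr : Γ →* Perm (Fin (n + 2)) := (MonoidHom.fst _ _).comp Γ.subtype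
  have hΓ : ∀ w ∈ Γ, (ext w.1, w.2) ∈ coxG u (n + 1) := by
    intro w hw
    have : Γ ≤ (coxG u (n + 1)).comap (MonoidHom.prodMap ext (MonoidHom.id _)) := by
      refine (Subgroup.closure_le _).2 ?_
      rintro _ ⟨i, rfl⟩
      change (ext (swap i.castSucc i.succ), u i) ∈ coxG u (n + 1)
      rw [hext]
      exact IsCox.t_mem _ i.2
    exact this hw
  have pinj : Function.Injective pr := by
    rw [injective_iff_map_eq_one]
    rintro ⟨w, hw⟩ h1
    have h1 : w.1 = 1 := h1
    have := hc.eq_one _ (hΓ w hw) (by simp [h1])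
    apply Subtype.ext
    refine Prod.ext h1 ?_
    exact (Prod.ext_iff.1 this).2
  have psurj : Function.Surjective pr := by
    rw [← MonoidHom.mrange_eq_top, eq_top_iff, ← Perm.mclosure_swap_castSucc_succ,
      Submonoid.closure_le]
    rintro _ ⟨i, rfl⟩
    exact ⟨⟨_, Subgroup.subset_closure ⟨i, rfl⟩⟩, rfl⟩
  let eq := MulEquiv.ofBijective pr ⟨pinj, psurj⟩
  refine ⟨(Units.coeHom M).comp (((MonoidHom.snd _ _).comp Γ.subtype).comp eq.symm.toMonoidHom), ?_⟩
  intro i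
  have : eq.symm (swap i.castSucc i.succ) = ⟨(swap i.castSucc i.succ, u i),
      Subgroup.subset_closure ⟨i, rfl⟩⟩ := by
    rw [MulEquiv.symm_apply_eq]; rfl
  change ((eq.symm (swap i.castSucc i.succ)).1.2 : M) = _
  rw [this]
  exact hu i i.2

end Coxeter

/-! ### Part 3: algebras with Brauer data -/

section BrDataSec

open Equiv

/-- The relations between permutations and the elements `E a b` in a Brauer algebra. -/
structure BrData {K : Type*} [Field K] (δ : K) (P : Type*) [DecidableEq P]
    (A : Type*) [Ring A] [Algebra K A] where
  r : Perm P →* A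
  E : P → P → A
  conj : ∀ g a b, a ≠ b → r g * E a b = E (g a) (g b) * r g
  swl : ∀ a b, a ≠ b → r (swap a b) * E a b = E a b
  swr : ∀ a b, a ≠ b → E a b * r (swap a b) = E a b
  sq : ∀ a b, a ≠ b → E a b * E a b = δ • E a b
  chain : ∀ a b c, a ≠ b → b ≠ c → a ≠ c → E a b * E b c = r (swap a c) * E b c
  comm : ∀ a b c d, a ≠ b → a ≠ c → a ≠ d → b ≠ c → b ≠ d → c ≠ d →
    E a b * E c d = E c d * E a b

/-- the points occurring in a list of pairs -/
def flatP {P : Type*} : List (P × P) → List P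
  | [] => []
  | (p :: l) => p.1 :: p.2 :: flatP l

lemma length_flatP {P : Type*} (l : List (P × P)) : (flatP l).length = 2 * l.length := by
  induction l with
  | nil => rfl
  | cons p l ih => simp [flatP, ih]; ring

lemma mem_flatP {P : Type*} {l : List (P × P)} {a : P} :
    a ∈ flatP l ↔ ∃ b, (a, b) ∈ l ∨ (b, a) ∈ l := by
  induction l with
  | nil => simp [flatP]
  | cons p l ih =>
    obtain ⟨x, y⟩ := p
    simp only [flatP, List.mem_cons, ih, Prod.mk.injEq]
    constructor
    · rintro (rfl | rfl | ⟨b, h | h⟩)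
      · exact ⟨y, by simp⟩
      · exact ⟨x, by simp⟩
      · exact ⟨b, by simp [h]⟩
      · exact ⟨b, by simp [h]⟩
    · rintro ⟨b, (h | h) | (h | h)⟩
      · simp [h.1]
      · exact Or.inr (Or.inr ⟨b, Or.inl h⟩)
      · simp [h.2]
      · exact Or.inr (Or.inr ⟨b, Or.inr h⟩)

lemma ne_of_mem_flatP {P : Type*} {l : List (P × P)} (hl : (flatP l).Nodup) {a b : P}
    (h : (a, b) ∈ l) : a ≠ b := by
  induction l with
  | nil => simp at h
  | cons p l ih =>
    simp only [flatP, List.nodup_cons, List.mem_cons, not_or] at hl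
    rcases List.mem_cons.1 h with rfl | h
    · exact hl.1.1
    · exact ih hl.2.2 h

lemma exists_perm_list {P : Type*} {l l' : List P} (h : l.Nodup) (h' : l'.Nodup)
    (hl : l.length = l'.length) : ∃ g : Perm P, l.map g = l' := by
  have := Equiv.Perm.isMultiplyPretransitive P l.length
  let f : Fin l.length ↪ P := ⟨l.get, List.nodup_iff_injective_get.1 h⟩
  let f' : Fin l.length ↪ P := ⟨fun i => l'.get (i.cast hl), fun i j hij => by
    have := List.nodup_iff_injective_get.1 h' hij
    simpa using this⟩
  obtain ⟨g, hg⟩ := MulAction.exists_smul_eq (Perm P) f f'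
  refine ⟨g, List.ext_getElem (by simpa using hl) ?_⟩
  intro i h1 h2
  have := congrArg (fun t : Fin l.length ↪ P => t ⟨i, by simpa using h1⟩) hg
  simpa [f, f'] using this

lemma exists_perm_pairs {P : Type*} {l l' : List (P × P)} (h : (flatP l).Nodup)
    (h' : (flatP l').Nodup) (hl : l.length = l'.length) :
    ∃ g : Perm P, l.map (fun p => (g p.1, g p.2)) = l' := by
  obtain ⟨g, hg⟩ := exists_perm_list h h' (by rw [length_flatP, length_flatP, hl])
  refine ⟨g, ?_⟩
  clear h h'
  induction l generalizing l' with
  | nil => cases l' with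
    | nil => rfl
    | cons p l' => simp at hl
  | cons p l ih => cases l' with
    | nil => simp at hl
    | cons p' l' =>
      simp only [flatP, List.map_cons, List.cons.injEq] at hg ⊢
      exact ⟨Prod.ext hg.1 hg.2.1, ih (by simpa using hl) hg.2.2⟩

namespace BrData

variable {K : Type*} [Field K] {δ : K} {P : Type*} [DecidableEq P]
    {A : Type*} [Ring A] [Algebra K A] (D : BrData δ P A)

lemma symm (a b : P) (h : a ≠ b) : D.E a b = D.E b a := by
  have h1 := D.conj (swap a b) a b h
  rw [D.swl a b h, swap_apply_left, swap_apply_right, swap_comm, D.swr b a h.symm] at h1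
  exact h1

lemma r_inv_mul (g : Perm P) : D.r g⁻¹ * D.r g = 1 := by rw [← map_mul]; simp
lemma r_mul_inv (g : Perm P) : D.r g * D.r g⁻¹ = 1 := by rw [← map_mul]; simp

lemma chain' (a b c : P) (h1 : a ≠ b) (h2 : b ≠ c) (h3 : a ≠ c) :
    D.E a b * D.E b c = D.E a b * D.r (swap a c) := by
  rw [D.chain a b c h1 h2 h3, D.conj _ _ _ h2, swap_apply_right,
    swap_apply_of_ne_of_ne h1.symm h2, D.symm b a h1.symm]

/-- pair swap -/
lemma pair (a c a' c' : P) (h1 : a ≠ c) (h2 : a ≠ a') (h3 : a ≠ c') (h4 : c ≠ a') (h5 : c ≠ c')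
    (h6 : a' ≠ c') : D.r (swap a a' * swap c c') * (D.E a c * D.E a' c') = D.E a c * D.E a' c' := by
  have e1 : D.r (swap c c') * D.E a c = D.E a c' * D.r (swap c c') := by
    rw [D.conj _ _ _ h1, swap_apply_left, swap_apply_of_ne_of_ne h1 h3]
  have e2 : D.r (swap c c') * D.E a' c' = D.E c a' * D.E a' c' := (D.chain c a' c' h4 h6 h5).symm
  have e3 : D.E a c' * D.E c a' = D.E c a' * D.E a c' :=
    D.comm a c' c a' h3 h1 h2 h5.symm h6.symm h4
  have e4 : D.E a c' * D.E a' c' = D.r (swap a a') * D.E a' c' := by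
    rw [D.symm a' c' h6]
    exact D.chain a c' a' h3 h6.symm h2
  have e5 : D.r (swap a a') * D.E c a' * D.r (swap a a') = D.E a c := by
    rw [D.conj _ _ _ h4, swap_apply_right, swap_apply_of_ne_of_ne h1.symm h4,
      mul_assoc (D.E c a), ← map_mul, swap_mul_self, map_one, mul_one, D.symm c a h1.symm]
  calc D.r (swap a a' * swap c c') * (D.E a c * D.E a' c')
      = D.r (swap a a') * ((D.r (swap c c') * D.E a c) * D.E a' c') := by
        rw [map_mul]; simp only [mul_assoc]
    _ = D.r (swap a a') * (D.E a c' * (D.r (swap c c') * D.E a' c')) := by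
        rw [e1]; simp only [mul_assoc]
    _ = D.r (swap a a') * ((D.E a c' * D.E c a') * D.E a' c') := by
        rw [e2]; simp only [mul_assoc]
    _ = D.r (swap a a') * (D.E c a' * (D.E a c' * D.E a' c')) := by
        rw [e3]; simp only [mul_assoc]
    _ = (D.r (swap a a') * D.E c a' * D.r (swap a a')) * D.E a' c' := by
        rw [e4]; simp only [mul_assoc]
    _ = _ := by rw [e5]

lemma pair' (a c a' c' : P) (h1 : a ≠ c) (h2 : a ≠ a') (h3 : a ≠ c') (h4 : c ≠ a') (h5 : c ≠ c')
    (h6 : a' ≠ c') : (D.E a c * D.E a' c') * D.r (swap a a' * swap c c') = D.E a c * D.E a' c' := by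
  conv_rhs => rw [← D.pair a c a' c' h1 h2 h3 h4 h5 h6]
  rw [← mul_assoc, D.conj _ _ _ h1, mul_assoc (D.E ((swap a a' * swap c c') a) _), D.conj _ _ _ h6,
    ← mul_assoc]
  congr 1
  simp only [Perm.mul_apply, swap_apply_left, swap_apply_right, swap_apply_of_ne_of_ne h1 h3,
    swap_apply_of_ne_of_ne h4.symm h6, swap_apply_of_ne_of_ne h3.symm h6.symm,
    swap_apply_of_ne_of_ne h1.symm h4]
  exact D.comm a c a' c' h1 h2 h3 h4 h5 h6

/-- product over a list of pairs -/
def prodE : List (P × P) → A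
  | [] => 1
  | (p :: l) => D.E p.1 p.2 * prodE l

lemma conj_prodE (g : Perm P) (l : List (P × P)) (hl : (flatP l).Nodup) :
    D.r g * D.prodE l = D.prodE (l.map fun p => (g p.1, g p.2)) * D.r g := by
  induction l with
  | nil => simp [prodE]
  | cons p l ih =>
    simp only [flatP, List.nodup_cons, List.mem_cons, not_or] at hl
    rw [prodE, ← mul_assoc, D.conj _ _ _ hl.1.1, mul_assoc, ih hl.2.2, List.map_cons, prodE,
      mul_assoc]

lemma E_mul_prodE (l : List (P × P)) (hl : (flatP l).Nodup) (a b : P) (hab : (a, b) ∈ l) :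
    D.E a b * D.prodE l = δ • D.prodE l := by
  induction l with
  | nil => simp at hab
  | cons p l ih =>
    simp only [flatP, List.nodup_cons, List.mem_cons, not_or] at hl
    rcases List.mem_cons.1 hab with rfl | h
    · rw [prodE, ← mul_assoc, D.sq a b hl.1.1, smul_mul_assoc]
    · have ha : a ∈ flatP l := mem_flatP.2 ⟨b, Or.inl h⟩
      have hb : b ∈ flatP l := mem_flatP.2 ⟨a, Or.inr h⟩
      have hab' : a ≠ b := ne_of_mem_flatP hl.2.2 h
      rw [prodE, ← mul_assoc, D.comm a b p.1 p.2 hab' (by grind) (by grind) (by grind) (by grind)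
        hl.1.1, mul_assoc, ih hl.2.2 h, mul_smul_comm]

lemma prodE_mul_E (l : List (P × P)) (hl : (flatP l).Nodup) (a b : P) (hab : (a, b) ∈ l) :
    D.prodE l * D.E a b = δ • D.prodE l := by
  induction l with
  | nil => simp at hab
  | cons p l ih =>
    simp only [flatP, List.nodup_cons, List.mem_cons, not_or] at hl
    have hcom : ∀ l : List (P × P), (flatP l).Nodup → a ≠ b → a ∉ flatP l → b ∉ flatP l →
        D.prodE l * D.E a b = D.E a b * D.prodE l := by
      intro l
      induction l with
      | nil => simp [prodE]
      | cons p l ih =>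
        intro hl h1 h2 h3
        simp only [flatP, List.nodup_cons, List.mem_cons, not_or] at hl h2 h3
        rw [prodE, mul_assoc, ih hl.2.2 h1 h2.2.2 h3.2.2, ← mul_assoc, ← mul_assoc,
          D.comm a b p.1 p.2 h1 h2.1 h2.2.1 h3.1 h3.2.1 hl.1.1]
    rcases List.mem_cons.1 hab with rfl | h
    · rw [prodE, mul_assoc, hcom l hl.2.2 hl.1.1 hl.1.2 hl.2.1, ← mul_assoc, D.sq a b hl.1.1,
        smul_mul_assoc]
    · rw [prodE, mul_assoc, ih hl.2.2 h, mul_smul_comm]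

lemma swap_mul (hδ : δ ≠ 0) {a b : P} (h : a ≠ b) {e : A} (he : D.E a b * e = δ • e) :
    D.r (swap a b) * e = e := by
  have h1 : δ • (D.r (swap a b) * e) = δ • e := by
    rw [← mul_smul_comm, ← he, ← mul_assoc, D.swl a b h]
  exact smul_right_injective A hδ h1

lemma mul_swap (hδ : δ ≠ 0) {a b : P} (h : a ≠ b) {e : A} (he : e * D.E a b = δ • e) :
    e * D.r (swap a b) = e := by
  have h1 : δ • (e * D.r (swap a b)) = δ • e := by
    rw [← smul_mul_assoc, ← he, mul_assoc, D.swr a b h]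
  exact smul_right_injective A hδ h1

lemma pair_mul (hδ : δ ≠ 0) {a c a' c' : P} (h1 : a ≠ c) (h2 : a ≠ a') (h3 : a ≠ c') (h4 : c ≠ a')
    (h5 : c ≠ c') (h6 : a' ≠ c') {e : A} (he : D.E a c * e = δ • e) (he' : D.E a' c' * e = δ • e) :
    D.r (swap a a' * swap c c') * e = e := by
  have h0 : (D.E a c * D.E a' c') * e = (δ * δ) • e := by
    rw [mul_assoc, he', mul_smul_comm, he, smul_smul]
  have h1 : (δ * δ) • (D.r (swap a a' * swap c c') * e) = (δ * δ) • e := by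
    rw [← mul_smul_comm, ← h0, ← mul_assoc, D.pair a c a' c' h1 h2 h3 h4 h5 h6]
  exact smul_right_injective A (mul_ne_zero hδ hδ) h1

lemma mul_pair (hδ : δ ≠ 0) {a c a' c' : P} (h1 : a ≠ c) (h2 : a ≠ a') (h3 : a ≠ c') (h4 : c ≠ a')
    (h5 : c ≠ c') (h6 : a' ≠ c') {e : A} (he : e * D.E a c = δ • e) (he' : e * D.E a' c' = δ • e) :
    e * D.r (swap a a' * swap c c') = e := by
  have h0 : e * (D.E a c * D.E a' c') = (δ * δ) • e := by
    rw [← mul_assoc, he, smul_mul_assoc, he', smul_smul]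
  have h1 : (δ * δ) • (e * D.r (swap a a' * swap c c')) = (δ * δ) • e := by
    rw [← smul_mul_assoc, ← h0, mul_assoc, D.pair' a c a' c' h1 h2 h3 h4 h5 h6]
  exact smul_right_injective A (mul_ne_zero hδ hδ) h1

lemma E_mul_of_arc (hδ : δ ≠ 0) {a b c : P} (hab : a ≠ b) (hac : a ≠ c) {e : A}
    (he : D.E a c * e = δ • e) : ∃ (s : K) (g : Perm P), D.E a b * e = s • (D.r g * e) := by
  by_cases hbc : b = c
  · subst hbc
    exact ⟨δ, 1, by rw [he, map_one, one_mul]⟩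
  · refine ⟨1, swap b c, ?_⟩
    apply smul_right_injective A hδ
    change δ • (D.E a b * e) = δ • _
    rw [← mul_smul_comm, ← he, ← mul_assoc, D.symm a b hab, D.chain b a c hab.symm hac hbc, one_smul,
      mul_assoc, he, mul_smul_comm]

lemma dichotomy (hδ : δ ≠ 0) (l : List (P × P)) (hl : (flatP l).Nodup) (a b : P) (hab : a ≠ b) :
    (a ∉ flatP l ∧ b ∉ flatP l) ∨
      ∃ (s : K) (g : Perm P), D.E a b * D.prodE l = s • (D.r g * D.prodE l) := by
  have key : ∀ a ∈ flatP l, ∃ c, a ≠ c ∧ D.E a c * D.prodE l = δ • D.prodE l := by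
    intro a ha
    obtain ⟨c, h | h⟩ := mem_flatP.1 ha
    · exact ⟨c, ne_of_mem_flatP hl h, D.E_mul_prodE l hl a c h⟩
    · refine ⟨c, (ne_of_mem_flatP hl h).symm, ?_⟩
      rw [D.symm _ _ (ne_of_mem_flatP hl h).symm]
      exact D.E_mul_prodE l hl c a h
  by_cases ha : a ∈ flatP l
  · obtain ⟨c, hc, h⟩ := key a ha
    exact Or.inr (D.E_mul_of_arc hδ hab hc h)
  · by_cases hb : b ∈ flatP l
    · obtain ⟨c, hc, h⟩ := key b hb
      rw [D.symm a b hab]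
      exact Or.inr (D.E_mul_of_arc hδ hab.symm hc h)
    · exact Or.inl ⟨ha, hb⟩

/-- The elements `g e_i h` span a left ideal containing `1`. -/
theorem span_eq_top [Fintype P] (hδ : δ ≠ 0) {N : ℕ} (hN : Fintype.card P < 2 * (N + 1))
    (l : ℕ → List (P × P)) (hl : ∀ i ≤ N, (flatP (l i)).Nodup) (hlen : ∀ i ≤ N, (l i).length = i)
    (hgen : ∀ S : Submodule K A, 1 ∈ S → (∀ g, ∀ x ∈ S, D.r g * x ∈ S) →
      (∀ a b, a ≠ b → ∀ x ∈ S, D.E a b * x ∈ S) → S = ⊤) :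
    Submodule.span K {x | ∃ i ≤ N, ∃ g h, x = D.r g * D.prodE (l i) * D.r h} = ⊤ := by
  apply hgen
  · refine Submodule.subset_span ⟨0, Nat.zero_le _, 1, 1, ?_⟩
    have : l 0 = [] := List.length_eq_zero_iff.1 (hlen 0 (Nat.zero_le _))
    simp [this, prodE]
  · intro g x hx
    refine Submodule.span_induction (p := fun x _ => D.r g * x ∈ _) ?_ ?_ ?_ ?_ hx
    · rintro _ ⟨i, hi, g', h, rfl⟩
      exact Submodule.subset_span ⟨i, hi, g * g', h, by simp only [map_mul, mul_assoc]⟩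
    · simp
    · intro x y _ _ hx hy
      rw [mul_add]
      exact add_mem hx hy
    · intro c x _ hx
      rw [mul_smul_comm]
      exact Submodule.smul_mem _ _ hx
  · intro a b hab x hx
    refine Submodule.span_induction (p := fun x _ => D.E a b * x ∈ _) ?_ ?_ ?_ ?_ hx
    · rintro _ ⟨i, hi, g, h, rfl⟩
      have hab' : g⁻¹ a ≠ g⁻¹ b := fun h => hab (g⁻¹.injective h)
      have e1 : D.E a b * D.r g = D.r g * D.E (g⁻¹ a) (g⁻¹ b) := by
        rw [D.conj _ _ _ hab']; simp
      rw [← mul_assoc, ← mul_assoc, e1, mul_assoc (D.r g)]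
      rcases D.dichotomy hδ (l i) (hl i hi) _ _ hab' with ⟨h1, h2⟩ | ⟨s, g', h1⟩
      · have hnd : (flatP ((g⁻¹ a, g⁻¹ b) :: l i)).Nodup := by
          simp only [flatP, List.nodup_cons, List.mem_cons, not_or]
          exact ⟨⟨hab', h1⟩, h2, hl i hi⟩
        have hi' : i + 1 ≤ N := by
          have h3 := hnd.length_le_card
          rw [length_flatP, List.length_cons, hlen i hi] at h3
          omega
        obtain ⟨g', hg'⟩ := exists_perm_pairs (hl _ hi') hnd (by
          rw [hlen _ hi', List.length_cons, hlen i hi])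
        have e2 := D.conj_prodE g' (l (i + 1)) (hl _ hi')
        rw [hg', prodE] at e2
        refine Submodule.subset_span ⟨i + 1, hi', g * g', g'⁻¹ * h, ?_⟩
        have e3 : D.r g' * D.prodE (l (i + 1)) * D.r g'⁻¹ =
            D.E (g⁻¹ a) (g⁻¹ b) * D.prodE (l i) := by
          rw [e2, mul_assoc, r_mul_inv, mul_one]
        rw [← e3]
        simp only [map_mul, mul_assoc]
      · rw [h1, mul_smul_comm, smul_mul_assoc]
        refine Submodule.smul_mem _ _ (Submodule.subset_span ⟨i, hi, g * g', h, ?_⟩)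
        simp only [map_mul, mul_assoc]
    · simp
    · intro x y _ _ hx hy
      rw [mul_add]
      exact add_mem hx hy
    · intro c x _ hx
      rw [mul_smul_comm]
      exact Submodule.smul_mem _ _ hx

end BrData

end BrDataSec

/-! ### Part 4: Brauer data on the presented algebra -/

section Presented

open Equiv

lemma perm_mem_of_fix {N k : ℕ} (S : Submonoid (Perm (Fin N)))
    (hS : ∀ i (h : i + 1 < N), k ≤ i → swap (⟨i, by omega⟩ : Fin N) ⟨i + 1, h⟩ ∈ S)
    (σ : Perm (Fin N)) (hσ : ∀ j : Fin N, (j : ℕ) < k → σ j = j) : σ ∈ S := by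
  have h1 : ∀ d a (h : a + d < N), k ≤ a → swap (⟨a, by omega⟩ : Fin N) ⟨a + d, h⟩ ∈ S := by
    intro d
    induction d with
    | zero => intro a h hk; simp only [Nat.add_zero, swap_self]; exact one_mem S
    | succ d ih =>
      intro a h hk
      rcases Nat.eq_zero_or_pos d with rfl | hd
      · exact hS a h hk
      have e1 : swap (⟨a, by omega⟩ : Fin N) ⟨a + (d + 1), h⟩ =
          swap ⟨a + d, by omega⟩ ⟨a + (d + 1), h⟩ * swap ⟨a, by omega⟩ ⟨a + d, by omega⟩ *
            swap ⟨a + d, by omega⟩ ⟨a + (d + 1), h⟩ := by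
        ext x
        simp only [Perm.mul_apply, swap_apply_def, Fin.ext_iff]
        split_ifs <;> first | rfl | (simp_all; try omega)
      rw [e1]
      exact mul_mem (mul_mem (hS (a + d) h (by omega)) (ih a (by omega) hk))
        (hS (a + d) h (by omega))
  have h2 : ∀ a b : Fin N, k ≤ (a : ℕ) → k ≤ (b : ℕ) → swap a b ∈ S := by
    intro a b ha hb
    rcases le_total (a : ℕ) b with h | h
    · have := h1 (b - a) a (by omega) ha
      convert this using 2
      apply Fin.ext
      simp; omega
    · have := h1 (a - b) b (by omega) hb
      rw [swap_comm]
      convert this using 2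
      apply Fin.ext
      simp; omega
  induction hc : σ.support.card using Nat.strong_induction_on generalizing σ with
  | _ c ih =>
    by_cases h : σ = 1
    · rw [h]; exact one_mem _
    obtain ⟨a, ha⟩ : ∃ a, σ a ≠ a := by
      by_contra! h'
      exact h (Equiv.ext h')
    have hka : k ≤ (a : ℕ) := by
      by_contra! h'
      exact ha (hσ a h')
    have hkb : k ≤ (σ a : ℕ) := by
      by_contra! h'
      exact ha (σ.injective (hσ _ h'))
    have h3 := Perm.card_support_swap_mul ha
    have h4 := ih _ (hc ▸ h3) (swap a (σ a) * σ) (by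
      intro j hj
      rw [Perm.mul_apply, hσ j hj]
      apply swap_apply_of_ne_of_ne
      · rintro rfl; omega
      · rintro rfl; omega) rfl
    have h5 : σ = swap a (σ a) * (swap a (σ a) * σ) := by
      rw [← mul_assoc, swap_mul_self, one_mul]
    rw [h5]
    exact mul_mem (h2 _ _ hka hkb) h4

variable {K : Type*} [Field K] (δ : K) (n : ℕ)

/-- generators -/
def genR (i : Fin (n + 1)) : BrauerAlgebra (n + 1) (typeA (n + 1)) K δ :=
  RingQuot.mkAlgHom K _ (FreeAlgebra.ι K (.inl i))

/-- generators -/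
def genE (i : Fin (n + 1)) : BrauerAlgebra (n + 1) (typeA (n + 1)) K δ :=
  RingQuot.mkAlgHom K _ (FreeAlgebra.ι K (.inr i))

lemma typeA_adj (m : ℕ) (i j : Fin m) :
    (typeA m).Adj i j ↔ (i : ℕ) + 1 = j ∨ (j : ℕ) + 1 = i := by
  rw [typeA, SimpleGraph.fromRel_adj]
  constructor
  · exact fun h => h.2
  · intro h
    exact ⟨by rintro rfl; omega, h⟩

local notation "𝓡" => genR δ n
local notation "𝓔" => genE δ n

lemma genR_sq (i) : 𝓡 i * 𝓡 i = 1 := by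
  simpa [genR] using RingQuot.mkAlgHom_rel K (BrauerRel.rsq (Q := typeA (n+1)) (δ := δ) i)

lemma genRE (i) : 𝓡 i * 𝓔 i = 𝓔 i := by
  simpa [genR, genE] using RingQuot.mkAlgHom_rel K (BrauerRel.re (Q := typeA (n+1)) (δ := δ) i)

lemma genER (i) : 𝓔 i * 𝓡 i = 𝓔 i := by
  simpa [genR, genE] using RingQuot.mkAlgHom_rel K (BrauerRel.er (Q := typeA (n+1)) (δ := δ) i)

lemma genE_sq (i) : 𝓔 i * 𝓔 i = δ • 𝓔 i := by
  simpa [genR, genE] using RingQuot.mkAlgHom_rel K (BrauerRel.esq (Q := typeA (n+1)) (δ := δ) i)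

lemma genR_comm (i j : Fin (n + 1)) (h : (i : ℕ) + 2 ≤ j) : 𝓡 i * 𝓡 j = 𝓡 j * 𝓡 i := by
  simpa [genR, genE] using RingQuot.mkAlgHom_rel K (BrauerRel.rr (Q := typeA (n+1)) (δ := δ) i j
    (by rintro rfl; omega) (by rw [typeA_adj]; omega))

lemma genER_comm (i j : Fin (n + 1)) (h : (i : ℕ) + 2 ≤ j) : 𝓔 i * 𝓡 j = 𝓡 j * 𝓔 i := by
  simpa [genR, genE] using RingQuot.mkAlgHom_rel K (BrauerRel.erc (Q := typeA (n+1)) (δ := δ) i j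
    (by rintro rfl; omega) (by rw [typeA_adj]; omega))

lemma genE_comm (i j : Fin (n + 1)) (h : (i : ℕ) + 2 ≤ j) : 𝓔 i * 𝓔 j = 𝓔 j * 𝓔 i := by
  simpa [genR, genE] using RingQuot.mkAlgHom_rel K (BrauerRel.ee (Q := typeA (n+1)) (δ := δ) i j
    (by rintro rfl; omega) (by rw [typeA_adj]; omega))

lemma gen_braid (i j : Fin (n + 1)) (h : (i : ℕ) + 1 = j) : 𝓡 i * 𝓡 j * 𝓡 i = 𝓡 j * 𝓡 i * 𝓡 j := by
  simpa [genR, genE] using RingQuot.mkAlgHom_rel K (BrauerRel.braid (Q := typeA (n+1)) (δ := δ) i j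
    (by rw [typeA_adj]; omega))

lemma gen_rre (i j : Fin (n + 1)) (h : (i : ℕ) + 1 = j) : 𝓡 j * 𝓡 i * 𝓔 j = 𝓔 i * 𝓔 j := by
  simpa [genR, genE] using RingQuot.mkAlgHom_rel K (BrauerRel.rre (Q := typeA (n+1)) (δ := δ) i j
    (by rw [typeA_adj]; omega))

lemma gen_rer (i j : Fin (n + 1)) (h : (i : ℕ) + 1 = j) : 𝓡 i * 𝓔 j * 𝓡 i = 𝓡 j * 𝓔 i * 𝓡 j := by
  simpa [genR, genE] using RingQuot.mkAlgHom_rel K (BrauerRel.rer (Q := typeA (n+1)) (δ := δ) i j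
    (by rw [typeA_adj]; omega))

lemma gen_top (S : Submodule K (BrauerAlgebra (n + 1) (typeA (n + 1)) K δ)) (h1 : 1 ∈ S)
    (hR : ∀ i, ∀ x ∈ S, 𝓡 i * x ∈ S) (hE : ∀ i, ∀ x ∈ S, 𝓔 i * x ∈ S) : S = ⊤ := by
  rw [eq_top_iff]
  rintro b -
  obtain ⟨x, rfl⟩ := RingQuot.mkAlgHom_surjective K _ b
  have key : ∀ s ∈ S, RingQuot.mkAlgHom K (BrauerRel (n + 1) (typeA (n + 1)) K δ) x * s ∈ S := by
    refine FreeAlgebra.induction K (Fin (n + 1) ⊕ Fin (n + 1)) (motive := fun x => ∀ s ∈ S,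
      RingQuot.mkAlgHom K (BrauerRel (n + 1) (typeA (n + 1)) K δ) x * s ∈ S) ?_ ?_ ?_ ?_ x
    · intro c s hs
      rw [AlgHom.commutes, ← Algebra.smul_def]
      exact S.smul_mem _ hs
    · rintro (i | i) s hs
      · exact hR i s hs
      · exact hE i s hs
    · intro a b ha hb s hs
      rw [map_mul, mul_assoc]
      exact ha _ (hb _ hs)
    · intro a b ha hb s hs
      rw [map_add, add_mul]
      exact S.add_mem (ha _ hs) (hb _ hs)
  simpa using key 1 h1

lemma fin_val_two (m : ℕ) : ((2 : Fin (m + 3)) : ℕ) = 2 := rfl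

lemma fin_val_three (m : ℕ) : ((3 : Fin (m + 4)) : ℕ) = 3 := rfl

theorem exists_brData : ∃ D : BrData δ (Fin (n + 2)) (BrauerAlgebra (n + 1) (typeA (n + 1)) K δ),
    (∀ i : Fin (n + 1), D.r (swap i.castSucc i.succ) = 𝓡 i) ∧
    (∀ i : Fin (n + 1), D.E i.castSucc i.succ = 𝓔 i) := by
  obtain ⟨r, hr⟩ := exists_perm_hom (𝓡) (genR_sq δ n) (genR_comm δ n) (gen_braid δ n)
  have rinv : ∀ g, r g * r g⁻¹ = 1 := fun g => by rw [← map_mul]; simp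
  have rinv' : ∀ g, r g⁻¹ * r g = 1 := fun g => by rw [← map_mul]; simp
  have hstab : ∀ σ : Perm (Fin (n + 2)), σ 0 = 0 → σ 1 = 1 → r σ * 𝓔 0 = 𝓔 0 * r σ := by
    intro σ h0 h1
    let S : Submonoid (Perm (Fin (n + 2))) := (Submonoid.centralizer {𝓔 0}).comap r
    have : σ ∈ S := by
      apply perm_mem_of_fix (k := 2) S
      · intro i hi hk
        change r _ ∈ Submonoid.centralizer {𝓔 0}
        rw [Submonoid.mem_centralizer_iff]
        rintro _ rfl
        have := hr ⟨i, by omega⟩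
        have e : swap (⟨i, by omega⟩ : Fin (n+2)) ⟨i + 1, hi⟩ =
          swap (⟨i, by omega⟩ : Fin (n+1)).castSucc (⟨i, by omega⟩ : Fin (n+1)).succ := rfl
        rw [e, this, genER_comm]
        simpa using hk
      · intro j hj
        rcases (show (j : ℕ) = 0 ∨ (j : ℕ) = 1 by omega) with h | h
        · have : j = 0 := Fin.ext h
          rw [this, h0]
        · have : j = 1 := Fin.ext (by simpa using h)
          rw [this, h1]
    have h3 : r σ ∈ Submonoid.centralizer {𝓔 0} := this
    rw [Submonoid.mem_centralizer_iff] at h3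
    exact (h3 _ rfl).symm
  have hne01 : (0 : Fin (n + 2)) ≠ 1 := by simp
  have htr : ∀ a b : Fin (n + 2), ∃ g : Perm (Fin (n + 2)), a ≠ b → g 0 = a ∧ g 1 = b := by
    intro a b
    by_cases h : a = b
    · exact ⟨1, fun h' => absurd h h'⟩
    · obtain ⟨g, hg⟩ := exists_perm_list (l := [0, 1]) (l' := [a, b]) (by simp) (by simp [h]) rfl
      exact ⟨g, fun _ => by simpa using hg⟩
  choose G hG using htr
  let E : Fin (n + 2) → Fin (n + 2) → BrauerAlgebra (n + 1) (typeA (n + 1)) K δ :=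
    fun a b => r (G a b) * 𝓔 0 * r (G a b)⁻¹
  have hE : ∀ g, E (g 0) (g 1) = r g * 𝓔 0 * r g⁻¹ := by
    intro g
    obtain ⟨h0, h1⟩ := hG (g 0) (g 1) (by simp)
    set q := G (g 0) (g 1) with hq
    have e1 := hstab (g⁻¹ * q) (by simp [h0]) (by simp [h1])
    change r q * 𝓔 0 * r q⁻¹ = _
    have e2 : r q = r g * r (g⁻¹ * q) := by rw [← map_mul]; simp
    rw [e2, mul_assoc (r g), e1, mul_assoc, mul_assoc, mul_assoc, ← map_mul]
    simp
  have hE0 : E 0 1 = 𝓔 0 := by simpa using hE 1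
  have hconj : ∀ g a b, a ≠ b → r g * E a b = E (g a) (g b) * r g := by
    intro g a b hab
    obtain ⟨h0, h1⟩ := hG a b hab
    have e1 := hE (G a b)
    have e2 := hE (g * G a b)
    simp only [Perm.mul_apply, h0, h1] at e1 e2
    rw [e1, e2]
    simp only [map_mul, mul_assoc, mul_inv_rev, rinv', mul_one]
  have hconj' : ∀ g a b, a ≠ b → E (g a) (g b) = r g * E a b * r g⁻¹ := by
    intro g a b hab
    rw [hconj g a b hab, mul_assoc, rinv, mul_one]
  have hEi : ∀ i (h : i < n + 1), E (⟨i, by omega⟩ : Fin (n + 2)) ⟨i + 1, by omega⟩ = 𝓔 ⟨i, h⟩ := by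
    intro i
    induction i with
    | zero => intro h; exact hE0
    | succ i ih =>
      intro h
      have e1 := ih (by omega)
      have ha := hr ⟨i, by omega⟩
      have hb := hr ⟨i + 1, by omega⟩
      have e2 := gen_rer δ n ⟨i, by omega⟩ ⟨i + 1, h⟩ rfl
      rw [← e1, ← ha, ← hb, ] at e2
      set s := swap (⟨i, by omega⟩ : Fin (n + 1)).castSucc (⟨i, by omega⟩ : Fin (n + 1)).succ with hs
      set t := swap (⟨i+1, by omega⟩ : Fin (n + 1)).castSucc (⟨i+1, by omega⟩ : Fin (n + 1)).succ with ht
      have s2 : s * s = 1 := swap_mul_self _ _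
      have s3 : s⁻¹ = s := swap_inv _ _
      have t3 : t⁻¹ = t := swap_inv _ _
      have s4 : r s * r s = 1 := by rw [← map_mul, s2, map_one]
      have e3 := hconj' (s * t) (⟨i, by omega⟩ : Fin (n + 2)) ⟨i + 1, by omega⟩ (by simp)
      have e4 : (s * t) (⟨i, by omega⟩ : Fin (n + 2)) = ⟨i + 1, by omega⟩ := by
        have t1 : t (⟨i, by omega⟩ : Fin (n + 2)) = ⟨i, by omega⟩ :=
          swap_apply_of_ne_of_ne (by rw [Ne, Fin.ext_iff]; change ¬ i = i + 1; omega)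
            (by rw [Ne, Fin.ext_iff]; change ¬ i = i + 1 + 1; omega)
        rw [Perm.mul_apply, t1]
        exact swap_apply_left _ _
      have e5 : (s * t) (⟨i + 1, by omega⟩ : Fin (n + 2)) = ⟨i + 2, by omega⟩ := by
        have t1 : t (⟨i + 1, by omega⟩ : Fin (n + 2)) = ⟨i + 2, by omega⟩ := swap_apply_left _ _
        rw [Perm.mul_apply, t1]
        exact swap_apply_of_ne_of_ne (by rw [Ne, Fin.ext_iff]; change ¬ i + 2 = i; omega)
            (by rw [Ne, Fin.ext_iff]; change ¬ i + 2 = i + 1; omega)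
      rw [e4, e5] at e3
      rw [e3, mul_inv_rev, s3, t3, map_mul, map_mul]
      have e6 : r s * (r s * 𝓔 ⟨i + 1, h⟩ * r s) * r s = 𝓔 ⟨i + 1, h⟩ := by
        simp only [mul_assoc, s4, mul_one]
        rw [← mul_assoc, s4, one_mul]
      rw [← e6, e2]
      simp only [mul_assoc]
  have hswap01 : r (swap 0 1) = 𝓡 0 := by
    have := hr 0
    simpa using this
  have hbase : ∀ a b : Fin (n + 2), a ≠ b → ∃ g : Perm (Fin (n + 2)), g 0 = a ∧ g 1 = b :=
    fun a b h => ⟨_, hG a b h⟩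
  have hsw : ∀ (g : Perm (Fin (n + 2))) a b, swap (g a) (g b) = g * swap a b * g⁻¹ := by
    intro g a b
    rw [swap_apply_apply]
  refine ⟨⟨r, E, hconj, ?_, ?_, ?_, ?_, ?_⟩, hr, fun i => hEi i i.2⟩
  · intro a b hab
    obtain ⟨g, rfl, rfl⟩ := hbase a b hab
    rw [hE, hsw, map_mul, map_mul, hswap01]
    simp only [mul_assoc]
    rw [← mul_assoc (r g⁻¹), rinv', one_mul, ← mul_assoc (𝓡 0), genRE]
  · intro a b hab
    obtain ⟨g, rfl, rfl⟩ := hbase a b hab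
    rw [hE, hsw, map_mul, map_mul, hswap01]
    simp only [mul_assoc]
    rw [← mul_assoc (r g⁻¹), rinv', one_mul, ← mul_assoc (𝓔 0), genER]
  · intro a b hab
    obtain ⟨g, rfl, rfl⟩ := hbase a b hab
    rw [hE]
    simp only [mul_assoc]
    rw [← mul_assoc (r g⁻¹), rinv', one_mul, ← mul_assoc (𝓔 0), genE_sq]
    simp
  · intro a b c hab hbc hac
    obtain ⟨n, rfl⟩ : ∃ n', n = n' + 1 := by
      cases n with
      | zero => omega
      | succ n => exact ⟨n, rfl⟩
    have v2 : ((2 : Fin (n + 1 + 2)) : ℕ) = 2 := fin_val_two n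
    have n12 : (1 : Fin (n + 1 + 2)) ≠ 2 := by rw [Ne, Fin.ext_iff, v2]; simp
    have n02 : (0 : Fin (n + 1 + 2)) ≠ 2 := by rw [Ne, Fin.ext_iff, v2]; simp
    obtain ⟨g, hg⟩ := exists_perm_list (l := [(0 : Fin (n + 1 + 2)), 1, 2]) (l' := [a, b, c])
      (by simp [n12, n02]) (by simp [hab, hbc, hac]) rfl
    simp only [List.map_cons, List.map_nil, List.cons.injEq, and_true] at hg
    obtain ⟨rfl, rfl, rfl⟩ := hg
    have e1 : E 1 2 = genE δ (n + 1) 1 := hEi 1 (by omega)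
    have hswap12 : r (swap 1 2) = genR δ (n + 1) 1 := hr 1
    have e2 : E 0 1 * E 1 2 = r (swap 0 2) * E 1 2 := by
      rw [e1, hE0]
      have e3 : swap (0 : Fin (n + 1 + 2)) 2 = swap 1 2 * swap 0 1 * swap 1 2 := by
        have := hsw (swap 1 2) 0 1
        rwa [swap_apply_left, swap_apply_of_ne_of_ne (by simp) n02, swap_inv] at this
      rw [e3, map_mul, map_mul, hswap01, hswap12, mul_assoc, genRE, gen_rre]
      rfl
    rw [hconj' g 0 1 (by simp), hconj' g 1 2 n12, hsw, map_mul, map_mul]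
    simp only [mul_assoc]
    have hcan : ∀ z, r g⁻¹ * (r g * z) = z := fun z => by rw [← mul_assoc, rinv', one_mul]
    simp only [hcan]
    rw [← mul_assoc (E 0 1), e2]
    simp only [mul_assoc]
  · intro a b c d hab hac had hbc hbd hcd
    obtain ⟨n, rfl⟩ : ∃ n', n = n' + 2 := by
      rcases n with _ | _ | n
      · omega
      · omega
      · exact ⟨n, rfl⟩
    have v2 : ((2 : Fin (n + 2 + 2)) : ℕ) = 2 := fin_val_two (n + 1)
    have v3 : ((3 : Fin (n + 2 + 2)) : ℕ) = 3 := fin_val_three n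
    have n23 : (2 : Fin (n + 2 + 2)) ≠ 3 := by rw [Ne, Fin.ext_iff, v2, v3]; simp
    obtain ⟨g, hg⟩ := exists_perm_list (l := [(0 : Fin (n + 2 + 2)), 1, 2, 3]) (l' := [a, b, c, d])
      (by
        simp only [List.nodup_cons, List.mem_cons, Fin.ext_iff, v2, v3, Fin.val_zero, Fin.val_one]
        simp) (by simp [hab, hbc, hac, had, hbd, hcd]) rfl
    simp only [List.map_cons, List.map_nil, List.cons.injEq, and_true] at hg
    obtain ⟨rfl, rfl, rfl, rfl⟩ := hg
    have e1 : E 2 3 = genE δ (n + 2) 2 := hEi 2 (by omega)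
    have e2 : E 0 1 * E 2 3 = E 2 3 * E 0 1 := by
      rw [e1, hE0]
      have w2 : ((2 : Fin (n + 2 + 1)) : ℕ) = 2 := fin_val_two n
      exact genE_comm _ _ _ _ (by rw [w2]; simp)
    rw [hconj' g 0 1 (by simp), hconj' g 2 3 n23]
    simp only [mul_assoc]
    have hcan : ∀ z, r g⁻¹ * (r g * z) = z := fun z => by rw [← mul_assoc, rinv', one_mul]
    simp only [hcan]
    rw [← mul_assoc (E 0 1), e2]
    simp only [mul_assoc]

end Presented

/-! ### Part 5: stabilizers of diagrams -/

section Stab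

open Equiv

variable {P M : Type*} [DecidableEq P] [DecidableEq M]

/-- extension of a pair of permutations to the disjoint union -/
abbrev cg (s : Perm P × Perm M) : Perm (P ⊕ M) := Perm.sumCongrHom P M s

lemma cg_swap (a b : P) : cg (M := M) (swap a b, 1) = swap (Sum.inl a) (Sum.inl b) :=
  Perm.sumCongr_swap_refl a b

lemma stab_mem [Fintype P] (x : Perm (P ⊕ M)) (inv : ∀ w, x (x w) = w)
    (fpf : ∀ w, x w ≠ w) (S : Submonoid (Perm P))
    (h1 : ∀ a b, x (.inl a) = .inl b → swap a b ∈ S)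
    (h2 : ∀ a b c d, x (.inl a) = .inl b → x (.inl c) = .inl d → a ≠ c → a ≠ d →
      swap a c * swap b d ∈ S)
    (h : Perm P) (hh : cg (h, 1) * x = x * cg (h, 1)) : h ∈ S := by
  induction hc : h.support.card using Nat.strong_induction_on generalizing h with
  | _ n ih =>
    by_cases hh1 : h = 1
    · rw [hh1]; exact one_mem _
    obtain ⟨a, ha⟩ : ∃ a, h a ≠ a := by
      by_contra! h'
      exact hh1 (Equiv.ext h')
    have hx : ∀ w, cg (h, 1) (x w) = x (cg (h, 1) w) := fun w => by
      rw [← Perm.mul_apply, hh]; rfl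
    have hl : ∀ a : P, cg (M := M) (h, 1) (.inl a) = .inl (h a) := fun a => rfl
    rcases hxa : x (.inl a) with b | t
    swap
    · have e1 := hx (.inl a)
      rw [hxa, hl] at e1
      have e2 : cg (h, (1 : Perm M)) (.inr t) = .inr t := rfl
      rw [e2, ← hxa] at e1
      have := x.injective e1
      simp only [Sum.inl.injEq] at this
      exact absurd this.symm ha
    have hxb : x (.inl b) = .inl a := by rw [← hxa, inv]
    have e1 : x (.inl (h a)) = .inl (h b) := by rw [← hl, ← hx, hxa]; rfl
    have e2 : x (.inl (h b)) = .inl (h a) := by rw [← e1, inv]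
    by_cases hab : h a = b
    · have hS := h1 a b hxa
      have e3 : h = swap a b * (swap a b * h) := by rw [← mul_assoc, swap_mul_self, one_mul]
      have h3 := Perm.card_support_swap_mul ha
      rw [e3]
      refine mul_mem hS (ih _ (hc ▸ hab ▸ h3) (swap a b * h) ?_ rfl)
      have e4 : cg (M := M) (swap a b * h, 1) = cg (swap a b, 1) * cg (h, 1) := by
        rw [← map_mul]; simp
      rw [e4, mul_assoc, hh, ← mul_assoc, ← mul_assoc, cg_swap, mul_swap_eq_swap_mul, hxa, hxb,
        swap_comm]
    · have hbd : h b ≠ b := by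
        intro h'
        rw [h'] at e2
        rw [e2] at hxb
        exact ha (Sum.inl.inj hxb)
      have had : a ≠ h b := by
        intro h'
        rw [← h'] at e2
        rw [e2] at hxa
        exact hab (Sum.inl.inj hxa)
      have hcd : h a ≠ h b := by
        intro h'
        have := h.injective h'
        subst this
        exact fpf _ hxa
      have hab' : a ≠ b := by
        rintro rfl
        exact fpf _ hxa
      have hS := h2 b a (h b) (h a) hxb e2 (Ne.symm hbd) (Ne.symm hab)
      have e3 : h = swap b (h b) * swap a (h a) * (swap a (h a) * (swap b (h b) * h)) := by
        rw [mul_assoc, ← mul_assoc (swap a (h a)), swap_mul_self, one_mul, ← mul_assoc,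
          swap_mul_self, one_mul]
      have h3 := Perm.card_support_swap_mul hbd
      have h4 : (swap b (h b) * h) a = h a := by
        rw [Perm.mul_apply, swap_apply_of_ne_of_ne hab hcd]
      have h5 := Perm.card_support_swap_mul (f := swap b (h b) * h) (x := a) (by rw [h4]; exact ha)
      rw [h4] at h5
      have e5 : swap a (h a) * (swap b (h b) * h) ∈ S := by
        refine ih _ (hc ▸ h5.trans h3) _ ?_ rfl
        have e4 : cg (M := M) (swap a (h a) * (swap b (h b) * h), 1) =
            cg (swap a (h a), 1) * cg (swap b (h b), 1) * cg (h, 1) := by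
          rw [← map_mul, ← map_mul]; simp [mul_assoc]
        rw [e4, mul_assoc, hh, ← mul_assoc, ← mul_assoc, cg_swap, cg_swap]
        congr 1
        rw [← mul_assoc, mul_swap_eq_swap_mul x, mul_assoc _ x, mul_swap_eq_swap_mul x, hxa, hxb,
          e1, e2, ← mul_assoc, mul_swap_eq_swap_mul (swap (Sum.inl a) (Sum.inl (h a))),
          swap_apply_of_ne_of_ne (by simpa using hab'.symm) (by simpa using Ne.symm hab),
          swap_apply_of_ne_of_ne (by simpa using had.symm) (by simpa using hcd.symm)]
      rw [e3]
      exact mul_mem hS e5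

end Stab

/-! ### Part 6: diagrams -/

section Diagrams

set_option linter.unusedSectionVars false
set_option linter.unusedVariables false
set_option linter.unusedSimpArgs false

open Equiv

lemma cg_one {P M : Type*} : cg (1 : Perm P × Perm M) = 1 := map_one _

lemma cg_mul {P M : Type*} (s t : Perm P × Perm M) : cg (s * t) = cg s * cg t := map_mul _ _ _

/-- A reference half diagram: a matching on `P ⊕ M` with arcs listed in `l` and with every point
of `M` matched to a point of `P`. -/
structure Base (P M : Type) where
  x0 : Perm (P ⊕ M)
  l : List (P × P)
  inv : ∀ w, x0 (x0 w) = w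
  fpf : ∀ w, x0 w ≠ w
  bdry : ∀ t, ∃ a, x0 (.inr t) = .inl a
  arc : ∀ a b, (a, b) ∈ l → x0 (.inl a) = .inl b
  nodup : (flatP l).Nodup
  compl : ∀ a, a ∉ flatP l → ∃ t, x0 (.inl a) = .inr t

variable {P M : Type}

lemma exists_cg_of_fix [DecidableEq P] [DecidableEq M] [Finite P] [Finite M] (σ : Perm (P ⊕ M))
    (h : ∀ t, σ (.inr t) = .inr t) : ∃ g : Perm P, σ = cg (g, 1) := by
  have h1 : Set.MapsTo σ (Set.range Sum.inl) (Set.range Sum.inl) := by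
    rintro _ ⟨a, rfl⟩
    rcases hs : σ (.inl a) with b | t
    · exact ⟨b, rfl⟩
    · rw [← h t] at hs
      exact absurd (σ.injective hs) (by simp)
  obtain ⟨⟨g, m⟩, hg⟩ := Perm.mem_sumCongrHom_range_of_perm_mapsTo_inl h1
  refine ⟨g, ?_⟩
  have : m = 1 := by
    ext t
    have := h t
    rw [← hg] at this
    simpa using this
  rw [← hg, this]

lemma F_comm {W : Type*} [DecidableEq W] (f : W → W) (hinv : ∀ w, f (f w) = w)
    (hfp : ∀ w, f w ≠ w) (a b c d : W)
   (hab : a ≠ b) (hac : a ≠ c) (had : a ≠ d) (hbc : b ≠ c) (hbd : b ≠ d)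
    (hcd : c ≠ d) (F : W → W → (W → W) → W → W) (hF : F = fun a b f w => if w = a then b else if w = b then a else
      if w = f a then f b else if w = f b then f a else f w) (w : W) :
    F c d (F a b f) w = F a b (F c d f) w := by
  have inj : ∀ u v, f u = f v → u = v := fun u v h => by rw [← hinv u, h, hinv]
  have ea := hinv a
  have eb := hinv b
  have ec := hinv c
  have ed := hinv d
  have iab := inj a b
  have iac := inj a c
  have iad := inj a d
  have ibc := inj b c
  have ibd := inj b d
  have icd := inj c d
  have ew := hinv w
  have fa := hfp a
  have fb := hfp b
  have fc := hfp c
  have fd := hfp d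
  have fw := hfp w
  clear hinv inj hfp
  subst hF
  have hba := hab.symm
  have hca := hac.symm
  have hda := had.symm
  have hcb := hbc.symm
  have hdb := hbd.symm
  have hdc := hcd.symm
  simp only [hab, hac, had, hbc, hbd, hcd, hba, hca, hda, hcb, hdb, hdc, if_false]
  by_cases h1 : f a = c <;> by_cases h2 : f a = d <;> by_cases h3 : f b = c <;> by_cases h4 : f b = d <;> grind (splits := 30)

namespace Base

variable [DecidableEq P] [DecidableEq M] [Fintype P] [Fintype M] (B : Base P M)

lemma exists_hat (m : Perm M) : ∃ g : Perm P,
    cg (1, m) * B.x0 * (cg (1, m))⁻¹ = cg (g, 1) * B.x0 * (cg (g, 1))⁻¹ ∧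
      ∀ a b, B.x0 (.inl a) = .inl b → g a = a := by
  have hx : B.x0 * B.x0 = 1 := Equiv.ext B.inv
  obtain ⟨g, hg⟩ := exists_cg_of_fix (B.x0 * cg (1, m) * B.x0) (by
    intro t
    obtain ⟨a, ha⟩ := B.bdry t
    change B.x0 (cg (1, m) (B.x0 (.inr t))) = _
    have : cg (1, m) (Sum.inl a : P ⊕ M) = Sum.inl a := rfl
    rw [ha, this, ← ha, B.inv])
  have h1 : B.x0 * cg (1, m) = cg (g, 1) * B.x0 := by
    rw [← hg, mul_assoc, hx, mul_one]
  have h2 : cg (1, m) * B.x0 = B.x0 * cg (g, 1) := by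
    rw [← hg, ← mul_assoc, ← mul_assoc, hx, one_mul]
  have h3 : cg (g, 1) * (cg (1, m))⁻¹ = (cg (1, m))⁻¹ * cg (g, 1) := by
    rw [← map_inv, ← map_mul, ← map_mul]; simp
  refine ⟨g⁻¹, ?_, ?_⟩
  · have h4 : cg (M := M) (g⁻¹, 1) = (cg (g, 1))⁻¹ := by rw [← map_inv]; simp
    rw [h4, inv_inv, h2, mul_assoc, h3, ← mul_assoc]
    congr 1
    rw [mul_inv_eq_iff_eq_mul, mul_assoc, h1, inv_mul_cancel_left]
  · intro a b hab
    rw [Perm.inv_eq_iff_eq]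
    have h5 : cg (M := M) (g, 1) (.inl a) = .inl (g a) := rfl
    rw [← hg] at h5
    have : cg (1, m) (Sum.inl b : P ⊕ M) = Sum.inl b := rfl
    simp only [Perm.mul_apply, hab, this] at h5
    rw [← hab, B.inv] at h5
    exact Sum.inl.inj h5

/-- the half diagrams in the orbit of the reference diagram -/
structure X where
  val : Perm (P ⊕ M)
  prop : ∃ g : Perm P, val = cg (g, 1) * B.x0 * (cg (g, 1))⁻¹

variable {B} in
lemma X.val_injective : Function.Injective (X.val : B.X → Perm (P ⊕ M)) := by
  rintro ⟨x, hx⟩ ⟨y, hy⟩ h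
  cases h
  rfl

noncomputable instance : Fintype B.X := Fintype.ofInjective _ X.val_injective

noncomputable instance : DecidableEq B.X := Classical.decEq _

instance : MulAction (Perm P × Perm M) B.X where
  smul s x := ⟨cg s * x.1 * (cg s)⁻¹, by
    obtain ⟨x, g, rfl⟩ := x
    obtain ⟨h, hh, -⟩ := B.exists_hat s.2
    refine ⟨s.1 * g * h, ?_⟩
    have e1 : cg s * cg (g, 1) = cg (s.1 * g, 1) * cg (1, s.2) := by
      rw [← map_mul, ← map_mul]
      simp
    have e2 : cg (M := M) (s.1 * g * h, 1) = cg (s.1 * g, 1) * cg (h, 1) := by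
      rw [← map_mul]
      simp
    calc cg s * (cg (g, 1) * B.x0 * (cg (g, 1))⁻¹) * (cg s)⁻¹
        = (cg s * cg (g, 1)) * B.x0 * (cg s * cg (g, 1))⁻¹ := by group
      _ = cg (s.1 * g, 1) * (cg (1, s.2) * B.x0 * (cg (1, s.2))⁻¹) * (cg (s.1 * g, 1))⁻¹ := by
        rw [e1]; group
      _ = _ := by rw [hh, e2]; group⟩
  one_smul x := X.val_injective (by
    change cg 1 * x.1 * (cg 1)⁻¹ = x.1
    rw [cg_one]; simp)
  mul_smul s t x := X.val_injective (by
    change cg (s * t) * x.1 * (cg (s * t))⁻¹ = cg s * (cg t * x.1 * (cg t)⁻¹) * (cg s)⁻¹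
    rw [cg_mul]; group)

variable {B}

lemma smul_val (s : Perm P × Perm M) (x : B.X) : (s • x).1 = cg s * x.1 * (cg s)⁻¹ := rfl

lemma smul_apply (s : Perm P × Perm M) (x : B.X) (w : P ⊕ M) :
    (s • x).1 (cg s w) = cg s (x.1 w) := by
  rw [smul_val]
  simp

/-- the action of permutations of the points -/
def gact (g : Perm P) (x : B.X) : B.X := (g, (1 : Perm M)) • x

/-- the action of permutations of the free ends -/
def mact (m : Perm M) (x : B.X) : B.X := ((1 : Perm P), m) • x

lemma gact_mul (g h : Perm P) (x : B.X) : gact (g * h) x = gact g (gact h x) := by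
  simp [gact, smul_smul]

lemma mact_mul (g h : Perm M) (x : B.X) : mact (g * h) x = mact g (mact h x) := by
  simp [mact, smul_smul]

lemma gact_one (x : B.X) : gact 1 x = x := one_smul (Perm P × Perm M) x

lemma mact_one (x : B.X) : mact 1 x = x := one_smul (Perm P × Perm M) x

lemma gact_mact (g : Perm P) (m : Perm M) (x : B.X) : gact g (mact m x) = mact m (gact g x) := by
  simp [gact, mact, smul_smul]

lemma gact_apply (g : Perm P) (x : B.X) (a : P) :
    (gact g x).1 (.inl (g a)) = Sum.map g id (x.1 (.inl a)) := smul_apply (g, 1) x (.inl a)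

lemma mact_apply (g : Perm M) (x : B.X) (a : P) :
    (mact g x).1 (.inl a) = Sum.map id g (x.1 (.inl a)) := smul_apply (1, g) x (.inl a)

lemma mact_apply' (g : Perm M) (x : B.X) (t : M) :
    (mact g x).1 (.inr (g t)) = Sum.map id g (x.1 (.inr t)) := smul_apply (1, g) x (.inr t)

lemma gact_swap (a b : P) (x : B.X) :
    (gact (swap a b) x).1 = swap (.inl a) (.inl b) * x.1 * swap (.inl a) (.inl b) := by
  rw [gact, smul_val, cg_swap, swap_inv]

variable (B) in
/-- the reference diagram -/
def base : B.X := ⟨B.x0, 1, by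
  change _ = cg 1 * _ * (cg 1)⁻¹
  rw [cg_one]; simp⟩

lemma exists_gact (x : B.X) : ∃ g : Perm P, x = gact g B.base := by
  obtain ⟨x, g, rfl⟩ := x
  exact ⟨g, rfl⟩

lemma X.inv (x : B.X) (w : P ⊕ M) : x.1 (x.1 w) = w := by
  obtain ⟨x, g, rfl⟩ := x
  simp [B.inv]

lemma X.fpf (x : B.X) (w : P ⊕ M) : x.1 w ≠ w := by
  obtain ⟨x, g, rfl⟩ := x
  intro h
  simp only [Perm.mul_apply] at h
  rw [← Perm.eq_inv_iff_eq] at h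
  exact B.fpf _ h

lemma X.bdry (x : B.X) (t : M) : ∃ a, x.1 (.inr t) = .inl a := by
  obtain ⟨x, g, rfl⟩ := x
  obtain ⟨a, ha⟩ := B.bdry t
  refine ⟨g a, ?_⟩
  have h1 : (Sum.inr t : P ⊕ M) = cg (g, 1) (.inr t) := rfl
  simp only [Perm.mul_apply]
  nth_rewrite 1 [h1]
  rw [← Perm.mul_apply (cg (g, 1))⁻¹, inv_mul_cancel, Perm.one_apply, ha]
  rfl

lemma mact_free (m : Perm M) (x : B.X) (h : mact m x = x) : m = 1 := by
  ext t
  obtain ⟨a, ha⟩ := x.bdry t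
  have h1 := mact_apply' m x t
  rw [h, ha] at h1
  have h2 : x.1 (.inr (m t)) = x.1 (.inr t) := by rw [h1, ha]; rfl
  simpa using x.1.injective h2

lemma gact_swap_of_arc {a b : P} {x : B.X} (h : x.1 (.inl a) = .inl b) :
    gact (swap a b) x = x := by
  apply X.val_injective
  have h' : x.1 (.inl b) = .inl a := by rw [← h, x.inv]
  rw [gact_swap, mul_assoc, mul_swap_eq_swap_mul, h, h', swap_comm, ← mul_assoc, swap_mul_self,
    one_mul]

/-- `E a b` acting on diagrams -/
def J (a b : P) (x : B.X) : B.X :=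
  match x.1 (.inl a) with
  | .inl c => gact (swap b c) x
  | .inr _ => match x.1 (.inl b) with
    | .inl c => gact (swap a c) x
    | .inr _ => x

/-- `E a b` kills the diagram -/
def Z (a b : P) (x : B.X) : Bool := (x.1 (.inl a)).isRight && (x.1 (.inl b)).isRight

lemma J_apply (a b : P) (hab : a ≠ b) (x : B.X) (hZ : Z a b x = false) (w : P ⊕ M) :
    (J a b x).1 w = if w = .inl a then .inl b else if w = .inl b then .inl a else
      if w = x.1 (.inl a) then x.1 (.inl b) else if w = x.1 (.inl b) then x.1 (.inl a)
      else x.1 w := by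
  have hinv := x.inv
  have hfpf := x.fpf
  rcases ha : x.1 (.inl a) with c | t
  · have e1 : J a b x = gact (swap b c) x := by simp [J, ha]
    rw [e1, gact_swap]
    simp only [Perm.mul_apply, swap_apply_def]
    grind
  · rcases hb : x.1 (.inl b) with c | t
    · have e1 : J a b x = gact (swap a c) x := by simp [J, ha, hb]
      rw [e1, gact_swap]
      simp only [Perm.mul_apply, swap_apply_def]
      grind
    · simp [Z, ha, hb] at hZ

lemma J_left (a b : P) (hab : a ≠ b) (x : B.X) (hZ : Z a b x = false) :
    (J a b x).1 (.inl a) = .inl b := by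
  rw [J_apply a b hab x hZ, if_pos rfl]

lemma Z_symm (a b : P) (x : B.X) : Z a b x = Z b a x := by
  rw [Z, Z, Bool.and_comm]

lemma J_symm (a b : P) (hab : a ≠ b) (x : B.X) (hZ : Z a b x = false) : J a b x = J b a x := by
  apply X.val_injective
  ext1 w
  have hinv := x.inv
  rw [J_apply a b hab x hZ, J_apply b a hab.symm x (by rw [Z_symm, hZ])]
  grind

lemma J_smul (a b : P) (g : Perm P) (m : Perm M) (x : B.X) :
    J (g a) (g b) ((g, m) • x) = (g, m) • J a b x := by
  have h1 : ∀ a, ((g, m) • x).1 (.inl (g a)) = Sum.map g m (x.1 (.inl a)) := fun a =>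
    smul_apply (g, m) x (.inl a)
  have h2 : ∀ b c, gact (swap (g b) (g c)) ((g, m) • x) = (g, m) • gact (swap b c) x := by
    intro b c
    rw [gact, gact, smul_smul, smul_smul]
    congr 1
    ext1
    · simp [swap_apply_apply]
    · simp
  unfold J
  rw [h1, h1]
  rcases x.1 (.inl a) with c | t
  · simp [h2]
  · rcases x.1 (.inl b) with c | t
    · simp [h2]
    · simp

lemma Z_smul (a b : P) (g : Perm P) (m : Perm M) (x : B.X) :
    Z (g a) (g b) ((g, m) • x) = Z a b x := by
  have h1 : ∀ a, ((g, m) • x).1 (.inl (g a)) = Sum.map g m (x.1 (.inl a)) := fun a =>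
    smul_apply (g, m) x (.inl a)
  rw [Z, Z, h1, h1]
  simp

section co

variable {K : Type*} [Field K] (δ : K)

/-- the coefficient of `E a b` acting on `x` -/
def co (a b : P) (x : B.X) : K := if Z a b x then 0 else if x.1 (.inl a) = .inl b then δ else 1

lemma co_smul (a b : P) (g : Perm P) (m : Perm M) (x : B.X) :
    co δ (g a) (g b) ((g, m) • x) = co δ a b x := by
  have h1 : ∀ a, ((g, m) • x).1 (.inl (g a)) = Sum.map g m (x.1 (.inl a)) := fun a =>
    smul_apply (g, m) x (.inl a)
  rw [co, co, Z_smul, h1]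
  rcases x.1 (.inl a) with c | t <;> simp

lemma co_symm (a b : P) (x : B.X) : co δ a b x = co δ b a x := by
  rw [co, co, Z_symm]
  have : x.1 (.inl a) = .inl b ↔ x.1 (.inl b) = .inl a := by
    constructor <;> (intro h; rw [← h, x.inv])
  simp only [this]

lemma co_of_arc {a b : P} {x : B.X} (h : x.1 (.inl a) = .inl b) : co δ a b x = δ := by
  simp [co, Z, h]

lemma J_of_arc {a b : P} {x : B.X} (h : x.1 (.inl a) = .inl b) : J a b x = x := by
  simp only [J, h, swap_self]
  exact gact_one x

lemma Z_comm (a b c d : P) (hab : a ≠ b) (hac : a ≠ c) (had : a ≠ d) (hbc : b ≠ c) (hbd : b ≠ d)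
    (hcd : c ≠ d) (x : B.X) (h1 : Z a b x = false) (h2 : Z c d (J a b x) = false) :
    Z c d x = false := by
  have hinv := x.inv
  simp only [Z, J_apply a b hab x h1] at h1 h2 ⊢
  grind

lemma Z_comm' (a b c d : P) (hab : a ≠ b) (hac : a ≠ c) (had : a ≠ d) (hbc : b ≠ c) (hbd : b ≠ d)
    (hcd : c ≠ d) (x : B.X) (h1 : Z a b x = false) (h2 : Z c d (J a b x) = false) :
    Z a b (J c d x) = false := by
  have hinv := x.inv
  have h3 := Z_comm a b c d hab hac had hbc hbd hcd x h1 h2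
  simp only [Z, J_apply a b hab x h1, J_apply c d hcd x h3] at h1 h2 h3 ⊢
  rcases ha : x.1 (.inl a) with a' | a' <;> rcases hb : x.1 (.inl b) with b' | b' <;>
    rcases hc : x.1 (.inl c) with c' | c' <;> rcases hd : x.1 (.inl d) with d' | d' <;>
    simp only [ha, hb, hc, hd] at h1 h2 h3 ⊢ <;> grind (splits := 20)

lemma J_comm (a b c d : P) (hab : a ≠ b) (hac : a ≠ c) (had : a ≠ d) (hbc : b ≠ c) (hbd : b ≠ d)
    (hcd : c ≠ d) (x : B.X) (h1 : Z a b x = false) (h2 : Z c d (J a b x) = false) :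
    J c d (J a b x) = J a b (J c d x) := by
  have hinv := x.inv
  have h3 := Z_comm a b c d hab hac had hbc hbd hcd x h1 h2
  have h4 := Z_comm' a b c d hab hac had hbc hbd hcd x h1 h2
  apply X.val_injective
  ext1 w
  rw [J_apply c d hcd _ h2, J_apply a b hab _ h4]
  simp only [J_apply a b hab x h1, J_apply c d hcd x h3]
  exact F_comm x.1 x.inv x.fpf (.inl a) (.inl b) (.inl c) (.inl d) (by simpa using hab)
    (by simpa using hac) (by simpa using had) (by simpa using hbc) (by simpa using hbd)
    (by simpa using hcd) _ rfl w

lemma co_comm (a b c d : P) (hab : a ≠ b) (hac : a ≠ c) (had : a ≠ d) (hbc : b ≠ c) (hbd : b ≠ d)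
    (hcd : c ≠ d) (x : B.X) (h1 : Z a b x = false) (h2 : Z c d (J a b x) = false) :
    co δ c d (J a b x) * co δ a b x = co δ a b (J c d x) * co δ c d x := by
  have hinv := x.inv
  have h3 := Z_comm a b c d hab hac had hbc hbd hcd x h1 h2
  have h4 := Z_comm' a b c d hab hac had hbc hbd hcd x h1 h2
  simp only [co, h1, h2, h3, h4, J_apply a b hab x h1, J_apply c d hcd x h3]
  clear h1 h2 h3 h4
  simp only [Bool.false_eq_true, if_false, Sum.inl.injEq, hac.symm, had.symm, hbc.symm, hbd.symm,
    hac, had, hbc, hbd]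
  have i1 := hinv (.inl a)
  have i2 := hinv (.inl b)
  have i3 := hinv (.inl c)
  have i4 := hinv (.inl d)
  clear hinv
  by_cases k1 : x.1 (.inl a) = .inl b <;> by_cases k2 : x.1 (.inl c) = .inl d <;>
    by_cases k3 : x.1 (.inl a) = .inl c <;> by_cases k4 : x.1 (.inl a) = .inl d <;>
    by_cases k5 : x.1 (.inl b) = .inl c <;> by_cases k6 : x.1 (.inl b) = .inl d <;>
    grind (splits := 20)

section ops

variable (B)

/-- the operator on diagrams given by a map -/
noncomputable def opg (g : Perm P) : Module.End K (B.X →₀ K) :=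
  Finsupp.lmapDomain K K (gact g)

/-- the operator on diagrams given by a map -/
noncomputable def opm (g : Perm M) : Module.End K (B.X →₀ K) :=
  Finsupp.lmapDomain K K (mact g)

/-- the operator on diagrams given by `E a b` -/
noncomputable def opE (a b : P) : Module.End K (B.X →₀ K) :=
  Finsupp.linearCombination K (fun x => co δ a b x • Finsupp.single (J a b x) (1 : K))

variable {B}

lemma opg_single (g : Perm P) (x : B.X) (c : K) :
    opg B g (Finsupp.single x c) = Finsupp.single (gact g x) c := by
  simp [opg]

lemma opm_single (g : Perm M) (x : B.X) (c : K) :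
    opm B g (Finsupp.single x c) = Finsupp.single (mact g x) c := by
  simp [opm]

lemma opE_single (a b : P) (x : B.X) (c : K) :
    opE B δ a b (Finsupp.single x c) = (co δ a b x) • Finsupp.single (J a b x) c := by
  simp [opE, mul_comm]

lemma end_ext {f g : Module.End K (B.X →₀ K)}
    (h : ∀ x, f (Finsupp.single x 1) = g (Finsupp.single x 1)) : f = g := by
  apply Finsupp.lhom_ext'
  intro x
  ext
  simp [h]

lemma co_zero {a b : P} {x : B.X} (h : Z a b x = true) : co δ a b x = 0 := by simp [co, h]

variable (B) in
/-- the Brauer data on the span of the diagrams -/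
noncomputable def repData : BrData δ P (Module.End K (B.X →₀ K)) where
  r :=
    { toFun := opg B
      map_one' := end_ext fun x => by rw [opg_single, gact_one]; rfl
      map_mul' := fun g h => end_ext fun x => by
        rw [Module.End.mul_apply, opg_single, opg_single, opg_single, gact_mul] }
  E := opE B δ
  conj g a b hab := end_ext fun x => by
    have h1 := J_smul a b g 1 x
    have h2 := co_smul δ a b g 1 x
    rw [Module.End.mul_apply, Module.End.mul_apply, opE_single]
    change opg B g _ = opE B δ _ _ (opg B g _)
    rw [map_smul, opg_single, opg_single, opE_single, gact, gact, h1, h2]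
  swl a b hab := end_ext fun x => by
    change opg B _ (opE B δ _ _ _) = opE B δ _ _ _
    rw [opE_single, map_smul, opg_single]
    rcases hZ : Z a b x
    · rw [gact_swap_of_arc (J_left a b hab x hZ)]
    · rw [co_zero δ hZ]; simp
  swr a b hab := end_ext fun x => by
    change opE B δ _ _ (opg B _ _) = opE B δ _ _ _
    rw [opE_single, opg_single, opE_single]
    have h1 := J_smul b a (swap a b) 1 x
    have h2 := co_smul δ b a (swap a b) 1 x
    rw [swap_apply_left, swap_apply_right] at h1 h2
    rw [gact, h1, h2, co_symm δ b a]
    rcases hZ : Z a b x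
    · rw [← J_symm a b hab x hZ]
      change _ • Finsupp.single (gact _ _) _ = _
      rw [gact_swap_of_arc (J_left a b hab x hZ)]
    · rw [co_zero δ hZ]; simp
  sq a b hab := end_ext fun x => by
    change opE B δ _ _ (opE B δ _ _ _) = δ • (opE B δ _ _ _)
    rw [opE_single, map_smul, opE_single]
    rcases hZ : Z a b x
    · rw [J_of_arc (J_left a b hab x hZ), co_of_arc δ (J_left a b hab x hZ), smul_comm]
    · rw [co_zero δ hZ]; simp
  chain a b c hab hbc hac := end_ext fun x => by
    change opE B δ _ _ (opE B δ _ _ _) = opg B _ (opE B δ _ _ _)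
    rw [opE_single, map_smul, opE_single, map_smul, opg_single]
    rcases hZ : Z b c x
    · have h1 := J_left b c hbc x hZ
      set y := J b c x
      have hZ2 : Z b a y = false := by simp [Z, h1]
      have h3 : J b a y = gact (swap a c) y := by simp [J, h1]
      have h4 : co δ b a y = 1 := by simp [co, hZ2, h1, hac.symm]
      rw [co_symm δ a b y, h4, ← J_symm b a hab.symm y hZ2, h3, one_smul]
    · rw [co_zero δ hZ]; simp
  comm a b c d hab hac had hbc hbd hcd := end_ext fun x => by
    change opE B δ _ _ (opE B δ _ _ _) = opE B δ _ _ (opE B δ _ _ _)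
    rw [opE_single, map_smul, opE_single, opE_single, map_smul, opE_single, smul_smul, smul_smul,
      mul_comm (co δ c d x), mul_comm (co δ a b x)]
    by_cases h : Z a b x = false ∧ Z c d (J a b x) = false
    · rw [co_comm δ a b c d hab hac had hbc hbd hcd x h.1 h.2,
        J_comm a b c d hab hac had hbc hbd hcd x h.1 h.2]
    · have h1 : co δ c d (J a b x) * co δ a b x = 0 := by
        rcases h1 : Z a b x
        · rcases h2 : Z c d (J a b x)
          · exact absurd ⟨h1, h2⟩ h
          · rw [co_zero δ h2, zero_mul]
        · rw [co_zero δ h1, mul_zero]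
      have h2 : co δ a b (J c d x) * co δ c d x = 0 := by
        rcases h1 : Z c d x
        · rcases h2 : Z a b (J c d x)
          · exact absurd ⟨Z_comm c d a b hcd hac.symm hbc.symm had.symm hbd.symm hab x h1 h2,
              Z_comm' c d a b hcd hac.symm hbc.symm had.symm hbd.symm hab x h1 h2⟩ h
          · rw [co_zero δ h2, zero_mul]
        · rw [co_zero δ h1, mul_zero]
      rw [h1, h2, zero_smul, zero_smul]

lemma opg_opm (g : Perm P) (m : Perm M) : opg (K := K) B g * opm B m = opm B m * opg B g :=
  end_ext fun x => by
    rw [Module.End.mul_apply, Module.End.mul_apply, opg_single, opm_single, opm_single, opg_single,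
      gact_mact]

lemma opE_opm (a b : P) (m : Perm M) : opE B δ a b * opm B m = opm B m * opE B δ a b :=
  end_ext fun x => by
    have h1 := J_smul a b 1 m x
    have h2 := co_smul δ a b 1 m x
    rw [Perm.one_apply, Perm.one_apply] at h1 h2
    rw [Module.End.mul_apply, Module.End.mul_apply, opm_single, opE_single, opE_single, map_smul,
      opm_single, mact, h1, h2]
    rfl

end ops

end co

end Base

end Diagrams

/-! ### Part 7: the action of products on diagrams -/

section Action

open Equiv

set_option linter.unusedSectionVars false

namespace Base

variable {P M : Type} [DecidableEq P] [DecidableEq M] [Fintype P] [Fintype M] {B : Base P M}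
variable {K : Type*} [Field K] (δ : K)

/-- the diagram contains all arcs of the list -/
def HasArcs (l : List (P × P)) (x : B.X) : Prop := ∀ a b, (a, b) ∈ l → x.1 (.inl a) = .inl b

lemma HasArcs.flat {l : List (P × P)} {x : B.X} (h : HasArcs l x) {a : P} (ha : a ∈ flatP l) :
    ∃ b ∈ flatP l, x.1 (.inl a) = .inl b := by
  obtain ⟨b, hb | hb⟩ := mem_flatP.1 ha
  · exact ⟨b, mem_flatP.2 ⟨a, Or.inr hb⟩, h a b hb⟩
  · refine ⟨b, mem_flatP.2 ⟨a, Or.inl hb⟩, ?_⟩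
    rw [← h b a hb, x.inv]

lemma HasArcs.J {l : List (P × P)} {y : B.X} (h : HasArcs l y) {a b : P} (hab : a ≠ b)
    (ha : a ∉ flatP l) (hb : b ∉ flatP l) (hZ : Z a b y = false) :
    HasArcs ((a, b) :: l) (J a b y) := by
  intro a' b' h'
  rcases List.mem_cons.1 h' with h' | h'
  · cases h'
    exact J_left a b hab y hZ
  · have ha' : a' ∈ flatP l := mem_flatP.2 ⟨b', Or.inl h'⟩
    have hb' : b' ∈ flatP l := mem_flatP.2 ⟨a', Or.inr h'⟩
    have h1 := h a' b' h'
    rw [J_apply a b hab y hZ, if_neg, if_neg, if_neg, if_neg, h1]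
    · intro h2
      rw [h2, y.inv] at h1
      cases h1
      exact hb hb'
    · intro h2
      rw [h2, y.inv] at h1
      cases h1
      exact ha hb'
    · intro h2
      cases h2
      exact hb ha'
    · intro h2
      cases h2
      exact ha ha'

lemma prodE_single (l : List (P × P)) (hl : (flatP l).Nodup) (x : B.X) :
    (repData B δ).prodE l (Finsupp.single x 1) = 0 ∨ ∃ c ≤ l.length, ∃ x' : B.X, HasArcs l x' ∧
      (repData B δ).prodE l (Finsupp.single x 1) = δ ^ c • Finsupp.single x' (1 : K) ∧
      (c = l.length → x' = x) := by
  induction l with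
  | nil =>
    right
    refine ⟨0, le_rfl, x, ?_, ?_, fun _ => rfl⟩
    · intro a b h
      simp at h
    · simp [BrData.prodE]
  | cons p l ih =>
    obtain ⟨a, b⟩ := p
    simp only [flatP, List.nodup_cons, List.mem_cons, not_or] at hl
    obtain ⟨⟨hab, ha⟩, hb, hl⟩ := hl
    have e0 : (repData B δ).prodE ((a, b) :: l) (Finsupp.single x 1) =
      opE B δ a b ((repData B δ).prodE l (Finsupp.single x 1)) := rfl
    rw [e0]
    rcases ih hl with h | ⟨c, hc, y, hy, h, hcy⟩
    · left
      rw [h, map_zero]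
    · rw [h, map_smul, opE_single]
      rcases hZ : Z a b y
      · right
        have hJ := hy.J hab ha hb hZ
        by_cases harc : y.1 (.inl a) = .inl b
        · refine ⟨c + 1, by simpa using hc, J a b y, hJ, ?_, ?_⟩
          · rw [co_of_arc δ harc, smul_smul, pow_succ]
          · intro h'
            rw [J_of_arc harc]
            exact hcy (by simpa using h')
        · refine ⟨c, by simp; omega, J a b y, hJ, ?_, ?_⟩
          · simp [co, hZ, harc]
          · intro h'
            simp at h'
            omega
      · left
        rw [co_zero δ hZ]
        simp

lemma prodE_single_of_arcs (l : List (P × P)) (x : B.X) (hx : HasArcs l x) :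
    (repData B δ).prodE l (Finsupp.single x 1) = δ ^ l.length • Finsupp.single x (1 : K) := by
  induction l with
  | nil => simp [BrData.prodE]
  | cons p l ih =>
    obtain ⟨a, b⟩ := p
    have e0 : (repData B δ).prodE ((a, b) :: l) (Finsupp.single x 1) =
      opE B δ a b ((repData B δ).prodE l (Finsupp.single x 1)) := rfl
    have harc := hx a b (by simp)
    rw [e0, ih (fun a b h => hx a b (by simp [h])), map_smul, opE_single, co_of_arc δ harc,
      J_of_arc harc, smul_smul, List.length_cons, pow_succ]

lemma hasArcs_bound {l : List (P × P)} (hl : (flatP l).Nodup) {x : B.X} (hx : HasArcs l x) :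
    Fintype.card M + 2 * l.length ≤ Fintype.card P := by
  choose f hf using x.bdry
  have hinj : Function.Injective f := by
    intro s t hst
    have : x.1 (.inr s) = x.1 (.inr t) := by rw [hf, hf, hst]
    simpa using x.1.injective this
  have hdis : Disjoint (Finset.univ.image f) (flatP l).toFinset := by
    rw [Finset.disjoint_left]
    intro a ha ha'
    obtain ⟨t, -, rfl⟩ := Finset.mem_image.1 ha
    obtain ⟨b, -, hb⟩ := hx.flat (List.mem_toFinset.1 ha')
    rw [← hf, x.inv] at hb
    simp at hb
  have := Finset.card_le_univ (Finset.univ.image f ∪ (flatP l).toFinset)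
  rw [Finset.card_union_of_disjoint hdis, Finset.card_image_of_injective _ hinj,
    List.toFinset_card_of_nodup hl, length_flatP, Finset.card_univ] at this
  exact this

lemma prodE_eq_zero (l : List (P × P)) (hl : (flatP l).Nodup)
    (h : Fintype.card P < Fintype.card M + 2 * l.length) : (repData B δ).prodE l = 0 := by
  apply end_ext
  intro x
  rcases prodE_single δ l hl x with h' | ⟨c, -, y, hy, -⟩
  · exact h'
  · have := hasArcs_bound hl hy
    omega

lemma base_arcs : HasArcs B.l B.base := B.arc

lemma exists_mact {x : B.X} (hx : HasArcs B.l x) : ∃ m : Perm M, x = mact m B.base := by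
  have h1 : ∀ t : M, ∃ s : M, x.1 (.inr t) = B.x0 (.inr s) := by
    intro t
    obtain ⟨a, ha⟩ := x.bdry t
    have : a ∉ flatP B.l := by
      intro h
      obtain ⟨b, -, hb⟩ := hx.flat h
      rw [← ha, x.inv] at hb
      simp at hb
    obtain ⟨s, hs⟩ := B.compl a this
    exact ⟨s, by rw [ha, ← hs, B.inv]⟩
  choose f hf using h1
  have hinj : Function.Injective f := by
    intro s t hst
    have : x.1 (.inr s) = x.1 (.inr t) := by rw [hf, hf, hst]
    simpa using x.1.injective this
  let φ : Perm M := Equiv.ofBijective f (Finite.injective_iff_bijective.1 hinj)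
  refine ⟨φ⁻¹, X.val_injective (Equiv.ext ?_)⟩
  have e1 : ∀ t, x.1 (.inr t) = (mact φ⁻¹ B.base).1 (.inr t) := by
    intro t
    have e2 : t = φ⁻¹ (φ t) := by simp
    have e3 := mact_apply' φ⁻¹ B.base (φ t)
    rw [← e2] at e3
    rw [e3, hf]
    obtain ⟨a, ha⟩ := B.bdry (f t)
    change _ = Sum.map id _ (B.x0 (.inr (f t)))
    rw [ha]
    rfl
  rintro (a | t)
  · by_cases ha : a ∈ flatP B.l
    · have hm : HasArcs B.l (mact φ⁻¹ B.base) := by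
        intro a b hab
        have := base_arcs a b hab
        rw [mact_apply, this]
        rfl
      obtain ⟨b, hb | hb⟩ := mem_flatP.1 ha
      · rw [hx a b hb, hm a b hb]
      · have h1 := hx b a hb
        have h2 := hm b a hb
        nth_rewrite 1 [← h1]
        rw [← h2, x.inv, X.inv]
    · obtain ⟨s, hs⟩ := B.compl a ha
      have h2 : (mact φ⁻¹ B.base).1 (.inl a) = .inr (φ⁻¹ s) := by
        rw [mact_apply]
        change Sum.map _ _ (B.x0 _) = _
        rw [hs]
        rfl
      have h3 := e1 (φ⁻¹ s)
      have h4 : (mact φ⁻¹ B.base).1 (.inr (φ⁻¹ s)) = .inl a := by rw [← h2, X.inv]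
      rw [h4] at h3
      rw [h2, ← h3, x.inv]
  · exact e1 t

variable (B) in
/-- entries of the Gram matrix -/
noncomputable def ent (u : B.X) : K := (repData B δ).prodE B.l (Finsupp.single u 1) B.base

lemma ent_base : ent B δ B.base = δ ^ B.l.length := by
  rw [ent, prodE_single_of_arcs δ _ _ base_arcs]
  simp

lemma ent_of_ne {u : B.X} (hu : u ≠ B.base) :
    ent B δ u = 0 ∨ ∃ c < B.l.length, ent B δ u = δ ^ c := by
  rcases prodE_single δ B.l B.nodup u with h | ⟨c, hc, y, hy, h, hcy⟩
  · left
    rw [ent, h]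
    rfl
  · by_cases hyb : y = B.base
    · right
      refine ⟨c, ?_, ?_⟩
      · rcases hc.lt_or_eq with h1 | h1
        · exact h1
        · exact absurd ((hcy h1).symm.trans hyb) hu
      · rw [ent, h, hyb]
        simp
    · left
      rw [ent, h]
      simp [hyb]

lemma prodE_support {u w : B.X} (h : (repData B δ).prodE B.l (Finsupp.single u 1) w ≠ 0) :
    ∃ m : Perm M, w = mact m B.base := by
  rcases prodE_single δ B.l B.nodup u with h1 | ⟨c, hc, y, hy, h1, hcy⟩
  · rw [h1] at h
    exact absurd rfl h
  · have : w = y := by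
      by_contra h'
      rw [h1] at h
      simp [Ne.symm h'] at h
    rw [this]
    exact exists_mact hy

end Base

end Action

/-! ### Part 8: the commutant of a free action -/

section Commutant

open Equiv Finsupp

set_option linter.unusedSectionVars false
set_option linter.unusedVariables false

variable {L X K : Type} [Group L] [Fintype L] [DecidableEq L] [Fintype X] [DecidableEq X]
  [MulAction L X] [Field K]

lemma fend_ext {f g : Module.End K (X →₀ K)}
    (h : ∀ x, f (Finsupp.single x 1) = g (Finsupp.single x 1)) : f = g := by
  apply Finsupp.lhom_ext'
  intro x
  ext
  simp [h]

variable (L X K) in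
/-- the commutant of the action of a group on the span of a set -/
noncomputable def Comm : Subalgebra K (Module.End K (X →₀ K)) :=
  Subalgebra.centralizer K
    (Set.range fun m : L => (Finsupp.lmapDomain K K (fun x : X => m • x) : Module.End K (X →₀ K)))

noncomputable instance : Ring (Comm L X K) :=
  Subalgebra.toRing (R := K) (A := Module.End K (X →₀ K)) (Comm L X K)

lemma mem_Comm {t : Module.End K (X →₀ K)} :
    t ∈ Comm L X K ↔ ∀ m : L, Finsupp.lmapDomain K K (fun x : X => m • x) * t =
      t * Finsupp.lmapDomain K K (fun x : X => m • x) := by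
  rw [Comm, Subalgebra.mem_centralizer_iff]
  simp

lemma Comm_apply (t : Comm L X K) (m : L) (y : X) :
    t.1 (single (m • y) 1) = Finsupp.mapDomain (fun x : X => m • x) (t.1 (single y 1)) := by
  have := mem_Comm.1 t.2 m
  have h := DFunLike.congr_fun this (single y 1)
  simpa using h.symm

lemma Comm_entry (t : Comm L X K) (m : L) (x y : X) :
    t.1 (single (m • y) 1) (m • x) = t.1 (single y 1) x := by
  rw [Comm_apply]
  exact Finsupp.mapDomain_apply (MulAction.injective m) _ _

/-- The operators of the commutant are determined by representatives. -/
lemma Comm_ext {s t : Comm L X K} (h : ∀ z : X, ∃ m : L, s.1 (single (m • z) 1) =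
    t.1 (single (m • z) 1)) : s = t := by
  apply Subtype.ext
  apply fend_ext
  intro z
  obtain ⟨m, hm⟩ := h z
  rw [Comm_apply, Comm_apply] at hm
  exact Finsupp.mapDomain_injective (MulAction.injective m) hm

variable (L K) in
/-- basic element of the commutant, as an operator -/
noncomputable def uu (x y : X) : Module.End K (X →₀ K) :=
  ∑ m : L, (Finsupp.lsingle (m • x)).comp (Finsupp.lapply (m • y))

lemma uu_apply (x y : X) (f : X →₀ K) : uu L K x y f = ∑ m : L, single (m • x) (f (m • y)) := by
  simp [uu, LinearMap.sum_apply]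

lemma uu_mem (x y : X) : uu L K x y ∈ Comm L X K := by
  rw [mem_Comm]
  intro m
  apply LinearMap.ext
  intro f
  rw [Module.End.mul_apply, Module.End.mul_apply, uu_apply, uu_apply, map_sum]
  apply Fintype.sum_equiv (Equiv.mulLeft m)
  intro k
  simp only [lmapDomain_apply, mapDomain_single, coe_mulLeft, mul_smul]
  rw [Finsupp.mapDomain_apply (MulAction.injective m)]

variable (L K) in
/-- basic element of the commutant -/
noncomputable def ub (x y : X) : Comm L X K := ⟨uu L K x y, uu_mem x y⟩

lemma ub_smul (m : L) (x y : X) : ub L K (m • x) (m • y) = ub L K x y := by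
  apply Subtype.ext
  apply LinearMap.ext
  intro f
  change uu L K _ _ f = uu L K _ _ f
  rw [uu_apply, uu_apply]
  apply Fintype.sum_equiv (Equiv.mulRight m)
  intro k
  simp [mul_smul]

lemma ub_off (x y z : X) (h : ∀ m : L, m • y ≠ z) : (ub L K x y).1 (single z 1) = 0 := by
  change uu L K _ _ _ = 0
  rw [uu_apply]
  apply Finset.sum_eq_zero
  intro m _
  rw [single_eq_of_ne (h m), single_zero]

variable (L X) in
/-- the action is free -/
abbrev FreeAct : Prop := ∀ (m : L) (x : X), m • x = x → m = 1

lemma ub_single (hfree : FreeAct L X) (x y : X) (c : K) : (ub L K x y).1 (single y c) = single x c := by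
  change uu L K _ _ _ = _
  rw [uu_apply, Finset.sum_eq_single (1 : L)]
  · simp
  · intro m _ hm
    rw [single_eq_of_ne, single_zero]
    exact fun h => hm (hfree m y h)
  · simp

lemma ub_mul (hfree : FreeAct L X) (x y z : X) : ub L K x y * ub L K y z = ub L K x z := by
  apply Comm_ext
  intro w
  by_cases h : ∃ m : L, m • z = w
  · obtain ⟨m, rfl⟩ := h
    refine ⟨m⁻¹, ?_⟩
    rw [inv_smul_smul]
    change (ub L K x y).1 ((ub L K y z).1 _) = _
    rw [ub_single hfree, ub_single hfree, ub_single hfree]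
  · push Not at h
    refine ⟨1, ?_⟩
    rw [one_smul]
    change (ub L K x y).1 ((ub L K y z).1 _) = _
    rw [ub_off y z w h, ub_off x z w h, map_zero]

variable (L X) in
/-- the set of orbits -/
abbrev Orb := MulAction.orbitRel.Quotient L X

noncomputable instance : Fintype (Orb L X) := Fintype.ofFinite _

lemma exists_rep (z : X) : ∃ (m : L) (y : Orb L X), m • z = y.out := by
  have : MulAction.orbitRel L X (Quotient.out (Quotient.mk'' z : Orb L X)) z :=
    Quotient.mk_out (s := MulAction.orbitRel L X) z
  rw [MulAction.orbitRel_apply] at this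
  obtain ⟨m, hm⟩ := this
  exact ⟨m, _, hm⟩

lemma rep_eq (y y' : Orb L X) (m : L) (h : m • y.out = y'.out) : y = y' := by
  rw [← Quotient.out_eq' y, ← Quotient.out_eq' y', ← h]
  exact (Quotient.sound' (s₁ := MulAction.orbitRel L X) ⟨m, rfl⟩).symm

lemma ub_rep (hfree : FreeAct L X) [DecidableEq (Orb L X)] (x : X) (y y' : Orb L X) :
    (ub L K x y.out).1 (single y'.out 1) = if y = y' then single x 1 else 0 := by
  split_ifs with h
  · subst h
    exact ub_single hfree _ _ _
  · exact ub_off _ _ _ fun m hm => h (rep_eq _ _ m hm)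

lemma ub_sum (hfree : FreeAct L X) : ∑ y : Orb L X, ub L K y.out y.out = 1 := by
  classical
  apply Comm_ext
  intro z
  obtain ⟨m, y, h⟩ := exists_rep (L := L) z
  refine ⟨m, ?_⟩
  rw [h, AddSubmonoidClass.coe_finsetSum, LinearMap.sum_apply]
  simp_rw [ub_rep hfree]
  simp

lemma Comm_eq_sum (hfree : FreeAct L X) (t : Comm L X K) :
    t = ∑ x : X, ∑ y : Orb L X, t.1 (single y.out 1) x • ub L K x y.out := by
  classical
  apply Comm_ext
  intro z
  obtain ⟨m, y, h⟩ := exists_rep (L := L) z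
  refine ⟨m, ?_⟩
  rw [h, AddSubmonoidClass.coe_finsetSum, LinearMap.sum_apply]
  simp_rw [AddSubmonoidClass.coe_finsetSum, LinearMap.sum_apply]
  simp only [SetLike.val_smul, LinearMap.smul_apply, ub_rep hfree]
  simp

instance : Module.Finite K (Comm L X K) :=
  Module.Finite.of_injective (Comm L X K).val.toLinearMap Subtype.val_injective

variable (L X K) in
/-- the entries of an element of the commutant -/
noncomputable def Comm_ev : Comm L X K →ₗ[K] (X × Orb L X → K) where
  toFun t p := t.1 (single p.2.out 1) p.1
  map_add' s t := by
    funext p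
    change (s.1 + t.1) _ _ = _
    simp
  map_smul' c t := by
    funext p
    change (c • t.1) _ _ = _
    simp

lemma Comm_finrank (hfree : FreeAct L X) :
    Fintype.card (X × Orb L X) ≤ Module.finrank K (Comm L X K) := by
  classical
  rw [← Module.finrank_fintype_fun_eq_card K]
  apply LinearMap.finrank_le_finrank_of_surjective (f := Comm_ev L X K)
  intro g
  refine ⟨∑ i : X × Orb L X, g i • ub L K i.1 i.2.out, ?_⟩
  funext p
  obtain ⟨x, y⟩ := p
  change (∑ i : X × Orb L X, g i • ub L K i.1 i.2.out).1 (single y.out 1) x = _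
  rw [AddSubmonoidClass.coe_finsetSum, LinearMap.sum_apply]
  simp only [SetLike.val_smul, LinearMap.smul_apply, ub_rep hfree, Fintype.sum_prod_type]
  simp [Finsupp.finsetSum_apply, Finsupp.single_apply]

end Commutant

/-! ### Part 9: the corner -/

section Corner

open Equiv Finsupp

set_option linter.unusedSectionVars false
set_option linter.unusedVariables false

variable {L X K : Type} [Group L] [Fintype L] [DecidableEq L] [Fintype X] [DecidableEq X]
  [MulAction L X] [Field K]

/-- the multiplicative map from the group to the corner -/
noncomputable def cornerMul (hfree : FreeAct L X) (b : X) : L →ₙ* Comm L X K where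
  toFun m := ub L K (m⁻¹ • b) b
  map_mul' m m' := by
    have h : ub L K (m⁻¹ • b) b = ub L K (m'⁻¹ • m⁻¹ • b) (m'⁻¹ • b) := (ub_smul _ _ _).symm
    rw [h, ub_mul hfree, smul_smul, mul_inv_rev]

/-- the embedding of the group algebra -/
noncomputable def cornerJ (hfree : FreeAct L X) (b : X) : MonoidAlgebra K L →ₙₐ[K] Comm L X K :=
  MonoidAlgebra.liftMagma K (cornerMul hfree b)

lemma cornerJ_single (hfree : FreeAct L X) (b : X) (m : L) (c : K) :
    cornerJ hfree b (MonoidAlgebra.single m c) = c • ub L K (m⁻¹ • b) b := by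
  simp [cornerJ, cornerMul]

lemma cornerJ_entry (hfree : FreeAct L X) (b : X) (f : MonoidAlgebra K L) (m : L) :
    (cornerJ hfree b f).1 (single b 1) (m⁻¹ • b) = f.coeff m := by
  induction f using MonoidAlgebra.induction_linear with
  | zero => simp
  | add f g hf hg => 
    rw [map_add]
    change ((cornerJ hfree b f).1 + (cornerJ hfree b g).1) _ _ = _
    rw [LinearMap.add_apply, Finsupp.add_apply, hf, hg]
    simp
  | single m' c =>
    rw [cornerJ_single]
    change (c • (ub L K _ _).1) _ _ = _
    rw [LinearMap.smul_apply, ub_single hfree]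
    have : m'⁻¹ • b = m⁻¹ • b ↔ m' = m := by
      constructor
      · intro h
        have := hfree (m * m'⁻¹) b (by rw [mul_smul, h, smul_inv_smul])
        exact (mul_inv_eq_one.1 this).symm
      · rintro rfl; rfl
    simp [Finsupp.single_apply, this]

lemma cornerJ_one (hfree : FreeAct L X) (b : X) :
    cornerJ (K := K) hfree b 1 = ub L K b b := by
  rw [MonoidAlgebra.one_def, cornerJ_single]
  simp

lemma cornerJ_inj (hfree : FreeAct L X) (b : X) :
    Function.Injective (cornerJ (K := K) hfree b) := by
  intro f g h
  apply MonoidAlgebra.ext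
  apply Finsupp.ext
  intro m
  rw [← cornerJ_entry hfree b, h, cornerJ_entry]

lemma supp_of_mul {b : X} {t : Comm L X K} (ht : ub L K b b * t = t) (x : X)
    (hx : ∀ m : L, m • b ≠ x) : t.1 (single b 1) x = 0 := by
  rw [← ht]
  change uu L K b b (t.1 _) x = 0
  rw [uu_apply, Finsupp.finsetSum_apply]
  apply Finset.sum_eq_zero
  intro m _
  exact Finsupp.single_eq_of_ne (hx m).symm

lemma off_of_mul {b : X} {t : Comm L X K} (ht : t * ub L K b b = t) (x : X)
    (hx : ∀ m : L, m • b ≠ x) : t.1 (single x 1) = 0 := by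
  rw [← ht]
  change t.1 ((ub L K b b).1 _) = 0
  rw [ub_off _ _ _ hx, map_zero]

lemma cornerJ_surj (hfree : FreeAct L X) (b : X) (a : Comm L X K)
    (ha : ub L K b b * a * ub L K b b = a) : ∃ c, cornerJ hfree b c = a := by
  refine ⟨∑ m : L, MonoidAlgebra.single m (a.1 (single b 1) (m⁻¹ • b)), ?_⟩
  set f := ∑ m : L, MonoidAlgebra.single m (a.1 (single b 1) (m⁻¹ • b)) with hf
  have hj : cornerJ (K := K) hfree b f * ub L K b b = cornerJ hfree b f := by
    rw [← cornerJ_one hfree, ← map_mul, mul_one]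
  have hj' : ub L K b b * cornerJ (K := K) hfree b f = cornerJ hfree b f := by
    rw [← cornerJ_one hfree, ← map_mul, one_mul]
  have h1 : ub L K b b * a = a := by
    rw [← ha, ← mul_assoc, ← mul_assoc, ub_mul hfree]
  have h2 : a * ub L K b b = a := by
    rw [← ha, mul_assoc, ub_mul hfree]
  apply Comm_ext
  intro z
  by_cases hz : ∃ m : L, m • b = z
  · obtain ⟨m, rfl⟩ := hz
    refine ⟨m⁻¹, ?_⟩
    rw [inv_smul_smul]
    ext x
    by_cases hx : ∃ m : L, m • b = x
    · obtain ⟨m', rfl⟩ := hx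
      rw [← inv_inv m', cornerJ_entry, hf]
      simp [MonoidAlgebra.coeff_sum, Finsupp.single_apply]
    · push Not at hx
      rw [supp_of_mul hj' x hx, supp_of_mul h1 x hx]
  · push Not at hz
    refine ⟨1, ?_⟩
    rw [one_smul, off_of_mul hj z hz, off_of_mul h2 z hz]

lemma corner_sum (hfree : FreeAct L X) (b : X) :
    (∑ y : Orb L X, ub L K y.out b * cornerJ hfree b 1 * ub L K b y.out) = 1 := by
  rw [← ub_sum hfree]
  apply Finset.sum_congr rfl
  intro y _
  rw [cornerJ_one, ub_mul hfree, ub_mul hfree]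

/-- the commutant of a free action is Morita equivalent to the group algebra -/
noncomputable def commCorner (hfree : FreeAct L X) (b : X) :
    FullCorner (Comm L X K) (MonoidAlgebra K L) where
  j :=
    { toFun := cornerJ hfree b
      map_zero' := map_zero (cornerJ hfree b)
      map_add' := map_add (cornerJ hfree b) }
  j_mul x y := map_mul (cornerJ hfree b) x y
  j_inj := cornerJ_inj hfree b
  j_surj a ha := cornerJ_surj hfree b a (by rw [← cornerJ_one hfree]; exact ha)
  κ := Orb L X
  fin := inferInstance
  a y := ub L K y.out b
  b y := ub L K b y.out
  sum_eq := corner_sum hfree b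

end Corner

/-! ### Part 10: reference diagrams and representations -/

section Reference

open Equiv

lemma flatP_perm {P : Type*} (l : List (P × P)) :
    (flatP l).Perm (l.map Prod.fst ++ l.map Prod.snd) := by
  induction l with
  | nil => exact List.Perm.refl _
  | cons p l ih =>
    simp only [flatP, List.map_cons, List.cons_append, List.perm_cons]
    exact (ih.cons p.2).trans List.perm_middle.symm

/-- underlying involution of the reference diagram -/
def refFun (N i : ℕ) (h : 2 * i ≤ N) : Fin N ⊕ Fin (N - 2 * i) → Fin N ⊕ Fin (N - 2 * i)
  | .inl a => if h1 : (a : ℕ) < i then .inl ⟨a + i, by omega⟩ else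
      if h2 : (a : ℕ) < 2 * i then .inl ⟨a - i, by omega⟩ else .inr ⟨a - 2 * i, by omega⟩
  | .inr t => .inl ⟨t + 2 * i, by omega⟩

lemma refFun_inv (N i : ℕ) (h : 2 * i ≤ N) : Function.Involutive (refFun N i h) := by
  rintro (a | t)
  · by_cases h1 : (a : ℕ) < i
    · simp only [refFun, h1]
      simp
      omega
    · by_cases h2 : (a : ℕ) < 2 * i
      · simp only [refFun, h1, h2]
        simp
        rw [dif_pos (by omega)]
        congr 1
        ext
        simp; omega
      · simp only [refFun, h1, h2]
        simp
        ext
        simp; omega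
  · simp only [refFun]
    rw [dif_neg (by simp; omega), dif_neg (by simp)]
    simp

/-- the reference diagram with `i` arcs -/
def refBase (N i : ℕ) (h : 2 * i ≤ N) : Base (Fin N) (Fin (N - 2 * i)) where
  x0 := (refFun_inv N i h).toPerm
  l := List.ofFn fun j : Fin i => (⟨j, by omega⟩, ⟨j + i, by omega⟩)
  inv := refFun_inv N i h
  fpf := by
    rintro (a | t)
    · rw [Function.Involutive.coe_toPerm]
      by_cases h1 : (a : ℕ) < i
      · simp only [refFun, h1]
        simp [Fin.ext_iff]; omega
      · by_cases h2 : (a : ℕ) < 2 * i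
        · simp only [refFun, h1, h2]
          simp [Fin.ext_iff]; omega
        · simp [refFun, h1, h2]
    · rw [Function.Involutive.coe_toPerm]
      simp [refFun]
  bdry t := ⟨_, rfl⟩
  arc := by
    intro a b hab
    obtain ⟨j, hj⟩ := (List.mem_ofFn' _ _).1 hab
    cases hj
    rw [Function.Involutive.coe_toPerm]
    simp [refFun]
  nodup := by
    rw [(flatP_perm _).nodup_iff, List.nodup_append]
    simp only [List.map_ofFn, List.nodup_ofFn]
    refine ⟨?_, ?_, ?_⟩
    · intro a b hab
      simpa [Fin.ext_iff] using hab
    · intro a b hab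
      simpa [Fin.ext_iff] using hab
    · intro a ha b hb
      obtain ⟨j, hj⟩ := (List.mem_ofFn' _ _).1 ha
      obtain ⟨j', hj'⟩ := (List.mem_ofFn' _ _).1 hb
      rw [← hj, ← hj']
      simp [Fin.ext_iff]; omega
  compl := by
    intro a ha
    have h2 : ¬ (a : ℕ) < 2 * i := by
      intro h2
      apply ha
      rw [mem_flatP]
      by_cases h1 : (a : ℕ) < i
      · exact ⟨⟨a + i, by omega⟩, Or.inl ((List.mem_ofFn' _ _).2 ⟨⟨a, h1⟩, rfl⟩)⟩
      · refine ⟨⟨a - i, by omega⟩, Or.inr ((List.mem_ofFn' _ _).2 ⟨⟨a - i, by omega⟩, ?_⟩)⟩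
        ext <;> simp; omega
    refine ⟨⟨a - 2 * i, by omega⟩, ?_⟩
    rw [Function.Involutive.coe_toPerm]
    have h1 : ¬ (a : ℕ) < i := by omega
    simp [refFun, h1, h2]

lemma refBase_length (N i : ℕ) (h : 2 * i ≤ N) : (refBase N i h).l.length = i := by
  simp [refBase]

end Reference

section Lift

open Equiv

variable {K : Type*} [Field K] (δ : K) (n : ℕ) {A : Type*} [Ring A] [Algebra K A]

theorem exists_lift (D : BrData δ (Fin (n + 2)) A) :
    ∃ ρ : BrauerAlgebra (n + 1) (typeA (n + 1)) K δ →ₐ[K] A,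
      (∀ i : Fin (n + 1), ρ (genR δ n i) = D.r (swap i.castSucc i.succ)) ∧
      (∀ i : Fin (n + 1), ρ (genE δ n i) = D.E i.castSucc i.succ) := by
  let F : FreeAlgebra K (Fin (n + 1) ⊕ Fin (n + 1)) →ₐ[K] A :=
    FreeAlgebra.lift K (Sum.elim (fun i => D.r (swap i.castSucc i.succ))
      (fun i => D.E i.castSucc i.succ))
  have FR : ∀ i, F (FreeAlgebra.ι K (.inl i)) = D.r (swap i.castSucc i.succ) := fun i => by simp [F]
  have FE : ∀ i, F (FreeAlgebra.ι K (.inr i)) = D.E i.castSucc i.succ := fun i => by simp [F]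
  have hne : ∀ i : Fin (n + 1), i.castSucc ≠ i.succ := fun i => by simp [Fin.ext_iff]
  have hnadj : ∀ {i j : Fin (n + 1)}, i ≠ j → ¬ (typeA (n + 1)).Adj i j →
      i.castSucc ≠ j.castSucc ∧ i.castSucc ≠ j.succ ∧ i.succ ≠ j.castSucc ∧ i.succ ≠ j.succ := by
    intro i j h1 h2
    rw [typeA_adj] at h2
    rw [Ne, Fin.ext_iff] at h1
    simp only [Ne, Fin.ext_iff, Fin.val_castSucc, Fin.val_succ]
    omega
  have hadj : ∀ {i j : Fin (n + 1)}, (typeA (n + 1)).Adj i j → ∃ a b c : Fin (n + 2),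
      a ≠ b ∧ b ≠ c ∧ a ≠ c ∧ swap i.castSucc i.succ = swap a b ∧
      swap j.castSucc j.succ = swap b c ∧ D.E i.castSucc i.succ = D.E a b ∧
      D.E j.castSucc j.succ = D.E b c := by
    intro i j h
    rw [typeA_adj] at h
    rcases h with h | h
    · have e : i.succ = j.castSucc := by ext; simpa using h
      refine ⟨i.castSucc, i.succ, j.succ, hne i, ?_, ?_, rfl, by rw [e], rfl, by rw [e]⟩
      · rw [e]; exact hne j
      · simp [Fin.ext_iff]; omega
    · have e : j.succ = i.castSucc := by ext; simpa using h
      refine ⟨i.succ, i.castSucc, j.castSucc, (hne i).symm, ?_, ?_, swap_comm _ _, ?_,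
        D.symm _ _ (hne i), ?_⟩
      · rw [← e]; exact (hne j).symm
      · simp [Fin.ext_iff]; omega
      · rw [← e, swap_comm]
      · rw [← e, D.symm _ _ (hne j)]
  have hbr : ∀ a b c : Fin (n + 2), a ≠ b → b ≠ c → a ≠ c →
      swap a b * swap b c * swap a b = swap a c := by
    intro a b c hab hbc hac
    rw [Equiv.mul_swap_eq_swap_mul (swap a b) b c, mul_assoc, swap_mul_self, mul_one, swap_apply_right,
      swap_apply_of_ne_of_ne hac.symm hbc.symm]
  have hbr' : ∀ a b c : Fin (n + 2), a ≠ b → b ≠ c → a ≠ c →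
      swap b c * swap a b * swap b c = swap a c := by
    intro a b c hab hbc hac
    rw [Equiv.mul_swap_eq_swap_mul (swap b c) a b, mul_assoc, swap_mul_self, mul_one, swap_apply_left,
      swap_apply_of_ne_of_ne hab hac]
  have hF : ∀ ⦃x y⦄, BrauerRel (n + 1) (typeA (n + 1)) K δ x y → F x = F y := by
    intro x y h
    induction h with
    | rsq i => rw [map_mul, FR, ← map_mul, swap_mul_self, map_one, map_one]
    | re i => rw [map_mul, FR, FE, D.swl _ _ (hne i)]
    | er i => rw [map_mul, FR, FE, D.swr _ _ (hne i)]
    | esq i => rw [map_mul, FE, D.sq _ _ (hne i), map_smul, FE]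
    | rr i j h1 h2 =>
      obtain ⟨k1, k2, k3, k4⟩ := hnadj h1 h2
      rw [map_mul, map_mul, FR, FR, ← map_mul, ← map_mul, Equiv.mul_swap_eq_swap_mul,
        swap_apply_of_ne_of_ne k1.symm k3.symm, swap_apply_of_ne_of_ne k2.symm k4.symm]
    | erc i j h1 h2 =>
      obtain ⟨k1, k2, k3, k4⟩ := hnadj h1 h2
      rw [map_mul, map_mul, FR, FE, D.conj _ _ _ (hne i), swap_apply_of_ne_of_ne k1 k2,
        swap_apply_of_ne_of_ne k3 k4]
    | ee i j h1 h2 =>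
      obtain ⟨k1, k2, k3, k4⟩ := hnadj h1 h2
      rw [map_mul, map_mul, FE, FE, D.comm _ _ _ _ (hne i) k1 k2 k3 k4 (hne j)]
    | braid i j h =>
      obtain ⟨a, b, c, hab, hbc, hac, e1, e2, e3, e4⟩ := hadj h
      simp only [map_mul, FR, e1, e2]
      rw [← map_mul, ← map_mul, ← map_mul, ← map_mul, hbr a b c hab hbc hac, hbr' a b c hab hbc hac]
    | rre i j h =>
      obtain ⟨a, b, c, hab, hbc, hac, e1, e2, e3, e4⟩ := hadj h
      simp only [map_mul, FR, FE, e1, e2, e3, e4]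
      rw [D.chain a b c hab hbc hac, ← hbr' a b c hab hbc hac, map_mul, mul_assoc _ (D.r (swap b c)) (D.E b c),
        D.swl _ _ hbc, map_mul]
    | rer i j h =>
      obtain ⟨a, b, c, hab, hbc, hac, e1, e2, e3, e4⟩ := hadj h
      simp only [map_mul, FR, FE, e1, e2, e3, e4]
      rw [D.conj _ _ _ hbc, D.conj _ _ _ hab, mul_assoc, mul_assoc, ← map_mul, ← map_mul,
        swap_mul_self, swap_mul_self, swap_apply_right, swap_apply_of_ne_of_ne hac.symm hbc.symm,
        swap_apply_left, swap_apply_of_ne_of_ne hab hac]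
  refine ⟨RingQuot.liftAlgHom K ⟨F, hF⟩, ?_, ?_⟩
  · intro i
    rw [← FR]
    simp [genR]
  · intro i
    rw [← FE]
    simp [genE]

end Lift

/-! ### Part 11: the universal Brauer data -/

section Universal

open Equiv

variable {K : Type} [Field K] (δ : K) (n : ℕ)

/-- The Brauer data is universal. -/
structure IsUniv (B : Type) [Ring B] [Algebra K B] (N : ℕ) (D0 : BrData δ (Fin N) B) : Prop where
  gen : ∀ S : Submodule K B, 1 ∈ S → (∀ g, ∀ x ∈ S, D0.r g * x ∈ S) →
      (∀ a b, a ≠ b → ∀ x ∈ S, D0.E a b * x ∈ S) → S = ⊤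
  lift : ∀ (A : Type) [Ring A] [Algebra K A] (D : BrData δ (Fin N) A),
    ∃ ρ : B →ₐ[K] A, (∀ g, ρ (D0.r g) = D.r g) ∧ ∀ a b, a ≠ b → ρ (D0.E a b) = D.E a b

theorem exists_univ : ∃ D0 : BrData δ (Fin (n + 2)) (BrauerAlgebra (n + 1) (typeA (n + 1)) K δ),
    IsUniv δ _ _ D0 := by
  obtain ⟨D0, hr, hE⟩ := exists_brData δ n
  have hne : ∀ i : Fin (n + 1), i.castSucc ≠ i.succ := fun i => by simp [Fin.ext_iff]
  refine ⟨D0, ?_, ?_⟩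
  · intro S h1 h2 h3
    apply gen_top δ n S h1
    · intro i x hx
      rw [← hr]
      exact h2 _ _ hx
    · intro i x hx
      rw [← hE]
      exact h3 _ _ (hne i) _ hx
  · intro A _ _ D
    obtain ⟨ρ, ρr, ρE⟩ := exists_lift δ n D
    have h1 : ∀ g, ρ (D0.r g) = D.r g := by
      intro g
      let S : Submonoid (Perm (Fin (n + 2))) :=
        MonoidHom.eqLocusM ((ρ : _ →* A).comp D0.r) D.r
      have : g ∈ S := by
        apply perm_mem_of_fix (k := 0) S
        · intro i h _
          change ρ (D0.r _) = D.r _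
          have := hr ⟨i, by omega⟩
          have e : (swap (⟨i, by omega⟩ : Fin (n + 2)) ⟨i + 1, h⟩) =
            swap (⟨i, by omega⟩ : Fin (n + 1)).castSucc (⟨i, by omega⟩ : Fin (n + 1)).succ := rfl
          rw [e, this, ρr]
        · intro j hj
          omega
      exact this
    refine ⟨ρ, h1, ?_⟩
    intro a b hab
    obtain ⟨g, hg0, hg1⟩ : ∃ g : Perm (Fin (n + 2)), g (0 : Fin (n + 1)).castSucc = a ∧
        g (0 : Fin (n + 1)).succ = b := by
      obtain ⟨g, hg⟩ := exists_perm_list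
        (l := [(0 : Fin (n + 1)).castSucc, (0 : Fin (n + 1)).succ]) (l' := [a, b])
        (by simp) (by simpa using hab) rfl
      refine ⟨g, ?_, ?_⟩
      · exact (List.cons.inj hg).1
      · exact (List.cons.inj (List.cons.inj hg).2).1
    have key : ∀ {A : Type} [Ring A] [Algebra K A] (D : BrData δ (Fin (n + 2)) A),
        D.E a b = D.r g * D.E (0 : Fin (n + 1)).castSucc (0 : Fin (n + 1)).succ * D.r g⁻¹ := by
      intro A _ _ D
      rw [D.conj _ _ _ (hne 0), mul_assoc, ← map_mul, hg0, hg1]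
      simp
    rw [key D, key D0, map_mul, map_mul, h1, h1, hE, ρE]

lemma map_prodE {A A' : Type} [Ring A] [Algebra K A] [Ring A'] [Algebra K A'] {δ : K} {P : Type}
    [DecidableEq P]
    (D : BrData δ P A) (D' : BrData δ P A') (ρ : A →ₐ[K] A')
    (h : ∀ a b, a ≠ b → ρ (D.E a b) = D'.E a b) (l : List (P × P)) (hl : (flatP l).Nodup) :
    ρ (D.prodE l) = D'.prodE l := by
  induction l with
  | nil => simp [BrData.prodE]
  | cons p l ih =>
    simp only [flatP, List.nodup_cons, List.mem_cons, not_or] at hl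
    rw [BrData.prodE, BrData.prodE, map_mul, ih hl.2.2, h _ _ hl.1.1]

end Universal

/-! ### Part 12: Brauer data on the commutant -/

section CommData

open Equiv

set_option linter.unusedSectionVars false

namespace Base

variable {P M : Type} [DecidableEq P] [DecidableEq M] [Fintype P] [Fintype M] {B : Base P M}
variable {K : Type} [Field K] (δ : K)

instance : MulAction (Perm M) B.X where
  smul m x := mact m x
  one_smul := mact_one
  mul_smul := mact_mul

lemma smul_eq_mact (m : Perm M) (x : B.X) : m • x = mact m x := rfl

lemma freeAct : FreeAct (Perm M) B.X := mact_free

lemma opm_eq (m : Perm M) : (Finsupp.lmapDomain K K (fun x : B.X => m • x)) = opm B m := rfl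

lemma opg_mem (g : Perm P) : opg B g ∈ Comm (Perm M) B.X K :=
  mem_Comm.2 fun m => (opg_opm g m).symm

lemma opE_mem (a b : P) : opE B δ a b ∈ Comm (Perm M) B.X K :=
  mem_Comm.2 fun m => (opE_opm δ a b m).symm

variable (B) in
/-- the Brauer data on the commutant -/
noncomputable def commData : BrData δ P (Comm (Perm M) B.X K) where
  r :=
    { toFun g := ⟨opg B g, opg_mem g⟩
      map_one' := Subtype.ext (repData B δ).r.map_one
      map_mul' g h := Subtype.ext ((repData B δ).r.map_mul g h) }
  E a b := ⟨opE B δ a b, opE_mem δ a b⟩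
  conj g a b h := Subtype.ext ((repData B δ).conj g a b h)
  swl a b h := Subtype.ext ((repData B δ).swl a b h)
  swr a b h := Subtype.ext ((repData B δ).swr a b h)
  sq a b h := Subtype.ext ((repData B δ).sq a b h)
  chain a b c h1 h2 h3 := Subtype.ext ((repData B δ).chain a b c h1 h2 h3)
  comm a b c d h1 h2 h3 h4 h5 h6 := Subtype.ext ((repData B δ).comm a b c d h1 h2 h3 h4 h5 h6)

lemma commData_prodE (l : List (P × P)) (hl : (flatP l).Nodup) :
    ((commData B δ).prodE l).1 = (repData B δ).prodE l :=
  map_prodE (commData B δ) (repData B δ) (Comm (Perm M) B.X K).val (fun _ _ _ => rfl) l hl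

lemma commData_prodE_eq_zero (l : List (P × P)) (hl : (flatP l).Nodup)
    (h : Fintype.card P < Fintype.card M + 2 * l.length) : (commData B δ).prodE l = 0 := by
  apply Subtype.ext
  rw [commData_prodE δ l hl, prodE_eq_zero δ l hl h]
  rfl

/-- a permutation moving the reference diagram to the given one -/
noncomputable def gx (x : B.X) : Perm P := (exists_gact x).choose

lemma gact_gx (x : B.X) : gact (gx x) B.base = x := (exists_gact x).choose_spec.symm

lemma gact_gx_inv (x : B.X) : gact (gx x)⁻¹ x = B.base := by
  nth_rewrite 2 [← gact_gx x]
  rw [← gact_mul, inv_mul_cancel, gact_one]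

lemma prodE_apply (u : B.X) : ((commData B δ).prodE B.l).1 (Finsupp.single u 1) =
    ∑ m : Perm M, Finsupp.single (m • B.base) (ent B δ (m⁻¹ • u)) := by
  ext w
  rw [Finsupp.finsetSum_apply]
  have hE : ∀ v : B.X, ((commData B δ).prodE B.l).1 (Finsupp.single v 1) =
      (repData B δ).prodE B.l (Finsupp.single v 1) := fun v => by
    rw [commData_prodE δ _ B.nodup]
  by_cases h : ∃ m : Perm M, w = m • B.base
  · obtain ⟨m, rfl⟩ := h
    rw [Finset.sum_eq_single m]
    · rw [Finsupp.single_eq_same, ent, ← hE]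
      have := Comm_entry ((commData B δ).prodE B.l) m B.base (m⁻¹ • u)
      rw [smul_inv_smul] at this
      exact this
    · intro m' _ hm
      rw [Finsupp.single_eq_of_ne]
      intro h
      apply hm
      have := freeAct (m⁻¹ * m') B.base (by rw [mul_smul, ← h, inv_smul_smul])
      exact (inv_mul_eq_one.1 this).symm
    · simp
  · rw [Finset.sum_eq_zero]
    · by_contra h'
      rw [hE] at h'
      exact h (prodE_support δ h')
    · intro m _
      rw [Finsupp.single_eq_of_ne]
      exact fun h' => h ⟨m, h'⟩

variable (B) in
/-- the Gram matrix is invertible -/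
def GramInv : Prop := ∀ y' : B.X, ∃ c : B.X → K, ∀ z,
  ∑ y, c y * ent B δ (gact (gx y)⁻¹ z) = if z = y' then 1 else 0

lemma ub_mem_span (hG : GramInv B δ) (x y' : B.X) :
    ub (Perm M) K x y' ∈ Submodule.span K
      {t | ∃ g h, t = (commData B δ).r g * (commData B δ).prodE B.l * (commData B δ).r h} := by
  obtain ⟨c, hc⟩ := hG y'
  have key : ub (Perm M) K x y' = ∑ y, c y • ((commData B δ).r (gx x) *
      (commData B δ).prodE B.l * (commData B δ).r (gx y)⁻¹) := by
    apply Subtype.ext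
    rw [AddSubmonoidClass.coe_finsetSum]
    apply fend_ext
    intro z
    rw [LinearMap.sum_apply]
    change uu _ _ _ _ _ = _
    rw [uu_apply]
    have h1 : ∀ y, (c y • ((commData B δ).r (gx x) *
      (commData B δ).prodE B.l * (commData B δ).r (gx y)⁻¹)).1 (Finsupp.single z 1) =
        ∑ m : Perm M, Finsupp.single (m • x) (c y * ent B δ (gact (gx y)⁻¹ (m⁻¹ • z))) := by
      intro y
      change c y • (opg B (gx x) (((commData B δ).prodE B.l).1 (opg B (gx y)⁻¹ _))) = _
      rw [opg_single, prodE_apply, map_sum, Finset.smul_sum]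
      apply Finset.sum_congr rfl
      intro m _
      rw [opg_single, Finsupp.smul_single, smul_eq_mact, gact_mact, gact_gx, smul_eq_mul,
        smul_eq_mact, smul_eq_mact, smul_eq_mact, gact_mact]
    rw [Finset.sum_congr rfl fun y _ => h1 y, Finset.sum_comm]
    apply Finset.sum_congr rfl
    intro m _
    rw [← Finsupp.single_finsetSum, hc, Finsupp.single_apply]
    congr 1
    have : z = m • y' ↔ m⁻¹ • z = y' := by rw [inv_smul_eq_iff]
    simp only [this]
  rw [key]
  apply Submodule.sum_mem
  intro y _
  exact Submodule.smul_mem _ _ (Submodule.subset_span ⟨_, _, rfl⟩)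

lemma span_comm_eq_top (hG : GramInv B δ) : Submodule.span K
      {t | ∃ g h, t = (commData B δ).r g * (commData B δ).prodE B.l * (commData B δ).r h} = ⊤ := by
  rw [eq_top_iff]
  rintro t -
  rw [Comm_eq_sum freeAct t]
  apply Submodule.sum_mem
  intro x _
  apply Submodule.sum_mem
  intro y _
  exact Submodule.smul_mem _ _ (ub_mem_span δ hG _ _)

end Base

end CommData

/-! ### Part 13: the Gram matrix -/

section Gram

open Equiv

lemma gram_det_ne_zero {k X : Type} [Field k] [Fintype X] [DecidableEq X] (d : ℕ)
    (Q : Matrix X X (Polynomial k)) (h1 : ∀ y, Q y y = Polynomial.X ^ d)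
    (h2 : ∀ y z, y ≠ z → Q y z = 0 ∨ ∃ c < d, Q y z = Polynomial.X ^ c) : Q.det ≠ 0 := by
  classical
  intro h
  obtain ⟨v, hv, hvQ⟩ := Matrix.exists_vecMul_eq_zero_iff.2 h
  obtain ⟨y0, hy0⟩ := Function.ne_iff.1 hv
  obtain ⟨z, hz, hmax⟩ := Finset.exists_max_image (Finset.univ.filter fun y => v y ≠ 0)
    (fun y => (v y).natDegree) ⟨y0, by simpa using hy0⟩
  simp only [Finset.mem_filter, Finset.mem_univ, true_and] at hz hmax
  have h3 := congrArg (fun p => Polynomial.coeff p ((v z).natDegree + d)) (congrFun hvQ z)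
  simp only [Matrix.vecMul, dotProduct, Polynomial.finsetSum_coeff, Pi.zero_apply,
    Polynomial.coeff_zero] at h3
  rw [Finset.sum_eq_single z] at h3
  · rw [h1, Polynomial.coeff_mul_X_pow] at h3
    exact hz (Polynomial.leadingCoeff_eq_zero.1 h3)
  · intro y _ hy
    rcases h2 y z hy with h | ⟨c, hc, h⟩
    · rw [h]; simp
    · rw [h]
      by_cases hvy : v y = 0
      · rw [hvy]; simp
      apply Polynomial.coeff_eq_zero_of_natDegree_lt
      rw [Polynomial.natDegree_mul_X_pow c hvy]
      have := hmax y hvy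
      omega
  · simp

lemma gram_aux {k X : Type} [Field k] [Fintype X] [DecidableEq X] (d : ℕ)
    (Φ : Matrix X X (RatFunc k)) (h1 : ∀ y, Φ y y = RatFunc.X ^ d)
    (h2 : ∀ y z, y ≠ z → Φ y z = 0 ∨ ∃ c < d, Φ y z = RatFunc.X ^ c) (y' : X) :
    ∃ c : X → RatFunc k, ∀ z, ∑ y, c y * Φ y z = if z = y' then 1 else 0 := by
  classical
  have h3 : ∀ y z, ∃ p : Polynomial k, Φ y z = algebraMap (Polynomial k) (RatFunc k) p ∧
      (y = z → p = Polynomial.X ^ d) ∧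
      (y ≠ z → p = 0 ∨ ∃ c < d, p = Polynomial.X ^ c) := by
    intro y z
    by_cases h : y = z
    · subst h
      exact ⟨Polynomial.X ^ d, by rw [h1]; simp, fun _ => rfl, fun h => absurd rfl h⟩
    · rcases h2 y z h with h' | ⟨c, hc, h'⟩
      · exact ⟨0, by rw [h']; simp, fun h' => absurd h' h, fun _ => Or.inl rfl⟩
      · exact ⟨Polynomial.X ^ c, by rw [h']; simp, fun h' => absurd h' h,
          fun _ => Or.inr ⟨c, hc, rfl⟩⟩
  choose Q hQ hQ1 hQ2 using h3
  have h4 : (Matrix.of Q).det ≠ 0 := gram_det_ne_zero d _ (fun y => hQ1 y y rfl) hQ2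
  have h5 : Φ = (algebraMap (Polynomial k) (RatFunc k)).mapMatrix (Matrix.of Q) := by
    ext y z
    simp [hQ]
  have h6 : Φ.det ≠ 0 := by
    rw [h5, ← RingHom.map_det]
    intro h
    exact h4 (RatFunc.algebraMap_injective k (by rw [h, map_zero]))
  refine ⟨fun y => Φ⁻¹ y' y, fun z => ?_⟩
  have h7 := congrFun (congrFun (Matrix.nonsing_inv_mul Φ (isUnit_iff_ne_zero.2 h6)) y') z
  rw [Matrix.mul_apply, Matrix.one_apply] at h7
  rw [h7]
  simp only [eq_comm]

lemma Base.gramInv {P M : Type} [DecidableEq P] [DecidableEq M] [Fintype P] [Fintype M]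
    (B : Base P M) (k : Type) [Field k] : Base.GramInv B (RatFunc.X : RatFunc k) := by
  apply gram_aux B.l.length
  · intro y
    rw [Base.gact_gx_inv, Base.ent_base]
  · intro y z h
    apply Base.ent_of_ne
    intro h'
    apply h
    rw [← Base.gact_gx y, ← h', ← Base.gact_mul, mul_inv_cancel, Base.gact_one]

end Gram

/-! ### Part 14: normal forms -/

section NormalForm

set_option linter.unusedSectionVars false

open Equiv

namespace Base

variable {P M : Type} [DecidableEq P] [DecidableEq M] [Fintype P] [Fintype M] (B : Base P M)
variable {K : Type} [Field K] {δ : K} {A : Type} [Ring A] [Algebra K A] (D : BrData δ P A)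

lemma mem_of_arc {a b : P} (h : B.x0 (.inl a) = .inl b) : (a, b) ∈ B.l ∨ (b, a) ∈ B.l := by
  by_cases ha : a ∈ flatP B.l
  · obtain ⟨c, hc | hc⟩ := mem_flatP.1 ha
    · have := B.arc _ _ hc
      rw [h] at this
      cases this
      exact Or.inl hc
    · have := B.arc _ _ hc
      have h2 : B.x0 (.inl a) = .inl c := by rw [← this, B.inv]
      rw [h2] at h
      cases h
      exact Or.inr hc
  · obtain ⟨t, ht⟩ := B.compl a ha
    rw [ht] at h
    cases h

lemma ne_of_arc {a b : P} (h : B.x0 (.inl a) = .inl b) : a ≠ b := by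
  rintro rfl
  exact B.fpf _ h

lemma arc_mul {a b : P} (h : B.x0 (.inl a) = .inl b) :
    D.E a b * D.prodE B.l = δ • D.prodE B.l := by
  rcases B.mem_of_arc h with h' | h'
  · exact D.E_mul_prodE _ B.nodup _ _ h'
  · rw [D.symm _ _ (B.ne_of_arc h)]
    exact D.E_mul_prodE _ B.nodup _ _ h'

lemma mul_arc {a b : P} (h : B.x0 (.inl a) = .inl b) :
    D.prodE B.l * D.E a b = δ • D.prodE B.l := by
  rcases B.mem_of_arc h with h' | h'
  · exact D.prodE_mul_E _ B.nodup _ _ h'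
  · rw [D.symm _ _ (B.ne_of_arc h)]
    exact D.prodE_mul_E _ B.nodup _ _ h'

lemma stab_fix (hδ : δ ≠ 0) (s : Perm P) (hs : gact s B.base = B.base) :
    D.r s * D.prodE B.l = D.prodE B.l ∧ D.prodE B.l * D.r s = D.prodE B.l := by
  let S : Submonoid (Perm P) :=
    { carrier := {s | D.r s * D.prodE B.l = D.prodE B.l ∧ D.prodE B.l * D.r s = D.prodE B.l}
      one_mem' := by simp
      mul_mem' := by
        rintro s t ⟨h1, h2⟩ ⟨h3, h4⟩
        refine ⟨?_, ?_⟩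
        · rw [map_mul, mul_assoc, h3, h1]
        · rw [map_mul, ← mul_assoc, h2, h4] }
  refine stab_mem B.x0 B.inv B.fpf S ?_ ?_ s ?_
  · intro a b h
    exact ⟨D.swap_mul hδ (B.ne_of_arc h) (B.arc_mul D h),
      D.mul_swap hδ (B.ne_of_arc h) (B.mul_arc D h)⟩
  · intro a b c d h1 h2 hac had
    have hbc : b ≠ c := by
      rintro rfl
      rw [← h1, B.inv] at h2
      exact had (Sum.inl.inj h2)
    have hbd : b ≠ d := by
      rintro rfl
      rw [← h2] at h1
      exact hac (Sum.inl.inj (B.x0.injective h1))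
    exact ⟨D.pair_mul hδ (B.ne_of_arc h1) hac had hbc hbd (B.ne_of_arc h2) (B.arc_mul D h1)
      (B.arc_mul D h2), D.mul_pair hδ (B.ne_of_arc h1) hac had hbc hbd (B.ne_of_arc h2)
      (B.mul_arc D h1) (B.mul_arc D h2)⟩
  · have h : cg (s, 1) * B.x0 * (cg (s, 1))⁻¹ = B.x0 := congrArg X.val hs
    rw [← mul_inv_eq_iff_eq_mul, h]

lemma hat_comm (g : Perm P) (hg : ∀ a b, B.x0 (.inl a) = .inl b → g a = a) :
    D.r g * D.prodE B.l = D.prodE B.l * D.r g := by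
  rw [D.conj_prodE g _ B.nodup]
  congr 2
  conv_rhs => rw [← List.map_id B.l]
  apply List.map_congr_left
  rintro ⟨a, b⟩ h
  have h1 := B.arc _ _ h
  have h2 : B.x0 (.inl b) = .inl a := by rw [← h1, B.inv]
  simp [hg a b h1, hg b a h2]

lemma normal_form (hδ : δ ≠ 0) (g h : Perm P) : ∃ (x : B.X) (y : Orb (Perm M) B.X),
    D.r g * D.prodE B.l * D.r h = D.r (gx x) * D.prodE B.l * D.r (gx y.out)⁻¹ := by
  obtain ⟨m, y, hy⟩ := exists_rep (L := Perm M) (gact h⁻¹ B.base)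
  obtain ⟨t, ht, htf⟩ := B.exists_hat m
  have ht' : mact m B.base = gact t B.base := X.val_injective ht
  have h1 : gact ((gx y.out)⁻¹ * h⁻¹ * t) B.base = B.base := by
    rw [gact_mul, ← ht', gact_mul, gact_mact, ← smul_eq_mact, hy, gact_gx_inv]
  refine ⟨gact (g * t) B.base, y, ?_⟩
  have h2 : gact ((gx (gact (g * t) B.base))⁻¹ * (g * t)) B.base = B.base := by
    rw [gact_mul, gact_gx_inv]
  obtain ⟨-, e1⟩ := B.stab_fix D hδ _ h1
  obtain ⟨e2, -⟩ := B.stab_fix D hδ _ h2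
  have e3 := B.hat_comm D t htf
  have e4 : D.r h = D.r t * D.r ((gx y.out)⁻¹ * h⁻¹ * t)⁻¹ * D.r (gx y.out)⁻¹ := by
    rw [← map_mul, ← map_mul]
    congr 1
    group
  have e5 : D.prodE B.l * D.r ((gx y.out)⁻¹ * h⁻¹ * t)⁻¹ = D.prodE B.l := by
    nth_rewrite 1 [← e1]
    rw [mul_assoc, D.r_mul_inv, mul_one]
  calc D.r g * D.prodE B.l * D.r h
      = D.r g * (D.prodE B.l * D.r t) * D.r ((gx y.out)⁻¹ * h⁻¹ * t)⁻¹ * D.r (gx y.out)⁻¹ := by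
        rw [e4]; simp only [mul_assoc]
    _ = D.r (g * t) * (D.prodE B.l * D.r ((gx y.out)⁻¹ * h⁻¹ * t)⁻¹) * D.r (gx y.out)⁻¹ := by
        rw [← e3, map_mul]; simp only [mul_assoc]
    _ = D.r (g * t) * D.prodE B.l * D.r (gx y.out)⁻¹ := by rw [e5]
    _ = _ := by
        congr 1
        nth_rewrite 2 [← e2]
        rw [← mul_assoc, ← map_mul]
        congr 2
        group

end Base

end NormalForm

section Bound

open Equiv

variable {K : Type} [Field K] {δ : K} {A : Type} [Ring A] [Algebra K A] {N : ℕ}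

/-- the reference diagrams -/
def rb (N : ℕ) (i : Fin (N / 2 + 1)) : Base (Fin N) (Fin (N - 2 * (i : ℕ))) :=
  refBase N i (by omega)

lemma rb_length (i : Fin (N / 2 + 1)) : (rb N i).l.length = i := refBase_length _ _ _

/-- the list of pairs in the reference diagram -/
def lstP (N i : ℕ) : List (Fin N × Fin N) :=
  if h : i < N / 2 + 1 then (rb N ⟨i, h⟩).l else []

lemma lstP_eq (i : Fin (N / 2 + 1)) : lstP N i = (rb N i).l := by
  rw [lstP, dif_pos i.2]

/-- index set of normal forms -/
abbrev NF (N : ℕ) : Type :=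
  Σ i : Fin (N / 2 + 1), (rb N i).X × Orb (Perm (Fin (N - 2 * (i : ℕ)))) (rb N i).X

lemma nf_span (D : BrData δ (Fin N) A) (hδ : δ ≠ 0)
    (hgen : ∀ S : Submodule K A, 1 ∈ S → (∀ g, ∀ x ∈ S, D.r g * x ∈ S) →
      (∀ a b, a ≠ b → ∀ x ∈ S, D.E a b * x ∈ S) → S = ⊤) :
    Submodule.span K (Set.range fun w : NF N => D.r (Base.gx w.2.1) * D.prodE (rb N w.1).l *
      D.r (Base.gx w.2.2.out)⁻¹) = ⊤ := by
  rw [eq_top_iff, ← D.span_eq_top hδ (N := N / 2) (by rw [Fintype.card_fin]; omega) (lstP N) ?_ ?_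
    hgen]
  · apply Submodule.span_mono
    rintro _ ⟨i, hi, g, h, rfl⟩
    obtain ⟨x, y, hxy⟩ := (rb N ⟨i, by omega⟩).normal_form D hδ g h
    rw [lstP_eq ⟨i, by omega⟩, hxy]
    exact ⟨⟨_, x, y⟩, rfl⟩
  · intro i hi
    rw [lstP_eq ⟨i, by omega⟩]
    exact Base.nodup _
  · intro i hi
    rw [lstP_eq ⟨i, by omega⟩]
    exact rb_length _

lemma nf_finite (D : BrData δ (Fin N) A) (hδ : δ ≠ 0)
    (hgen : ∀ S : Submodule K A, 1 ∈ S → (∀ g, ∀ x ∈ S, D.r g * x ∈ S) →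
      (∀ a b, a ≠ b → ∀ x ∈ S, D.E a b * x ∈ S) → S = ⊤) : Module.Finite K A :=
  Module.finite_def.2 (Submodule.fg_def.2 ⟨_, Set.finite_range _, nf_span D hδ hgen⟩)

lemma nf_finrank (D : BrData δ (Fin N) A) (hδ : δ ≠ 0)
    (hgen : ∀ S : Submodule K A, 1 ∈ S → (∀ g, ∀ x ∈ S, D.r g * x ∈ S) →
      (∀ a b, a ≠ b → ∀ x ∈ S, D.E a b * x ∈ S) → S = ⊤) :
    Module.finrank K A ≤ Fintype.card (NF N) := by
  have := finrank_range_le_card (R := K) (fun w : NF N => D.r (Base.gx w.2.1) * D.prodE (rb N w.1).l *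
      D.r (Base.gx w.2.2.out)⁻¹)
  rw [Set.finrank, nf_span D hδ hgen, finrank_top] at this
  exact this

end Bound

/-! ### Part 15: the decomposition -/

section Decomp

open Equiv

variable {K : Type} [Field K] {δ : K} {A : Type} [Ring A] [Algebra K A] {N : ℕ}

/-- the blocks -/
abbrev Blk (K : Type) [Field K] (N : ℕ) (i : Fin (N / 2 + 1)) : Type :=
  Comm (Perm (Fin (N - 2 * (i : ℕ)))) (rb N i).X K

/-- the structure maps to the blocks are jointly surjective and injective -/
lemma exists_ringEquiv (D : BrData δ (Fin N) A) (hU : IsUniv δ A N D) (hδ : δ ≠ 0)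
    (hG : ∀ i, Base.GramInv (rb N i) δ) : Nonempty (A ≃+* ((i : Fin (N / 2 + 1)) → Blk K N i)) := by
  have h0 : ∀ i, ∃ ρ : A →ₐ[K] Blk K N i, (∀ g, ρ (D.r g) = (Base.commData (rb N i) δ).r g) ∧
      ∀ a b, a ≠ b → ρ (D.E a b) = (Base.commData (rb N i) δ).E a b :=
    fun i => hU.lift _ (Base.commData (rb N i) δ)
  choose ρ hr hE using h0
  have hP : ∀ i j, ρ i (D.prodE (rb N j).l) = (Base.commData (rb N i) δ).prodE (rb N j).l :=
    fun i j => map_prodE D _ (ρ i) (hE i) _ (rb N j).nodup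
  have hP0 : ∀ i j, i < j → ρ i (D.prodE (rb N j).l) = 0 := by
    intro i j h
    rw [hP]
    apply Base.commData_prodE_eq_zero _ _ (rb N j).nodup
    rw [rb_length, Fintype.card_fin, Fintype.card_fin]
    have : (i : ℕ) < j := h
    omega
  have key1 : ∀ (i : Fin (N / 2 + 1)) (s : Blk K N i), ∃ b : A, ρ i b = s ∧
      ∀ j, j < i → ρ j b = 0 := by
    intro i s
    have hs : s ∈ Submodule.span K {t | ∃ g h, t = (Base.commData (rb N i) δ).r g *
        (Base.commData (rb N i) δ).prodE (rb N i).l * (Base.commData (rb N i) δ).r h} := by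
      rw [Base.span_comm_eq_top δ (hG i)]
      trivial
    induction hs using Submodule.span_induction with
    | mem x hx =>
      obtain ⟨g, h, rfl⟩ := hx
      refine ⟨D.r g * D.prodE (rb N i).l * D.r h, ?_, ?_⟩
      · rw [map_mul, map_mul, hr, hr, hP]
      · intro j hj
        rw [map_mul, map_mul, hP0 j i hj, mul_zero, zero_mul]
    | zero => exact ⟨0, map_zero _, fun j _ => map_zero _⟩
    | add x y _ _ hx hy =>
      obtain ⟨b, hb, hb'⟩ := hx
      obtain ⟨c, hc, hc'⟩ := hy
      exact ⟨b + c, by rw [map_add, hb, hc], fun j hj => by rw [map_add, hb' j hj, hc' j hj, add_zero]⟩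
    | smul a x _ hx =>
      obtain ⟨b, hb, hb'⟩ := hx
      exact ⟨a • b, by rw [map_smul, hb], fun j hj => by rw [map_smul, hb' j hj, smul_zero]⟩
  let R : A →ₐ[K] ((i : Fin (N / 2 + 1)) → Blk K N i) := AlgHom.pi ρ
  have hR : ∀ b i, R b i = ρ i b := fun _ _ => rfl
  have key2 : ∀ d k : ℕ, k + d = N / 2 + 1 → ∀ t : (i : Fin (N / 2 + 1)) → Blk K N i,
      (∀ j : Fin (N / 2 + 1), (j : ℕ) < k → t j = 0) → ∃ b, R b = t := by
    intro d
    induction d with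
    | zero =>
      intro k hk t ht
      refine ⟨0, ?_⟩
      rw [map_zero]
      funext j
      exact (ht j (by omega)).symm
    | succ d ih =>
      intro k hk t ht
      obtain ⟨b, hb, hb'⟩ := key1 ⟨k, by omega⟩ (t ⟨k, by omega⟩)
      obtain ⟨c, hc⟩ := ih (k + 1) (by omega) (t - R b) (by
        intro j hj
        rw [Pi.sub_apply, hR]
        rcases Nat.lt_succ_iff_lt_or_eq.1 hj with h | h
        · rw [ht j h, hb' j h, sub_zero]
        · have : j = ⟨k, by omega⟩ := Fin.ext h
          rw [this, hb, sub_self])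
      exact ⟨c + b, by rw [map_add, hc, sub_add_cancel]⟩
  have hsurj : Function.Surjective R := fun t => key2 (N / 2 + 1) 0 (by omega) t (by intro j hj; omega)
  have hfin : Module.Finite K A := nf_finite D hδ hU.gen
  have h1 : Module.finrank K A ≤ Module.finrank K ((i : Fin (N / 2 + 1)) → Blk K N i) := by
    refine (nf_finrank D hδ hU.gen).trans ?_
    rw [Module.finrank_pi_fintype, Fintype.card_sigma]
    exact Finset.sum_le_sum fun i _ => Comm_finrank Base.freeAct
  have h2 : Module.finrank K A = Module.finrank K ((i : Fin (N / 2 + 1)) → Blk K N i) :=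
    le_antisymm h1 (LinearMap.finrank_le_finrank_of_surjective (f := R.toLinearMap) hsurj)
  have hinj : Function.Injective R :=
    (LinearMap.injective_iff_surjective_of_finrank_eq_finrank (f := R.toLinearMap) h2).2 hsurj
  exact ⟨RingEquiv.ofBijective R ⟨hinj, hsurj⟩⟩

end Decomp

/-- For any field `k` and `n ≥ 2`, the Brauer algebra
`Br(A_{n-1}, k(δ), δ)` over the rational function field `k(δ)` is Morita
equivalent to the direct sum of group algebras `⊕_{i=0}^{⌊n/2⌋} k(δ)[S_{n-2i}]`,
where `S_m` is the symmetric group on `m` letters. -/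
theorem brauerAlgebra_typeA_moritaEquivalent_groupAlgebras
    (k : Type) [Field k] (n : ℕ) (hn : 2 ≤ n) :
    MoritaEquivalent (BrauerAlgebra (n - 1) (typeA (n - 1)) (RatFunc k) RatFunc.X)
      ((i : Fin (n / 2 + 1)) →
        MonoidAlgebra (RatFunc k) (Equiv.Perm (Fin (n - 2 * (i : ℕ))))) := by
  obtain ⟨m, rfl⟩ : ∃ m, n = m + 2 := ⟨n - 2, by omega⟩
  change MoritaEquivalent (BrauerAlgebra (m + 1) (typeA (m + 1)) (RatFunc k) RatFunc.X) _
  obtain ⟨D, hU⟩ := exists_univ (RatFunc.X : RatFunc k) m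
  obtain ⟨e⟩ := exists_ringEquiv D hU RatFunc.X_ne_zero fun i => Base.gramInv _ k
  have C : FullCorner ((i : Fin ((m + 2) / 2 + 1)) → Blk (RatFunc k) (m + 2) i)
      ((i : Fin ((m + 2) / 2 + 1)) →
        MonoidAlgebra (RatFunc k) (Equiv.Perm (Fin (m + 2 - 2 * (i : ℕ))))) :=
    FullCorner.pi fun i => commCorner Base.freeAct (rb (m + 2) i).base
  exact ⟨(ModuleCat.restrictScalarsEquivalenceOfRingEquiv e).symm.trans C.equivalence⟩
end

section
/- Let n ≥ 4 with n ∉ {1,3,5}. Then the Brauer algebra Br(D_n, ℂ, 0) with parameter δ = 0 is not a semisimple ring. -/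
open FreeAlgebra

namespace BrauerDAux

variable {n : ℕ}

/-- Square arrays of complex numbers. -/
abbrev Arr (n : ℕ) := Fin n → Fin n → ℂ

/-- The module: three copies of arrays. -/
abbrev Mod (n : ℕ) := Arr n × Arr n × Arr n

/-- Sign attached to an index by the signed transposition `(i j)` with sign `e`. -/
def sg (i j : Fin n) (e : ℂ) (a : Fin n) : ℂ := if a = i ∨ a = j then e else 1

/-- Signed transposition acting on arrays. -/
def rA (i j : Fin n) (e : ℂ) : Arr n →ₗ[ℂ] Arr n where
  toFun N := fun a b => sg i j e a * sg i j e b * N (Equiv.swap i j a) (Equiv.swap i j b)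
  map_add' x y := by ext; simp [mul_add]
  map_smul' x y := by ext; simp; ring

/-- Signed transposition acting on the module. -/
def rM (i j : Fin n) (e : ℂ) : Mod n →ₗ[ℂ] Mod n :=
  (rA i j 1).prodMap ((rA i j e).prodMap (rA i j 1))

/-- Symmetric elementary array. -/
def u (i j : Fin n) : Arr n := fun a b =>
  if (a = i ∧ b = j) ∨ (a = j ∧ b = i) then 1 else 0

/-- Functional counting pairs meeting `{i,j}` in exactly one point. -/
def kap (i j : Fin n) : Arr n →ₗ[ℂ] ℂ where
  toFun N := ∑ k, (N i k + N j k) - N i j - N j i - N i i - N j j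
  map_add' x y := by simp [Finset.sum_add_distrib]; ring
  map_smul' x y := by simp [Finset.sum_add_distrib, ← Finset.mul_sum]; ring

/-- First functional. -/
def phi (i j : Fin n) : Mod n →ₗ[ℂ] ℂ := kap i j ∘ₗ LinearMap.fst ℂ _ _

/-- Second functional. -/
noncomputable def psi (i j : Fin n) (e : ℂ) : Mod n →ₗ[ℂ] ℂ where
  toFun m := kap i j m.2.2 + (m.1 i j + m.1 j i - e * (m.2.1 i j + m.2.1 j i)) / 4
  map_add' x y := by simp; ring
  map_smul' x y := by simp; ring

def cv (i j : Fin n) (e : ℂ) : Mod n := (u i j, e • u i j, 0)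
def dv (i j : Fin n) : Mod n := (0, 0, u i j)

/-- The operators `E`. -/
noncomputable def eM (i j : Fin n) (e : ℂ) : Mod n →ₗ[ℂ] Mod n :=
  (phi i j).smulRight (cv i j e) + (psi i j e).smulRight (dv i j)

lemma eM_apply (i j : Fin n) (e : ℂ) (m : Mod n) :
    eM i j e m = phi i j m • cv i j e + psi i j e m • dv i j := rfl

lemma u_symm (i j : Fin n) : u i j = u j i := by
  ext a b; simp [u, or_comm]

lemma kap_symm (i j : Fin n) : kap i j = kap j i := by
  apply LinearMap.ext; intro N; simp [kap, add_comm]; ring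

lemma sg_symm (i j : Fin n) (e : ℂ) : sg i j e = sg j i e := by
  ext a; simp [sg, or_comm]

lemma rA_symm (i j : Fin n) (e : ℂ) : rA i j e = rA j i e := by
  apply LinearMap.ext; intro N; ext a b
  simp [rA, sg_symm i j, Equiv.swap_comm i j]

lemma rM_symm (i j : Fin n) (e : ℂ) : rM i j e = rM j i e := by
  simp [rM, rA_symm i j]

lemma phi_symm (i j : Fin n) : phi i j = phi j i := by simp [phi, kap_symm i j]
lemma psi_symm (i j : Fin n) (e : ℂ) : psi i j e = psi j i e := by
  apply LinearMap.ext; intro N; simp [psi, kap_symm i j]; ring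
lemma cv_symm (i j : Fin n) (e : ℂ) : cv i j e = cv j i e := by simp [cv, u_symm i j]
lemma dv_symm (i j : Fin n) : dv i j = dv j i := by simp [dv, u_symm i j]
lemma eM_symm (i j : Fin n) (e : ℂ) : eM i j e = eM j i e := by
  simp [eM, phi_symm i j, psi_symm i j, cv_symm i j, dv_symm i j]

lemma sg_swap (i j : Fin n) (e : ℂ) (a : Fin n) :
    sg i j e (Equiv.swap i j a) = sg i j e a := by
  unfold sg
  rcases eq_or_ne a i with rfl | hi
  · simp
  rcases eq_or_ne a j with rfl | hj
  · simp
  rw [Equiv.swap_apply_of_ne_of_ne hi hj]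

lemma sg_one (i j a : Fin n) : sg i j 1 a = 1 := by simp [sg]

lemma sg_sq (i j : Fin n) (e : ℂ) (he : e * e = 1) (a : Fin n) :
    sg i j e a * sg i j e a = 1 := by
  unfold sg; split_ifs <;> simp [he]

lemma rA_one_apply (i j : Fin n) (N : Arr n) (a b : Fin n) :
    rA i j 1 N a b = N (Equiv.swap i j a) (Equiv.swap i j b) := by simp [rA, sg_one]

lemma rA_sq (i j : Fin n) (e : ℂ) (he : e * e = 1) (N : Arr n) :
    rA i j e (rA i j e N) = N := by
  ext a b
  simp only [rA, LinearMap.coe_mk, AddHom.coe_mk, sg_swap, Equiv.swap_apply_self]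
  linear_combination (N a b * sg i j e b * sg i j e b) * sg_sq i j e he a
    + N a b * sg_sq i j e he b

lemma rA_u (i j k l : Fin n) (e : ℂ) :
    rA i j e (u k l) = (sg i j e k * sg i j e l) •
      u (Equiv.swap i j k) (Equiv.swap i j l) := by
  ext a b
  have h : ∀ x y : Fin n, Equiv.swap i j x = y ↔ x = Equiv.swap i j y := by
    intro x y
    constructor
    · rintro rfl; simp
    · rintro rfl; simp
  simp only [rA, LinearMap.coe_mk, AddHom.coe_mk, u, h, Pi.smul_apply, smul_eq_mul]
  split_ifs with h1
  · rcases h1 with ⟨rfl, rfl⟩ | ⟨rfl, rfl⟩ <;> simp [sg_swap]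
    ring
  · simp

lemma kap_rA (i j k l : Fin n) (N : Arr n) :
    kap k l (rA i j 1 N) = kap (Equiv.swap i j k) (Equiv.swap i j l) N := by
  simp only [kap, LinearMap.coe_mk, AddHom.coe_mk, rA_one_apply]
  rw [Equiv.sum_comp (Equiv.swap i j)
    (fun x => N (Equiv.swap i j k) x + N (Equiv.swap i j l) x)]

lemma phi_rM (i j k l : Fin n) (e : ℂ) (m : Mod n) :
    phi k l (rM i j e m) = phi (Equiv.swap i j k) (Equiv.swap i j l) m := by
  simp [phi, rM, kap_rA]

lemma psi_rM (i j k l : Fin n) (e f : ℂ) (m : Mod n) :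
    psi k l f (rM i j e m) = psi (Equiv.swap i j k) (Equiv.swap i j l)
      (sg i j e k * sg i j e l * f) m := by
  simp [psi, rM, kap_rA, rA_one_apply]
  simp [rA]; ring

lemma rM_cv (i j k l : Fin n) (e f : ℂ) :
    rM i j e (cv k l f) = cv (Equiv.swap i j k) (Equiv.swap i j l)
      (sg i j e k * sg i j e l * f) := by
  simp [cv, rM, rA_u, sg_one, smul_smul]
  congr 1; ring

lemma rM_dv (i j k l : Fin n) (e : ℂ) :
    rM i j e (dv k l) = dv (Equiv.swap i j k) (Equiv.swap i j l) := by
  simp [dv, rM, rA_u, sg_one]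

lemma kap_u_self {i j : Fin n} (h : i ≠ j) : kap i j (u i j) = 0 := by
  simp [kap, u, h, h.symm, Finset.sum_add_distrib]

lemma kap_u_disj {i j k l : Fin n} (h1 : i ≠ k) (h2 : i ≠ l) (h3 : j ≠ k) (h4 : j ≠ l) :
    kap i j (u k l) = 0 := by
  simp [kap, u, h1, h2, h3, h4]

lemma kap_u_adj {i j k : Fin n} (h1 : i ≠ j) (h2 : i ≠ k) (h3 : j ≠ k) :
    kap i j (u j k) = 1 := by
  simp [kap, u, h1, h2, h3, Finset.sum_add_distrib]

lemma u_zero {i j k l : Fin n} (h : ¬ ((i = k ∧ j = l) ∨ (i = l ∧ j = k))) :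
    u k l i j = 0 := by simp only [u, h, if_false]

lemma phi_cv (i j k l : Fin n) (f : ℂ) : phi i j (cv k l f) = kap i j (u k l) := rfl
lemma phi_dv (i j k l : Fin n) : phi i j (dv k l) = 0 := by simp [phi, dv]
lemma psi_dv (i j k l : Fin n) (e : ℂ) : psi i j e (dv k l) = kap i j (u k l) := by
  simp [psi, dv]
lemma psi_cv (i j k l : Fin n) (e f : ℂ) :
    psi i j e (cv k l f) = (1 - e * f) * (u k l i j + u k l j i) / 4 := by
  simp [psi, cv]; ring

/-! Relations with one index pair. -/

lemma rel_rsq (i j : Fin n) (e : ℂ) (he : e * e = 1) : rM i j e * rM i j e = 1 := by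
  apply LinearMap.ext; rintro ⟨a, b, c⟩
  simp [rM, rA_sq i j e he, rA_sq i j 1 (one_mul 1)]

lemma sg_pair (i j : Fin n) (e : ℂ) (he : e * e = 1) (f : ℂ) :
    sg i j e i * sg i j e j * f = f := by simp [sg, he]

lemma rel_re (i j : Fin n) (e f : ℂ) (he : e * e = 1) : rM i j e * eM i j f = eM i j f := by
  apply LinearMap.ext; intro m
  simp [eM_apply, rM_cv, rM_dv, sg_pair i j e he, cv_symm j i, dv_symm j i]

lemma rel_er (i j : Fin n) (e f : ℂ) (he : e * e = 1) : eM i j f * rM i j e = eM i j f := by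
  apply LinearMap.ext; intro m
  simp [eM_apply, phi_rM, psi_rM, sg_pair i j e he, phi_symm j i, psi_symm j i]

lemma rel_ee_same {i j : Fin n} (h : i ≠ j) (e f : ℂ) (m : Mod n) :
    eM i j e (eM i j f m) = ((1 - e * f) / 2 * phi i j m) • dv i j := by
  simp [eM_apply, phi_cv, phi_dv, psi_cv, psi_dv, kap_u_self h, u]
  congr 1; ring

lemma rel_esq {i j : Fin n} (h : i ≠ j) (e : ℂ) (he : e * e = 1) :
    eM i j e * eM i j e = 0 := by
  apply LinearMap.ext; intro m
  simp [rel_ee_same h, he]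

lemma rel_ee_comm {i j : Fin n} (h : i ≠ j) (e f : ℂ) :
    eM i j e * eM i j f = eM i j f * eM i j e := by
  apply LinearMap.ext; intro m
  simp [rel_ee_same h, mul_comm e f]

lemma rel_rr_comm (i j : Fin n) (e f : ℂ) :
    rM i j e * rM i j f = rM i j f * rM i j e := by
  apply LinearMap.ext; rintro ⟨a, b, c⟩
  have : ∀ N : Arr n, rA i j e (rA i j f N) = rA i j f (rA i j e N) := by
    intro N; ext a b
    simp [rA, sg_swap]; ring
  simp [rM, this]

/-! Relations with disjoint index pairs. -/

section disj
variable {i j k l : Fin n} (h1 : i ≠ k) (h2 : i ≠ l) (h3 : j ≠ k) (h4 : j ≠ l)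

lemma sg_sw_disj {i j k l : Fin n} (h1 : i ≠ k) (h2 : i ≠ l) (h3 : j ≠ k) (h4 : j ≠ l)
    (e : ℂ) (a : Fin n) : sg i j e (Equiv.swap k l a) = sg i j e a := by
  unfold sg
  rcases eq_or_ne a k with rfl | hi
  · simp [h1.symm, h2.symm, h3.symm, h4.symm]
  rcases eq_or_ne a l with rfl | hj
  · simp [h1.symm, h2.symm, h3.symm, h4.symm]
  rw [Equiv.swap_apply_of_ne_of_ne hi hj]

lemma swap_disj {i j k l : Fin n} (h1 : i ≠ k) (h2 : i ≠ l) (h3 : j ≠ k) (h4 : j ≠ l)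
    (a : Fin n) : Equiv.swap i j (Equiv.swap k l a) = Equiv.swap k l (Equiv.swap i j a) := by
  simp only [Equiv.swap_apply_def]; split_ifs <;> simp_all

lemma rel_rr_disj {i j k l : Fin n} (h1 : i ≠ k) (h2 : i ≠ l) (h3 : j ≠ k) (h4 : j ≠ l)
    (e f : ℂ) : rM i j e * rM k l f = rM k l f * rM i j e := by
  have : ∀ (e f : ℂ) (N : Arr n), rA i j e (rA k l f N) = rA k l f (rA i j e N) := by
    intro e f N; ext a b
    simp only [rA, LinearMap.coe_mk, AddHom.coe_mk, sg_sw_disj h1 h2 h3 h4,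
      sg_sw_disj h1.symm h3.symm h2.symm h4.symm, swap_disj h1 h2 h3 h4]
    ring
  apply LinearMap.ext; rintro ⟨a, b, c⟩
  simp [rM, this]

lemma rel_er_disj {i j k l : Fin n} (h1 : i ≠ k) (h2 : i ≠ l) (h3 : j ≠ k) (h4 : j ≠ l)
    (e f : ℂ) : eM i j e * rM k l f = rM k l f * eM i j e := by
  apply LinearMap.ext; intro m
  simp [eM_apply, phi_rM, psi_rM, rM_cv, rM_dv, sg, Equiv.swap_apply_of_ne_of_ne, h1, h2, h3, h4]

lemma rel_ee_disj0 {i j k l : Fin n} (h1 : i ≠ k) (h2 : i ≠ l) (h3 : j ≠ k) (h4 : j ≠ l)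
    (e f : ℂ) : eM i j e * eM k l f = 0 := by
  apply LinearMap.ext; intro m
  simp [eM_apply, phi_cv, phi_dv, psi_cv, psi_dv, kap_u_disj, u, h1, h2, h3, h4]

end disj

/-! Relations with index pairs meeting in one point. -/

lemma rel_braid {i j k : Fin n} (h1 : i ≠ j) (h2 : i ≠ k) (h3 : j ≠ k) (e f : ℂ) 
    (he : e * e = 1) (hf : f * f = 1) :
    rM i j e * rM j k f * rM i j e = rM j k f * rM i j e * rM j k f := by
  have hs : ∀ a, Equiv.swap i j (Equiv.swap j k (Equiv.swap i j a)) =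
      Equiv.swap j k (Equiv.swap i j (Equiv.swap j k a)) := by
    intro a
    simp only [Equiv.swap_apply_def]; split_ifs <;> simp_all
  have hg : ∀ (e f : ℂ), e * e = 1 → f * f = 1 → ∀ a,
      sg i j e a * sg j k f (Equiv.swap i j a) * sg i j e (Equiv.swap j k (Equiv.swap i j a)) =
      sg j k f a * sg i j e (Equiv.swap j k a) *
        sg j k f (Equiv.swap i j (Equiv.swap j k a)) := by
    intro e f he hf a
    rcases eq_or_ne a i with rfl | hi
    · simp [sg, Equiv.swap_apply_of_ne_of_ne, h1, h2, h3, h1.symm, h2.symm, h3.symm]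
    rcases eq_or_ne a j with rfl | hj
    · simp [sg, Equiv.swap_apply_of_ne_of_ne, h1, h2, h3, h1.symm, h2.symm, h3.symm, he, hf]
    rcases eq_or_ne a k with rfl | hk
    · simp [sg, Equiv.swap_apply_of_ne_of_ne, h1, h2, h3, h1.symm, h2.symm, h3.symm]
    simp [sg, Equiv.swap_apply_of_ne_of_ne, hi, hj, hk]
  have : ∀ (e f : ℂ), e * e = 1 → f * f = 1 → ∀ (N : Arr n),
      rA i j e (rA j k f (rA i j e N)) = rA j k f (rA i j e (rA j k f N)) := by
    intro e f he hf N; ext a b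
    have ha := hg e f he hf a
    have hb := hg e f he hf b
    simp only [rA, LinearMap.coe_mk, AddHom.coe_mk, hs]
    generalize N _ _ = z
    calc _ = (sg i j e a * sg j k f (Equiv.swap i j a) *
                sg i j e (Equiv.swap j k (Equiv.swap i j a))) *
              (sg i j e b * sg j k f (Equiv.swap i j b) *
                sg i j e (Equiv.swap j k (Equiv.swap i j b))) * z := by ring
      _ = _ := by rw [ha, hb]; ring
  apply LinearMap.ext; rintro ⟨a, b, c⟩
  simp [rM, this e f he hf, this 1 1 (one_mul 1) (one_mul 1)]

/-- `R_j R_i E_j = E_i E_j`. -/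
lemma rel_rre {i j k : Fin n} (h1 : i ≠ j) (h2 : i ≠ k) (h3 : j ≠ k) (e f : ℂ)
    (hf : f * f = 1) :
    rM j k f * rM i j e * eM j k f = eM i j e * eM j k f := by
  apply LinearMap.ext; intro m
  have : f * (e * f) = e := by linear_combination e * hf
  simp [eM_apply, phi_cv, phi_dv, psi_cv, psi_dv, rM_cv, rM_dv, kap_u_adj h1 h2 h3, u, sg,
    Equiv.swap_apply_of_ne_of_ne, h1, h2, h3, h1.symm, h2.symm, h3.symm, this]

lemma rel_rer {i j k : Fin n} (h1 : i ≠ j) (h2 : i ≠ k) (h3 : j ≠ k) (e f : ℂ) :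
    rM i j e * eM j k f * rM i j e = rM j k f * eM i j e * rM j k f := by
  apply LinearMap.ext; intro m
  simp [eM_apply, phi_rM, psi_rM, rM_cv, rM_dv, sg,
    Equiv.swap_apply_of_ne_of_ne, h1, h2, h3, h1.symm, h2.symm, h3.symm, mul_comm f e]

/-! Assignment of nodes. -/

def np (k : Fin n) : Fin n := ⟨(k : ℕ) - 1, by omega⟩
def nq (hn : 4 ≤ n) (k : Fin n) : Fin n := ⟨max (k : ℕ) 1, by omega⟩
def ns (k : Fin n) : ℂ := if (k : ℕ) = 0 then -1 else 1

lemma ns_sq (k : Fin n) : ns k * ns k = 1 := by unfold ns; split_ifs <;> simp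

lemma np_ne_nq (hn : 4 ≤ n) (k : Fin n) : np k ≠ nq hn k := by
  simp only [np, nq, ne_eq, Fin.mk.injEq]; omega

lemma nonadj_cases (hn : 4 ≤ n) (i j : Fin n) (hne : i ≠ j) (h : ¬ (typeD n).Adj i j) :
    (np i = np j ∧ nq hn i = nq hn j) ∨
    (np i ≠ np j ∧ np i ≠ nq hn j ∧ nq hn i ≠ np j ∧ nq hn i ≠ nq hn j) := by
  simp only [typeD, SimpleGraph.fromRel_adj, ne_eq, Fin.ext_iff, np, nq] at *
  omega

lemma adj_cases (hn : 4 ≤ n) (i j : Fin n) (h : (typeD n).Adj i j) :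
    (nq hn i = np j ∧ np i ≠ nq hn j) ∨ (nq hn j = np i ∧ np j ≠ nq hn i) := by
  simp only [typeD, SimpleGraph.fromRel_adj, ne_eq, Fin.ext_iff, np, nq] at *
  omega

/-- Generators act on the module. -/
noncomputable def gen (hn : 4 ≤ n) : Fin n ⊕ Fin n → Module.End ℂ (Mod n) :=
  Sum.elim (fun k => rM (np k) (nq hn k) (ns k)) (fun k => eM (np k) (nq hn k) (ns k))

lemma gen_rel (hn : 4 ≤ n) ⦃x y : FreeAlgebra ℂ (Fin n ⊕ Fin n)⦄
    (h : BrauerRel n (typeD n) ℂ 0 x y) :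
    FreeAlgebra.lift ℂ (gen hn) x = FreeAlgebra.lift ℂ (gen hn) y := by
  cases h with
  | rsq i => simpa [gen] using rel_rsq _ _ _ (ns_sq i)
  | re i =>
    simp only [map_mul, FreeAlgebra.lift_ι_apply, gen, Sum.elim_inl, Sum.elim_inr]
    exact rel_re _ _ _ _ (ns_sq i)
  | er i =>
    simp only [map_mul, FreeAlgebra.lift_ι_apply, gen, Sum.elim_inl, Sum.elim_inr]
    exact rel_er _ _ _ _ (ns_sq i)
  | esq i => simpa [gen] using rel_esq (np_ne_nq hn i) _ (ns_sq i)
  | rr i j hne hadj =>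
    simp only [map_mul, FreeAlgebra.lift_ι_apply, gen, Sum.elim_inl]
    rcases nonadj_cases hn i j hne hadj with ⟨h1, h2⟩ | ⟨h1, h2, h3, h4⟩
    · rw [h1, h2]; exact rel_rr_comm _ _ _ _
    · exact rel_rr_disj h1 h2 h3 h4 _ _
  | erc i j hne hadj =>
    simp only [map_mul, FreeAlgebra.lift_ι_apply, gen, Sum.elim_inl, Sum.elim_inr]
    rcases nonadj_cases hn i j hne hadj with ⟨h1, h2⟩ | ⟨h1, h2, h3, h4⟩
    · rw [h1, h2, rel_er _ _ _ _ (ns_sq j), rel_re _ _ _ _ (ns_sq j)]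
    · exact rel_er_disj h1 h2 h3 h4 _ _
  | ee i j hne hadj =>
    simp only [map_mul, FreeAlgebra.lift_ι_apply, gen, Sum.elim_inr]
    rcases nonadj_cases hn i j hne hadj with ⟨h1, h2⟩ | ⟨h1, h2, h3, h4⟩
    · rw [h1, h2]; exact rel_ee_comm (np_ne_nq hn j) _ _
    · rw [rel_ee_disj0 h1 h2 h3 h4, rel_ee_disj0 h1.symm h3.symm h2.symm h4.symm]
  | braid i j hadj =>
    simp only [map_mul, FreeAlgebra.lift_ι_apply, gen, Sum.elim_inl]
    have hi := np_ne_nq hn i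
    have hj := np_ne_nq hn j
    rcases adj_cases hn i j hadj with ⟨h1, h2⟩ | ⟨h1, h2⟩
    · rw [h1] at hi ⊢
      exact rel_braid hi h2 hj _ _ (ns_sq i) (ns_sq j)
    · rw [h1] at hj ⊢
      exact (rel_braid hj h2 hi _ _ (ns_sq j) (ns_sq i)).symm
  | rre i j hadj =>
    simp only [map_mul, FreeAlgebra.lift_ι_apply, gen, Sum.elim_inl, Sum.elim_inr]
    have hi := np_ne_nq hn i
    have hj := np_ne_nq hn j
    rcases adj_cases hn i j hadj with ⟨h1, h2⟩ | ⟨h1, h2⟩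
    · rw [h1] at hi ⊢
      exact rel_rre hi h2 hj _ _ (ns_sq j)
    · rw [h1] at hj ⊢
      rw [rM_symm (np j) (np i), rM_symm (np i) (nq hn i), eM_symm (np j) (np i),
        eM_symm (np i) (nq hn i)]
      exact rel_rre hi.symm h2.symm hj.symm _ _ (ns_sq j)
  | rer i j hadj =>
    simp only [map_mul, FreeAlgebra.lift_ι_apply, gen, Sum.elim_inl, Sum.elim_inr]
    have hi := np_ne_nq hn i
    have hj := np_ne_nq hn j
    rcases adj_cases hn i j hadj with ⟨h1, h2⟩ | ⟨h1, h2⟩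
    · rw [h1] at hi ⊢
      exact rel_rer hi h2 hj _ _
    · rw [h1] at hj ⊢
      exact (rel_rer hj h2 hi _ _).symm

/-- The representation. -/
noncomputable def rep (hn : 4 ≤ n) :
    BrauerAlgebra n (typeD n) ℂ 0 →ₐ[ℂ] Module.End ℂ (Mod n) :=
  RingQuot.liftAlgHom ℂ ⟨FreeAlgebra.lift ℂ (gen hn), gen_rel hn⟩

lemma rep_mk (hn : 4 ≤ n) (x : FreeAlgebra ℂ (Fin n ⊕ Fin n)) :
    rep hn (RingQuot.mkAlgHom ℂ _ x) = FreeAlgebra.lift ℂ (gen hn) x := by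
  simp [rep]

lemma rep_stable (hn : 4 ≤ n) (a : BrauerAlgebra n (typeD n) ℂ 0) :
    ∀ m : Mod n, m.1 = 0 → m.2.1 = 0 → (rep hn a m).1 = 0 ∧ (rep hn a m).2.1 = 0 := by
  obtain ⟨x, rfl⟩ := RingQuot.mkAlgHom_surjective ℂ _ a
  rw [rep_mk]
  induction x using FreeAlgebra.induction with
  | grade0 r => intro m h1 h2; simp [h1, h2, Algebra.algebraMap_eq_smul_one]
  | grade1 g =>
    intro m h1 h2
    rcases g with k | k
    · simp [gen, rM, h1, h2]
    · simp [gen, eM_apply, phi, h1, dv]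
  | mul x y hx hy =>
    intro m h1 h2
    rw [map_mul]
    exact hx _ (hy m h1 h2).1 (hy m h1 h2).2
  | add x y hx hy =>
    intro m h1 h2
    simp [hx m h1 h2, hy m h1 h2]

theorem main (hn : 4 ≤ n) : ¬ IsSemisimpleRing (BrauerAlgebra n (typeD n) ℂ 0) := by
  intro hss
  letI : Module (BrauerAlgebra n (typeD n) ℂ 0) (Mod n) :=
    Module.compHom (Mod n) (rep hn).toRingHom
  have hsm : ∀ (a : BrauerAlgebra n (typeD n) ℂ 0) (m : Mod n), a • m = rep hn a m :=
    fun _ _ => rfl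
  let D : Submodule (BrauerAlgebra n (typeD n) ℂ 0) (Mod n) :=
    { carrier := {m | m.1 = 0 ∧ m.2.1 = 0}
      add_mem' := by
        rintro a b ⟨h1, h2⟩ ⟨h3, h4⟩
        simp [h1, h2, h3, h4]
      zero_mem' := by simp
      smul_mem' := by
        rintro a m ⟨h1, h2⟩
        exact rep_stable hn a m h1 h2 }
  obtain ⟨D', hD'⟩ := exists_isCompl D
  let z : Fin n := ⟨0, by omega⟩
  let o : Fin n := ⟨1, by omega⟩
  let t : Fin n := ⟨2, by omega⟩
  have hzo : z ≠ o := by simp [z, o]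
  have hzt : z ≠ t := by simp [z, t]
  have hot : o ≠ t := by simp [o, t]
  let x : BrauerAlgebra n (typeD n) ℂ 0 :=
    RingQuot.mkAlgHom ℂ _ (ι ℂ (.inr z) * ι ℂ (.inr o))
  have hx : ∀ m : Mod n, x • m = phi z o m • dv z o := by
    intro m
    rw [hsm, rep_mk]
    have e1 : np z = z := rfl
    have e2 : nq hn z = o := rfl
    have e3 : np o = z := rfl
    have e4 : nq hn o = o := rfl
    simp only [map_mul, FreeAlgebra.lift_ι_apply, gen, Sum.elim_inr, e1, e2, e3, e4,
      Module.End.mul_apply, rel_ee_same hzo]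
    congr 1
    simp [ns, z, o]
  have hxD : ∀ m : Mod n, x • m ∈ D := by
    intro m; rw [hx]; simp [D, dv]
  have hx0 : x • cv o t 1 = 0 := by
    obtain ⟨d, hd, d', hd', hsum⟩ := Submodule.mem_sup.1
      (show cv o t 1 ∈ D ⊔ D' by rw [hD'.sup_eq_top]; trivial)
    rw [← hsum, smul_add]
    have h1 : x • d = 0 := by
      rw [hx]; simp [phi, hd.1]
    have h2 : x • d' = 0 :=
      (Submodule.disjoint_def.1 hD'.disjoint) _ (hxD d') (D'.smul_mem _ hd')
    rw [h1, h2, add_zero]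
  rw [hx, phi_cv, kap_u_adj hzo hzt hot, one_smul] at hx0
  have := congrFun (congrFun (congrArg (fun m : Mod n => m.2.2) hx0) z) o
  simp [dv, u] at this

end BrauerDAux

/-- Let `n ≥ 4` with `n ∉ {1,3,5}`. Then the Brauer algebra
`Br(D_n, ℂ, 0)` with parameter `δ = 0` is not a semisimple ring. -/
theorem brauerAlgebra_typeD_complex_deltaZero_not_isSemisimpleRing
    (n : ℕ) (hn : 4 ≤ n) (hn' : n ∉ ({1, 3, 5} : Set ℕ)) :
    ¬ IsSemisimpleRing (BrauerAlgebra n (typeD n) ℂ 0) := by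
  exact BrauerDAux.main hn
end
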